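/- Let (M,ḡ) be a Riemannian manifold with boundary hypersurface Σ, and let X be a C³ vector field on a neighborhood of Σ such that (L_X ḡ)^⊤ = 0 and H'(L_X ḡ) = 0 on Σ, and X = 0 on a nonempty open subset of Σ. Then X ≡ 0 on all of Σ (assuming Σ is connected). -/

import Mathlib

noncomputable section

open scoped BigOperators
open MeasureTheory Filter

/-- Points of the coordinate chart `ℝⁿ`. -/
abbrev Pt (n : ℕ) := Fin n → ℝ

/-- Partial derivative of a scalar function in the `i`-th coordinate direction. -/
def pd {n : ℕ} (i : Fin n) (f : Pt n → ℝ) (x : Pt n) : ℝ :=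
  fderiv ℝ f x (Pi.single i 1)

/-- Inverse metric `g^{ij}` (pointwise matrix inverse). -/
def ginv {n : ℕ} (g : Pt n → Fin n → Fin n → ℝ) (x : Pt n) (i j : Fin n) : ℝ :=
  (Matrix.of (g x))⁻¹ i j

/-- Christoffel symbols `Γ^k_{ij}` of the metric `g`. -/
def chr {n : ℕ} (g : Pt n → Fin n → Fin n → ℝ) (x : Pt n) (k i j : Fin n) : ℝ :=
  (1/2) * ∑ l, ginv g x k l *
    (pd i (fun y => g y j l) x + pd j (fun y => g y i l) x - pd l (fun y => g y i j) x)

/-- Covariant derivative of a covector field: `X_{i;j}`. -/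
def cdCov {n : ℕ} (g : Pt n → Fin n → Fin n → ℝ) (X : Pt n → Fin n → ℝ)
    (x : Pt n) (i j : Fin n) : ℝ :=
  pd j (fun y => X y i) x - ∑ k, chr g x k i j * X x k

/-- Covariant derivative of a vector field: `X^i_{;j}`. -/
def cdVec {n : ℕ} (g : Pt n → Fin n → Fin n → ℝ) (X : Pt n → Fin n → ℝ)
    (x : Pt n) (i j : Fin n) : ℝ :=
  pd j (fun y => X y i) x + ∑ k, chr g x i k j * X x k

/-- Covariant derivative of a symmetric (0,2)-tensor: `h_{ij;k}`. -/
def cd2 {n : ℕ} (g : Pt n → Fin n → Fin n → ℝ) (h : Pt n → Fin n → Fin n → ℝ)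
    (x : Pt n) (i j k : Fin n) : ℝ :=
  pd k (fun y => h y i j) x - ∑ l, chr g x l i k * h x l j - ∑ l, chr g x l j k * h x i l

/-- Second covariant derivative of a covector field: `X_{i;jk}`. -/
def cdCov2 {n : ℕ} (g : Pt n → Fin n → Fin n → ℝ) (X : Pt n → Fin n → ℝ)
    (x : Pt n) (i j k : Fin n) : ℝ :=
  cd2 g (fun y a b => cdCov g X y a b) x i j k

/-- Riemann curvature tensor `R^l_{ijk}`. -/
def riem {n : ℕ} (g : Pt n → Fin n → Fin n → ℝ) (x : Pt n) (l i j k : Fin n) : ℝ :=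
  pd j (fun y => chr g y l i k) x - pd k (fun y => chr g y l i j) x
  + ∑ m, chr g x l m j * chr g x m i k - ∑ m, chr g x l m k * chr g x m i j

/-- Riemann curvature with all indices lowered. -/
def riemLow {n : ℕ} (g : Pt n → Fin n → Fin n → ℝ) (x : Pt n) (a b c d : Fin n) : ℝ :=
  ∑ l, g x a l * riem g x l b c d

/-- Ricci curvature `R_{ij}`. -/
def ric {n : ℕ} (g : Pt n → Fin n → Fin n → ℝ) (x : Pt n) (i j : Fin n) : ℝ :=
  ∑ l, riem g x l i l j

/-- Lower the index of a vector field using `g`. -/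
def lowerV {n : ℕ} (g : Pt n → Fin n → Fin n → ℝ) (X : Pt n → Fin n → ℝ)
    (x : Pt n) (i : Fin n) : ℝ :=
  ∑ j, g x i j * X x j

/-- Lie derivative of the metric `g` along the vector field `X`:
`(L_X g)_{ij} = X_{i;j} + X_{j;i}` (index lowered by `g`). -/
def lieg {n : ℕ} (g : Pt n → Fin n → Fin n → ℝ) (X : Pt n → Fin n → ℝ)
    (x : Pt n) (i j : Fin n) : ℝ :=
  cdCov g (lowerV g X) x i j + cdCov g (lowerV g X) x j i

/-- Hessian `f_{;ij}`. -/
def hess {n : ℕ} (g : Pt n → Fin n → Fin n → ℝ) (f : Pt n → ℝ)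
    (x : Pt n) (i j : Fin n) : ℝ :=
  cdCov g (fun y a => pd a f y) x i j

/-- Laplace–Beltrami operator on functions. -/
def lapf {n : ℕ} (g : Pt n → Fin n → Fin n → ℝ) (f : Pt n → ℝ) (x : Pt n) : ℝ :=
  ∑ i, ∑ j, ginv g x i j * hess g f x i j

/-- Trace of a (0,2)-tensor with respect to `g`. -/
def trT {n : ℕ} (g : Pt n → Fin n → Fin n → ℝ) (h : Pt n → Fin n → Fin n → ℝ)
    (x : Pt n) : ℝ :=
  ∑ i, ∑ j, ginv g x i j * h x i j

/-- Divergence of a (0,2)-tensor, as a covector. -/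
def divT {n : ℕ} (g : Pt n → Fin n → Fin n → ℝ) (h : Pt n → Fin n → Fin n → ℝ)
    (x : Pt n) (i : Fin n) : ℝ :=
  ∑ j, ∑ k, ginv g x j k * cd2 g h x i j k

/-- Bianchi operator `β_g h = -div_g h + (1/2) d (tr_g h)`. -/
def bianchi {n : ℕ} (g : Pt n → Fin n → Fin n → ℝ) (h : Pt n → Fin n → Fin n → ℝ)
    (x : Pt n) (i : Fin n) : ℝ :=
  -divT g h x i + (1/2) * pd i (fun y => trT g h y) x

/-- Gradient vector field `(∇f)^i`. -/
def gradV {n : ℕ} (g : Pt n → Fin n → Fin n → ℝ) (f : Pt n → ℝ)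
    (x : Pt n) (i : Fin n) : ℝ :=
  ∑ j, ginv g x i j * pd j f x

/-- The tensor is symmetric. -/
def symT {n : ℕ} (g : Pt n → Fin n → Fin n → ℝ) : Prop :=
  ∀ x i j, g x i j = g x j i

/-- `g` is pointwise positive definite. -/
def posdef {n : ℕ} (g : Pt n → Fin n → Fin n → ℝ) : Prop :=
  ∀ (x : Pt n) (v : Fin n → ℝ), v ≠ 0 → 0 < ∑ i, ∑ j, g x i j * v i * v j

/-- Smooth componentwise. -/
def smoothT {n : ℕ} (g : Pt n → Fin n → Fin n → ℝ) : Prop :=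
  ∀ i j, ContDiff ℝ (⊤ : ℕ∞) (fun x => g x i j)

/-- The lowered tensor `(T_h)_{ijk} = (1/2)(h_{ij;k} + h_{ik;j} - h_{jk;i})`. -/
def Tlow {n : ℕ} (g : Pt n → Fin n → Fin n → ℝ) (h : Pt n → Fin n → Fin n → ℝ)
    (x : Pt n) (i j k : Fin n) : ℝ :=
  (1/2) * (cd2 g h x i j k + cd2 g h x i k j - cd2 g h x j k i)
/-- Unit normal vector to the level set `{f = 0}` (normalized `g`-gradient of `f`). -/
def nuV {n : ℕ} (g : Pt n → Fin n → Fin n → ℝ) (f : Pt n → ℝ)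
    (x : Pt n) (i : Fin n) : ℝ :=
  gradV g f x i / Real.sqrt (∑ j, ∑ k, ginv g x j k * pd j f x * pd k f x)

/-- Ambient second fundamental form of the level set `{f = 0}`:
symmetrized covariant derivative of the lowered unit normal. -/
def sff {n : ℕ} (g : Pt n → Fin n → Fin n → ℝ) (f : Pt n → ℝ)
    (x : Pt n) (i j : Fin n) : ℝ :=
  (1/2) * (cdCov g (lowerV g (nuV g f)) x i j + cdCov g (lowerV g (nuV g f)) x j i)

/-- Mean curvature of the level set `{f = 0}` (divergence of the unit normal). -/
def hmean {n : ℕ} (g : Pt n → Fin n → Fin n → ℝ) (f : Pt n → ℝ) (x : Pt n) : ℝ :=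
  ∑ i, ∑ j, ginv g x i j * cdCov g (lowerV g (nuV g f)) x i j

/-- The perturbed metric `g + s h`. -/
def mpert {n : ℕ} (g h : Pt n → Fin n → Fin n → ℝ) (s : ℝ) :
    Pt n → Fin n → Fin n → ℝ :=
  fun y a b => g y a b + s * h y a b

/-- Linearized mean curvature `H'|_g(h)`. -/
def hmeanLin {n : ℕ} (g h : Pt n → Fin n → Fin n → ℝ) (f : Pt n → ℝ) (x : Pt n) : ℝ :=
  deriv (fun s : ℝ => hmean (mpert g h s) f x) 0

/-- Linearized second fundamental form `A'|_g(h)`. -/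
def sffLin {n : ℕ} (g h : Pt n → Fin n → Fin n → ℝ) (f : Pt n → ℝ)
    (x : Pt n) (i j : Fin n) : ℝ :=
  deriv (fun s : ℝ => sff (mpert g h s) f x i j) 0

/-- Linearized unit normal `ν'|_g(h)` (a vector field along the level set). -/
def nuLin {n : ℕ} (g h : Pt n → Fin n → Fin n → ℝ) (f : Pt n → ℝ)
    (x : Pt n) (i : Fin n) : ℝ :=
  deriv (fun s : ℝ => nuV (mpert g h s) f x i) 0

/-- Linearized Ricci curvature `Ric'|_g(h)`. -/
def ricLin {n : ℕ} (g h : Pt n → Fin n → Fin n → ℝ) (x : Pt n) (i j : Fin n) : ℝ :=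
  deriv (fun s : ℝ => ric (mpert g h s) x i j) 0

/-- A vector `v` is tangent to the level set `{f = 0}` at `x`. -/
def Tang {n : ℕ} (f : Pt n → ℝ) (x : Pt n) (v : Fin n → ℝ) : Prop :=
  fderiv ℝ f x v = 0

/-!
Split a vector field `X` along `Σ = {f = 0}` into its normal part `X f = |∇f| η` and the covector
`Φ^* X♭`, where `Φ` parametrises `Σ` as a graph over a coordinate hyperplane. The condition
`(L_X g)^⊤ = 0` is a Killing equation for `Φ^* X♭` up to terms of order zero, so, as for Killing
fields, all second derivatives of `Φ^* X♭` are lower order terms. By naturality of the mean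
curvature, `H'(L_X g) = 0` becomes a divergence form equation for `X f` along `Σ` with source `X H`.
Together these are an elliptic system on `Σ` which is diagonal in the principal part.

Unique continuation for such systems follows from a Carleman estimate: the weight is a convexified
quadratic function whose zero level touches a sphere from inside, so that vanishing inside the
sphere propagates across it. Hence the set of points of `Σ` near which `X` vanishes is closed as
well as open.
-/

/-! ### Partial derivatives -/

section PartialDerivative

variable {n : ℕ} {i j : Fin n} {u v : Pt n → ℝ} {x : Pt n}

theorem pd_add (hu : DifferentiableAt ℝ u x) (hv : DifferentiableAt ℝ v x) :
    pd i (fun y => u y + v y) x = pd i u x + pd i v x := by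
  rw [pd, fderiv_fun_add hu hv]; rfl

theorem pd_sub (hu : DifferentiableAt ℝ u x) (hv : DifferentiableAt ℝ v x) :
    pd i (fun y => u y - v y) x = pd i u x - pd i v x := by
  rw [pd, fderiv_fun_sub hu hv]; rfl

theorem pd_mul (hu : DifferentiableAt ℝ u x) (hv : DifferentiableAt ℝ v x) :
    pd i (fun y => u y * v y) x = pd i u x * v x + u x * pd i v x := by
  simp only [pd, fderiv_fun_mul hu hv, add_apply, smul_apply, smul_eq_mul]
  ring

theorem pd_const (c : ℝ) : pd i (fun _ => c) x = 0 := by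
  simp [pd]

theorem pd_const_mul (c : ℝ) (hu : DifferentiableAt ℝ u x) :
    pd i (fun y => c * u y) x = c * pd i u x := by
  rw [pd_mul (by fun_prop) hu, pd_const]; ring

theorem pd_sum {ι : Type*} {s : Finset ι} {u : ι → Pt n → ℝ}
    (hu : ∀ j ∈ s, DifferentiableAt ℝ (u j) x) :
    pd i (fun y => ∑ j ∈ s, u j y) x = ∑ j ∈ s, pd i (u j) x := by
  simp only [pd, fderiv_fun_sum hu, sum_apply]

theorem pd_congr (h : u =ᶠ[nhds x] v) : pd i u x = pd i v x := by
  rw [pd, h.fderiv_eq, pd]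

theorem pd_coord (a i : Fin n) (x : Pt n) :
    pd a (fun y => y i) x = if i = a then 1 else 0 := by
  simp [pd, fderiv_apply, Pi.single_apply]

theorem pd_exp (hu : DifferentiableAt ℝ u x) :
    pd i (fun y => Real.exp (u y)) x = Real.exp (u x) * pd i u x := by
  simp only [pd, fderiv_exp hu, smul_apply, smul_eq_mul]

theorem contDiffAt_pd {m k : WithTop ℕ∞} (hu : ContDiffAt ℝ k u x) (h : m + 1 ≤ k) :
    ContDiffAt ℝ m (pd i u) x :=
  (hu.fderiv_right h).clm_apply contDiffAt_const

theorem contDiff_pd {m k : WithTop ℕ∞} (hu : ContDiff ℝ k u) (h : m + 1 ≤ k) :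
    ContDiff ℝ m (pd i u) :=
  contDiff_iff_contDiffAt.2 fun _ => contDiffAt_pd hu.contDiffAt h

theorem contDiffAt_infty_pd (hu : ContDiffAt ℝ (⊤ : ℕ∞) u x) :
    ContDiffAt ℝ (⊤ : ℕ∞) (pd i u) x :=
  contDiffAt_pd hu (by norm_cast)

theorem contDiff_infty_pd (hu : ContDiff ℝ (⊤ : ℕ∞) u) : ContDiff ℝ (⊤ : ℕ∞) (pd i u) :=
  contDiff_pd hu (by norm_cast)

theorem pd_comm (hu : ContDiffAt ℝ 2 u x) : pd i (pd j u) x = pd j (pd i u) x := by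
  have hd : DifferentiableAt ℝ (fderiv ℝ u) x :=
    (hu.fderiv_right (m := 1) (by norm_num)).differentiableAt (by norm_num)
  have second_fderiv (a b : Fin n) :
      pd a (pd b u) x = fderiv ℝ (fderiv ℝ u) x (Pi.single a 1) (Pi.single b 1) := by
    unfold pd
    rw [fderiv_clm_apply hd (by fun_prop)]
    simp
  rw [second_fderiv, second_fderiv]
  exact hu.isSymmSndFDerivAt (by simp) _ _

theorem fderiv_apply_eq_sum_pd (u : Pt n → ℝ) (x v : Pt n) :
    fderiv ℝ u x v = ∑ i, v i * pd i u x := by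
  rw [← ContinuousLinearMap.coe_coe, LinearMap.pi_apply_eq_sum_univ]
  refine Finset.sum_congr rfl fun i _ => ?_
  rw [pd, smul_eq_mul, ContinuousLinearMap.coe_coe]
  congr 3
  ext k
  simp only [Pi.single_apply, eq_comm]

theorem pd_comp {m : ℕ} {V : Pt m → ℝ} {Φ : Pt n → Pt m}
    (hV : DifferentiableAt ℝ V (Φ x)) (hΦ : DifferentiableAt ℝ Φ x) :
    pd i (fun z => V (Φ z)) x = ∑ j, pd j V (Φ x) * pd i (fun z => Φ z j) x := by
  have hcoord (j : Fin m) : pd i (fun z => Φ z j) x = fderiv ℝ Φ x (Pi.single i 1) j := by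
    rw [pd, (hasFDerivAt_pi'.1 hΦ.hasFDerivAt j).fderiv]; rfl
  have hchain : fderiv ℝ (fun z => V (Φ z)) x = (fderiv ℝ V (Φ x)).comp (fderiv ℝ Φ x) :=
    fderiv_comp x hV hΦ
  rw [pd, hchain, ContinuousLinearMap.comp_apply, fderiv_apply_eq_sum_pd]
  exact Finset.sum_congr rfl fun j _ => by rw [hcoord, mul_comm]

theorem hasCompactSupport_pd (hu : HasCompactSupport u) : HasCompactSupport (pd i u) :=
  hu.fderiv_apply (𝕜 := ℝ) _

theorem integral_pd_eq_zero (hu : ContDiff ℝ 1 u) (hc : HasCompactSupport u) :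
    ∫ x, pd i u x = 0 := by
  have hpd' : Integrable fun x => fderiv ℝ u x (Pi.single i 1) :=
    (contDiff_pd (m := 0) hu (by norm_num)).continuous.integrable_of_hasCompactSupport
      (hasCompactSupport_pd hc)
  have hu' : Integrable u := hu.continuous.integrable_of_hasCompactSupport hc
  simpa only [pd, one_mul, fderiv_fun_const, Pi.zero_apply, zero_apply, zero_mul,
    integral_zero, neg_zero] using integral_mul_fderiv_eq_neg_fderiv_mul_of_integrable
    (μ := (volume : Measure (Pt n))) (f := fun _ : Pt n => (1 : ℝ)) (g := u)
    (v := Pi.single i 1) (by simp)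
    (by simpa only [one_mul] using hpd') (by simpa only [one_mul] using hu')
    (fun x _ => by fun_prop) (fun x _ => hu.differentiable (by norm_num) x)

theorem differentiable_pd (hu : ContDiff ℝ 2 u) : Differentiable ℝ (pd i u) :=
  (contDiff_pd (m := 1) hu (by norm_num)).differentiable one_ne_zero

end PartialDerivative

/-! ### The Carleman multiplier identity -/

section DivergenceForm

/-- The vector field `γ∇u` for a matrix field `γ`; for `γ = g⁻¹` it is the gradient of `u`. -/
def matGrad {n : ℕ} (γ : Fin n → Fin n → Pt n → ℝ) (u : Pt n → ℝ) (c : Fin n) (x : Pt n) : ℝ :=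
  ∑ d, γ c d x * pd d u x

/-- The pairing `⟨γ∇u, ∇v⟩`, i.e. the derivative of `v` along `γ∇u`. -/
def gradInner {n : ℕ} (γ : Fin n → Fin n → Pt n → ℝ) (u v : Pt n → ℝ) (x : Pt n) : ℝ :=
  ∑ c, matGrad γ u c x * pd c v x

/-- The divergence form operator `div (γ∇u)`. -/
def divGrad {n : ℕ} (γ : Fin n → Fin n → Pt n → ℝ) (u : Pt n → ℝ) (x : Pt n) : ℝ :=
  ∑ c, pd c (matGrad γ u c) x

variable {n : ℕ} {γ : Fin n → Fin n → Pt n → ℝ} {u v w φ : Pt n → ℝ} {x : Pt n}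

theorem contDiff_matGrad {k m : WithTop ℕ∞} (hγ : ∀ a b, ContDiff ℝ m (γ a b))
    (hu : ContDiff ℝ k u) (h : m + 1 ≤ k) (c : Fin n) : ContDiff ℝ m (matGrad γ u c) :=
  ContDiff.sum fun d _ => (hγ c d).mul (contDiff_pd hu h)

theorem contDiff_gradInner {k m : WithTop ℕ∞} (hγ : ∀ a b, ContDiff ℝ m (γ a b))
    (hu : ContDiff ℝ k u) (hv : ContDiff ℝ k v) (h : m + 1 ≤ k) :
    ContDiff ℝ m (gradInner γ u v) :=
  ContDiff.sum fun c _ => (contDiff_matGrad hγ hu h c).mul (contDiff_pd hv h)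

theorem contDiff_divGrad {m k l : WithTop ℕ∞} (hγ : ∀ a b, ContDiff ℝ k (γ a b))
    (hu : ContDiff ℝ l u) (hk : m + 1 ≤ k) (hl : k + 1 ≤ l) : ContDiff ℝ m (divGrad γ u) :=
  ContDiff.sum fun c _ => contDiff_pd (contDiff_matGrad hγ hu hl c) hk

theorem gradInner_comm (hs : ∀ a b x, γ a b x = γ b a x) (u v : Pt n → ℝ) (x : Pt n) :
    gradInner γ u v x = gradInner γ v u x := by
  simp only [gradInner, matGrad, Finset.sum_mul]
  rw [Finset.sum_comm]
  refine Finset.sum_congr rfl fun a _ => Finset.sum_congr rfl fun b _ => ?_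
  rw [hs b a x]; ring

theorem gradInner_add_right (hv : DifferentiableAt ℝ v x) (hw : DifferentiableAt ℝ w x) :
    gradInner γ u (fun y => v y + w y) x = gradInner γ u v x + gradInner γ u w x := by
  simp only [gradInner, pd_add hv hw, mul_add, Finset.sum_add_distrib]

theorem gradInner_sub_right (hv : DifferentiableAt ℝ v x) (hw : DifferentiableAt ℝ w x) :
    gradInner γ u (fun y => v y - w y) x = gradInner γ u v x - gradInner γ u w x := by
  simp only [gradInner, pd_sub hv hw, mul_sub, Finset.sum_sub_distrib]

theorem gradInner_mul_right (hv : DifferentiableAt ℝ v x) (hw : DifferentiableAt ℝ w x) :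
    gradInner γ u (fun y => v y * w y) x
      = gradInner γ u v x * w x + v x * gradInner γ u w x := by
  simp only [gradInner, pd_mul hv hw, Finset.sum_mul, Finset.mul_sum, ← Finset.sum_add_distrib]
  exact Finset.sum_congr rfl fun c _ => by ring

theorem gradInner_const_mul_right (c : ℝ) (hv : DifferentiableAt ℝ v x) :
    gradInner γ u (fun y => c * v y) x = c * gradInner γ u v x := by
  simp only [gradInner, pd_const_mul c hv, Finset.mul_sum, mul_left_comm]

theorem matGrad_exp (c : Fin n) (hu : DifferentiableAt ℝ u x) :
    matGrad γ (fun y => Real.exp (u y)) c x = Real.exp (u x) * matGrad γ u c x := by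
  simp only [matGrad, pd_exp hu, Finset.mul_sum, mul_left_comm]

theorem matGrad_const_mul (c : Fin n) (t : ℝ) (hu : DifferentiableAt ℝ u x) :
    matGrad γ (fun y => t * u y) c x = t * matGrad γ u c x := by
  simp only [matGrad, pd_const_mul t hu, Finset.mul_sum, mul_left_comm]

theorem matGrad_mul (c : Fin n) (hu : DifferentiableAt ℝ u x) (hv : DifferentiableAt ℝ v x) :
    matGrad γ (fun y => u y * v y) c x = u x * matGrad γ v c x + v x * matGrad γ u c x := by
  simp only [matGrad, pd_mul hu hv, Finset.mul_sum, ← Finset.sum_add_distrib]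
  exact Finset.sum_congr rfl fun d _ => by ring

theorem sum_pd_mul_matGrad (hu : DifferentiableAt ℝ u x)
    (hv : ∀ c, DifferentiableAt ℝ (matGrad γ v c) x) :
    ∑ c, pd c (fun y => u y * matGrad γ v c y) x = gradInner γ v u x + u x * divGrad γ v x := by
  simp only [pd_mul hu (hv _), Finset.sum_add_distrib, ← Finset.mul_sum, gradInner, divGrad]
  simp only [mul_comm]

theorem divGrad_mul (hs : ∀ a b x, γ a b x = γ b a x) (hγ : ∀ a b, ContDiff ℝ 1 (γ a b))
    (hu : ContDiff ℝ 2 u) (hv : ContDiff ℝ 2 v) (x : Pt n) :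
    divGrad γ (fun y => u y * v y) x
      = u x * divGrad γ v x + 2 * gradInner γ u v x + v x * divGrad γ u x := by
  have du : Differentiable ℝ u := hu.differentiable two_ne_zero
  have dv : Differentiable ℝ v := hv.differentiable two_ne_zero
  have dGu (c : Fin n) : Differentiable ℝ (matGrad γ u c) :=
    (contDiff_matGrad hγ hu (by norm_num) c).differentiable one_ne_zero
  have dGv (c : Fin n) : Differentiable ℝ (matGrad γ v c) :=
    (contDiff_matGrad hγ hv (by norm_num) c).differentiable one_ne_zero
  have hG (c : Fin n) : matGrad γ (fun y => u y * v y) c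
      = fun y => u y * matGrad γ v c y + v y * matGrad γ u c y :=
    funext fun y => matGrad_mul c (du y) (dv y)
  rw [divGrad]
  simp only [hG, pd_add ((du x).fun_mul (dGv _ x)) ((dv x).fun_mul (dGu _ x)),
    Finset.sum_add_distrib]
  rw [sum_pd_mul_matGrad (du x) fun c => dGv c x, sum_pd_mul_matGrad (dv x) fun c => dGu c x,
    gradInner_comm hs v u]
  ring

theorem divGrad_const_mul (hγ : ∀ a b, ContDiff ℝ 1 (γ a b)) (t : ℝ) (hu : ContDiff ℝ 2 u)
    (x : Pt n) : divGrad γ (fun y => t * u y) x = t * divGrad γ u x := by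
  have hG (c : Fin n) : matGrad γ (fun y => t * u y) c = fun y => t * matGrad γ u c y :=
    funext fun y => matGrad_const_mul c t (hu.differentiable two_ne_zero y)
  simp only [divGrad, hG, Finset.mul_sum]
  exact Finset.sum_congr rfl fun c _ => pd_const_mul t
    ((contDiff_matGrad hγ hu (by norm_num) c).differentiable one_ne_zero x)

theorem divGrad_exp (hγ : ∀ a b, ContDiff ℝ 1 (γ a b)) (hu : ContDiff ℝ 2 u) (x : Pt n) :
    divGrad γ (fun y => Real.exp (u y)) x
      = Real.exp (u x) * (divGrad γ u x + gradInner γ u u x) := by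
  have du : Differentiable ℝ u := hu.differentiable two_ne_zero
  have hG (c : Fin n) :
      matGrad γ (fun y => Real.exp (u y)) c = fun y => Real.exp (u y) * matGrad γ u c y :=
    funext fun y => matGrad_exp c (du y)
  simp only [divGrad, hG]
  rw [sum_pd_mul_matGrad (du x).exp fun c =>
    (contDiff_matGrad hγ hu (by norm_num) c).differentiable one_ne_zero x]
  simp only [gradInner, pd_exp (du x), divGrad, mul_left_comm _ (Real.exp _), ← Finset.mul_sum]
  ring

theorem divGrad_exp_mul (hs : ∀ a b x, γ a b x = γ b a x) (hγ : ∀ a b, ContDiff ℝ 1 (γ a b))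
    (hφ : ContDiff ℝ 2 φ) (hw : ContDiff ℝ 2 w) (τ : ℝ) (x : Pt n) :
    divGrad γ (fun y => Real.exp (-τ * φ y) * w y) x = Real.exp (-τ * φ x) *
      (divGrad γ w x - 2 * τ * gradInner γ φ w x - τ * divGrad γ φ x * w x
        + τ ^ 2 * gradInner γ φ φ x * w x) := by
  have dφ : Differentiable ℝ φ := hφ.differentiable two_ne_zero
  have hψ : ContDiff ℝ 2 (fun y => -τ * φ y) := contDiff_const.mul hφ
  have hinner (v : Pt n → ℝ) :
      gradInner γ (fun y => -τ * φ y) v x = -τ * gradInner γ φ v x := by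
    simp only [gradInner, matGrad_const_mul _ _ (dφ x), Finset.mul_sum, mul_assoc]
  have hinner_exp : gradInner γ (fun y => Real.exp (-τ * φ y)) w x
      = Real.exp (-τ * φ x) * (-τ * gradInner γ φ w x) := by
    rw [← hinner]
    simp only [gradInner, matGrad_exp (u := fun y => -τ * φ y) _ ((dφ x).const_mul _),
      Finset.mul_sum, mul_assoc]
  rw [divGrad_mul hs hγ hψ.exp hw, divGrad_exp hγ hψ, divGrad_const_mul hγ _ hφ, hinner_exp,
    hinner, gradInner_const_mul_right _ (dφ x)]
  ring

/-- Coefficients of the quadratic form `Hess φ (γ∇w, γ∇w) + σ ⟨γ∇w, ∇w⟩` in `∇w`; its positivity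
is the pseudoconvexity condition on the weight `φ`. -/
def carlemanForm (γ : Fin n → Fin n → Pt n → ℝ) (φ : Pt n → ℝ) (σ : ℝ) (b c : Fin n) (x : Pt n) :
    ℝ :=
  (∑ a, γ a b x * pd a (matGrad γ φ c) x)
    - 1 / 2 * (∑ a, matGrad γ φ a x * pd a (γ b c) x) + σ * γ b c x

/-- The multiplier `⟨γ∇φ, ∇w⟩ + (½ div (γ∇φ) + σ) w` of the Carleman argument. -/
def carlemanMultiplier (γ : Fin n → Fin n → Pt n → ℝ) (φ : Pt n → ℝ) (σ : ℝ) (w : Pt n → ℝ)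
    (x : Pt n) : ℝ :=
  gradInner γ φ w x + (1 / 2 * divGrad γ φ x + σ) * w x

/-- The vector field whose divergence is the exact part of the multiplier identity. -/
def carlemanFlux (γ : Fin n → Fin n → Pt n → ℝ) (φ : Pt n → ℝ) (σ τ : ℝ) (w : Pt n → ℝ)
    (a : Fin n) (x : Pt n) : ℝ :=
  1 / 2 * (gradInner γ w w x - τ ^ 2 * (gradInner γ φ φ x * (w x * w x))) * matGrad γ φ a x
    - carlemanMultiplier γ φ σ w x * matGrad γ w a x

theorem sum_carlemanForm (γ : Fin n → Fin n → Pt n → ℝ) (φ : Pt n → ℝ) (σ : ℝ) (w : Pt n → ℝ)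
    (x : Pt n) :
    ∑ b, ∑ c, carlemanForm γ φ σ b c x * pd b w x * pd c w x =
      (∑ c, (∑ a, (∑ b, γ a b x * pd b w x) * pd a (matGrad γ φ c) x) * pd c w x)
      - 1 / 2 * (∑ a, matGrad γ φ a x * ∑ b, ∑ c, pd a (γ b c) x * pd b w x * pd c w x)
      + σ * gradInner γ w w x := by
  have hess_part : ∑ b, ∑ c, (∑ a, γ a b x * pd a (matGrad γ φ c) x) * pd b w x * pd c w x
      = ∑ c, (∑ a, (∑ b, γ a b x * pd b w x) * pd a (matGrad γ φ c) x) * pd c w x := by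
    rw [Finset.sum_comm]
    refine Finset.sum_congr rfl fun c _ => ?_
    rw [← Finset.sum_mul]
    congr 1
    simp only [Finset.sum_mul]
    rw [Finset.sum_comm]
    exact Finset.sum_congr rfl fun a _ => Finset.sum_congr rfl fun b _ => by ring
  have transport_part :
      ∑ b, ∑ c, (∑ a, matGrad γ φ a x * pd a (γ b c) x) * pd b w x * pd c w x
      = ∑ a, matGrad γ φ a x * ∑ b, ∑ c, pd a (γ b c) x * pd b w x * pd c w x := by
    simp only [Finset.sum_mul, Finset.mul_sum]
    rw [Finset.sum_congr rfl fun b _ => Finset.sum_comm, Finset.sum_comm]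
    exact Finset.sum_congr rfl fun a _ => Finset.sum_congr rfl fun c _ =>
      Finset.sum_congr rfl fun b _ => by ring
  have metric_part : ∑ b, ∑ c, γ b c x * pd b w x * pd c w x = gradInner γ w w x := by
    simp only [gradInner, matGrad, Finset.sum_mul]
    exact Finset.sum_congr rfl fun b _ => Finset.sum_congr rfl fun c _ => by ring
  rw [← hess_part, ← transport_part, ← metric_part]
  simp only [Finset.mul_sum, ← Finset.sum_add_distrib, ← Finset.sum_sub_distrib]
  exact Finset.sum_congr rfl fun b _ => Finset.sum_congr rfl fun c _ => by
    rw [carlemanForm]; ring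

theorem pd_matGrad (hγ : ∀ a b, ContDiff ℝ 1 (γ a b)) (hw : ContDiff ℝ 2 w) (a b : Fin n)
    (x : Pt n) :
    pd a (matGrad γ w b) x = ∑ c, (pd a (γ b c) x * pd c w x + γ b c x * pd a (pd c w) x) := by
  have dγ (a b : Fin n) : Differentiable ℝ (γ a b) := (hγ a b).differentiable one_ne_zero
  have dpd (c : Fin n) : Differentiable ℝ (pd c w) := differentiable_pd hw
  unfold matGrad
  rw [pd_sum fun c _ => by fun_prop]
  exact Finset.sum_congr rfl fun c _ => pd_mul (dγ b c x) (dpd c x)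

theorem pd_gradInner_self (hs : ∀ a b x, γ a b x = γ b a x) (hγ : ∀ a b, ContDiff ℝ 1 (γ a b))
    (hw : ContDiff ℝ 2 w) (a : Fin n) (x : Pt n) :
    pd a (gradInner γ w w) x = (∑ b, ∑ c, pd a (γ b c) x * pd b w x * pd c w x)
      + 2 * ∑ b, matGrad γ w b x * pd a (pd b w) x := by
  have dG (b : Fin n) : Differentiable ℝ (matGrad γ w b) :=
    (contDiff_matGrad hγ hw (by norm_num) b).differentiable one_ne_zero
  have dpd (c : Fin n) : Differentiable ℝ (pd c w) := differentiable_pd hw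
  have hterm (b : Fin n) : pd a (fun y => matGrad γ w b y * pd b w y) x =
      (∑ c, pd a (γ b c) x * pd b w x * pd c w x)
        + (∑ c, γ b c x * pd a (pd c w) x * pd b w x) + matGrad γ w b x * pd a (pd b w) x := by
    rw [pd_mul (dG b x) (dpd b x), pd_matGrad hγ hw, Finset.sum_add_distrib, add_mul,
      Finset.sum_mul, Finset.sum_mul]
    congr 2
    exact Finset.sum_congr rfl fun c _ => by ring
  have hsymm : ∑ b, ∑ c, γ b c x * pd a (pd c w) x * pd b w x
      = ∑ b, matGrad γ w b x * pd a (pd b w) x := by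
    rw [Finset.sum_comm]
    simp only [matGrad, Finset.sum_mul]
    refine Finset.sum_congr rfl fun c _ => Finset.sum_congr rfl fun b _ => ?_
    rw [hs b c]; ring
  unfold gradInner
  rw [pd_sum fun c _ => by fun_prop]
  simp only [hterm, Finset.sum_add_distrib, hsymm]
  ring

theorem gradInner_gradInner (hs : ∀ a b x, γ a b x = γ b a x)
    (hγ : ∀ a b, ContDiff ℝ 1 (γ a b)) (hφ : ContDiff ℝ 2 φ) (hw : ContDiff ℝ 2 w) (x : Pt n) :
    gradInner γ w (gradInner γ φ w) x = 1 / 2 * gradInner γ φ (gradInner γ w w) x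
      + ∑ b, ∑ c, carlemanForm γ φ 0 b c x * pd b w x * pd c w x := by
  have dG (b : Fin n) : Differentiable ℝ (matGrad γ φ b) :=
    (contDiff_matGrad hγ hφ (by norm_num) b).differentiable one_ne_zero
  have dpd (c : Fin n) : Differentiable ℝ (pd c w) := differentiable_pd hw
  have hpd (a : Fin n) : pd a (gradInner γ φ w) x =
      ∑ c, (pd a (matGrad γ φ c) x * pd c w x + matGrad γ φ c x * pd a (pd c w) x) := by
    unfold gradInner
    rw [pd_sum fun c _ => by fun_prop]
    exact Finset.sum_congr rfl fun c _ => pd_mul (dG c x) (dpd c x)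
  have hHess : ∑ a, matGrad γ w a x * ∑ c, pd a (matGrad γ φ c) x * pd c w x
      = ∑ c, (∑ a, matGrad γ w a x * pd a (matGrad γ φ c) x) * pd c w x := by
    simp only [Finset.mul_sum, Finset.sum_mul]
    rw [Finset.sum_comm]
    simp only [mul_assoc]
  have hsecond : ∑ a, matGrad γ w a x * ∑ c, matGrad γ φ c x * pd a (pd c w) x
      = ∑ a, matGrad γ φ a x * ∑ b, matGrad γ w b x * pd a (pd b w) x := by
    simp only [Finset.mul_sum]
    rw [Finset.sum_comm]
    refine Finset.sum_congr rfl fun a _ => Finset.sum_congr rfl fun b _ => ?_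
    rw [pd_comm hw.contDiffAt]; ring
  rw [sum_carlemanForm, gradInner, gradInner]
  simp only [hpd, pd_gradInner_self hs hγ hw, Finset.sum_add_distrib, mul_add, hHess, hsecond,
    mul_left_comm _ (2 : ℝ), ← Finset.mul_sum]
  simp only [matGrad]
  ring

theorem differentiable_carlemanMultiplier (hγ : ∀ a b, ContDiff ℝ 2 (γ a b))
    (hφ : ContDiff ℝ 3 φ) (hw : ContDiff ℝ 2 w) (σ : ℝ) :
    Differentiable ℝ (carlemanMultiplier γ φ σ w) := by
  have hγ1 (a b : Fin n) : ContDiff ℝ 1 (γ a b) := (hγ a b).of_le (by norm_num)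
  have dw : Differentiable ℝ w := hw.differentiable two_ne_zero
  have dm : Differentiable ℝ (gradInner γ φ w) :=
    (contDiff_gradInner hγ1 (hφ.of_le (by norm_num)) hw (by norm_num)).differentiable one_ne_zero
  have dL : Differentiable ℝ (divGrad γ φ) :=
    (contDiff_divGrad (m := 1) hγ hφ (by norm_num) (by norm_num)).differentiable one_ne_zero
  unfold carlemanMultiplier
  fun_prop

theorem gradInner_carlemanMultiplier (hγ : ∀ a b, ContDiff ℝ 2 (γ a b)) (hφ : ContDiff ℝ 3 φ)
    (hw : ContDiff ℝ 2 w) (σ : ℝ) (x : Pt n) :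
    gradInner γ w (carlemanMultiplier γ φ σ w) x = gradInner γ w (gradInner γ φ w) x
      + 1 / 2 * gradInner γ w (divGrad γ φ) x * w x
      + (1 / 2 * divGrad γ φ x + σ) * gradInner γ w w x := by
  have hγ1 (a b : Fin n) : ContDiff ℝ 1 (γ a b) := (hγ a b).of_le (by norm_num)
  have dw : Differentiable ℝ w := hw.differentiable two_ne_zero
  have dm : Differentiable ℝ (gradInner γ φ w) :=
    (contDiff_gradInner hγ1 (hφ.of_le (by norm_num)) hw (by norm_num)).differentiable one_ne_zero
  have dL : Differentiable ℝ (divGrad γ φ) :=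
    (contDiff_divGrad (m := 1) hγ hφ (by norm_num) (by norm_num)).differentiable one_ne_zero
  have hσ : gradInner γ w (fun _ => σ) x = 0 := by simp [gradInner, pd_const]
  unfold carlemanMultiplier
  rw [gradInner_add_right (dm x) (by fun_prop), gradInner_mul_right (by fun_prop) (dw x),
    gradInner_add_right (by fun_prop) (by fun_prop), gradInner_const_mul_right _ (dL x), hσ]
  ring

theorem sum_pd_carlemanFlux (hγ : ∀ a b, ContDiff ℝ 2 (γ a b)) (hφ : ContDiff ℝ 3 φ)
    (hw : ContDiff ℝ 2 w) (σ τ : ℝ) (x : Pt n) :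
    ∑ a, pd a (carlemanFlux γ φ σ τ w a) x =
      gradInner γ φ (fun y => 1 / 2 * (gradInner γ w w y
        - τ ^ 2 * (gradInner γ φ φ y * (w y * w y)))) x
      + 1 / 2 * (gradInner γ w w x - τ ^ 2 * (gradInner γ φ φ x * (w x * w x))) * divGrad γ φ x
      - (gradInner γ w (carlemanMultiplier γ φ σ w) x
        + carlemanMultiplier γ φ σ w x * divGrad γ w x) := by
  have hγ1 (a b : Fin n) : ContDiff ℝ 1 (γ a b) := (hγ a b).of_le (by norm_num)
  have hφ2 : ContDiff ℝ 2 φ := hφ.of_le (by norm_num)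
  have dw : Differentiable ℝ w := hw.differentiable two_ne_zero
  have dGw (a : Fin n) : Differentiable ℝ (matGrad γ w a) :=
    (contDiff_matGrad hγ1 hw (by norm_num) a).differentiable one_ne_zero
  have dGφ (a : Fin n) : Differentiable ℝ (matGrad γ φ a) :=
    (contDiff_matGrad hγ1 hφ2 (by norm_num) a).differentiable one_ne_zero
  have dNw : Differentiable ℝ (gradInner γ w w) :=
    (contDiff_gradInner hγ1 hw hw (by norm_num)).differentiable one_ne_zero
  have dNφ : Differentiable ℝ (gradInner γ φ φ) :=
    (contDiff_gradInner hγ1 hφ2 hφ2 (by norm_num)).differentiable one_ne_zero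
  have dM := differentiable_carlemanMultiplier hγ hφ hw σ
  unfold carlemanFlux
  rw [← sum_pd_mul_matGrad (by fun_prop) fun a => dGφ a x,
    ← sum_pd_mul_matGrad (dM x) fun a => dGw a x, ← Finset.sum_sub_distrib]
  exact Finset.sum_congr rfl fun a _ => pd_sub (by fun_prop) (by fun_prop)

theorem multiplier_identity (hs : ∀ a b x, γ a b x = γ b a x)
    (hγ : ∀ a b, ContDiff ℝ 2 (γ a b)) (hφ : ContDiff ℝ 3 φ) (hw : ContDiff ℝ 2 w)
    (σ τ : ℝ) (x : Pt n) :
    -((divGrad γ w x + τ ^ 2 * gradInner γ φ φ x * w x) * carlemanMultiplier γ φ σ w x) =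
      (∑ a, pd a (carlemanFlux γ φ σ τ w a) x)
      + (∑ b, ∑ c, carlemanForm γ φ σ b c x * pd b w x * pd c w x)
      + 1 / 2 * (w x * gradInner γ w (divGrad γ φ) x)
      + τ ^ 2 * (1 / 2 * gradInner γ φ (gradInner γ φ φ) x - σ * gradInner γ φ φ x)
        * (w x * w x) := by
  have hγ1 (a b : Fin n) : ContDiff ℝ 1 (γ a b) := (hγ a b).of_le (by norm_num)
  have hφ2 : ContDiff ℝ 2 φ := hφ.of_le (by norm_num)
  have dw : Differentiable ℝ w := hw.differentiable two_ne_zero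
  have dNw : Differentiable ℝ (gradInner γ w w) :=
    (contDiff_gradInner hγ1 hw hw (by norm_num)).differentiable one_ne_zero
  have dNφ : Differentiable ℝ (gradInner γ φ φ) :=
    (contDiff_gradInner hγ1 hφ2 hφ2 (by norm_num)).differentiable one_ne_zero
  have hform : ∑ b, ∑ c, carlemanForm γ φ σ b c x * pd b w x * pd c w x
      = (∑ b, ∑ c, carlemanForm γ φ 0 b c x * pd b w x * pd c w x) + σ * gradInner γ w w x := by
    simp only [sum_carlemanForm]; ring
  rw [sum_pd_carlemanFlux hγ hφ hw, gradInner_carlemanMultiplier hγ hφ hw,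
    gradInner_const_mul_right _ (by fun_prop), gradInner_sub_right (dNw x) (by fun_prop),
    gradInner_const_mul_right _ (by fun_prop), gradInner_mul_right (dNφ x) (by fun_prop),
    gradInner_mul_right (dw x) (dw x), gradInner_gradInner hs hγ1 hφ2 hw, hform,
    carlemanMultiplier]
  ring

end DivergenceForm

/-! ### The local Carleman estimate -/

section QuadraticForm

variable {n : ℕ}

theorem sum_sq_pos {ξ : Pt n} (h : ξ ≠ 0) : 0 < ∑ i, ξ i ^ 2 := by
  obtain ⟨i, hi⟩ := Function.ne_iff.1 h
  exact Finset.sum_pos' (fun _ _ => sq_nonneg _) ⟨i, Finset.mem_univ _, sq_pos_of_ne_zero hi⟩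

theorem exists_pos_mul_sum_sq_le_of_sphere {q : Pt n → ℝ} (hq : Continuous q)
    (hpos : ∀ ξ : Pt n, ξ ≠ 0 → 0 < q ξ) :
    ∃ c > 0, ∀ ξ ∈ Metric.sphere (0 : Pt n) 1, c * ∑ i, ξ i ^ 2 < q ξ := by
  have ne_zero {ξ : Pt n} (hξ : ξ ∈ Metric.sphere (0 : Pt n) 1) : ξ ≠ 0 :=
    ne_zero_of_mem_unit_sphere ⟨ξ, hξ⟩
  obtain ⟨c, hc, hle⟩ := (isCompact_sphere (0 : Pt n) 1).exists_forall_le'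
    (f := fun ξ => q ξ / ∑ i, ξ i ^ 2)
    (hq.continuousOn.div (by fun_prop) fun ξ hξ => (sum_sq_pos (ne_zero hξ)).ne')
    (a := 0) fun ξ hξ => div_pos (hpos ξ (ne_zero hξ)) (sum_sq_pos (ne_zero hξ))
  refine ⟨c / 2, half_pos hc, fun ξ hξ => ?_⟩
  have hs := sum_sq_pos (ne_zero hξ)
  have := (le_div_iff₀ hs).1 (hle ξ hξ)
  nlinarith

theorem quadraticForm_smul (β : Fin n → Fin n → ℝ) (t : ℝ) (ξ : Pt n) :
    ∑ a, ∑ b, β a b * (t • ξ) a * (t • ξ) b = t ^ 2 * ∑ a, ∑ b, β a b * ξ a * ξ b := by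
  simp only [Pi.smul_apply, smul_eq_mul, Finset.mul_sum]
  exact Finset.sum_congr rfl fun a _ => Finset.sum_congr rfl fun b _ => by ring

theorem eventually_mul_sum_sq_le_quadraticForm {α : Type*} [TopologicalSpace α]
    {β : Fin n → Fin n → α → ℝ} {x0 : α} (hβ : ∀ a b, ContinuousAt (β a b) x0)
    (hpos : ∀ ξ : Pt n, ξ ≠ 0 → 0 < ∑ a, ∑ b, β a b x0 * ξ a * ξ b) :
    ∃ c > 0, ∀ᶠ x in nhds x0, ∀ ξ : Pt n, c * ∑ i, ξ i ^ 2 ≤ ∑ a, ∑ b, β a b x * ξ a * ξ b := by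
  obtain ⟨c, hc, hlt⟩ := exists_pos_mul_sum_sq_le_of_sphere
    (q := fun ξ => ∑ a, ∑ b, β a b x0 * ξ a * ξ b) (by fun_prop) hpos
  refine ⟨c, hc, ?_⟩
  have hsphere : ∀ᶠ x in nhds x0, ∀ ξ ∈ Metric.sphere (0 : Pt n) 1,
      c * ∑ i, ξ i ^ 2 < ∑ a, ∑ b, β a b x * ξ a * ξ b := by
    refine (isCompact_sphere (0 : Pt n) 1).eventually_forall_of_forall_eventually fun ξ hξ => ?_
    have (a b : Fin n) : ContinuousAt (fun p : α × Pt n => β a b p.1) (x0, ξ) :=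
      ContinuousAt.comp (f := Prod.fst) (hβ a b) continuousAt_fst
    exact ContinuousAt.eventually_lt (by fun_prop) (by fun_prop) (hlt ξ hξ)
  filter_upwards [hsphere] with x hx ξ
  rcases eq_or_ne ξ 0 with rfl | h0
  · simp
  have hinv : 0 < ‖ξ‖⁻¹ ^ 2 := pow_pos (inv_pos.2 (norm_pos_iff.2 h0)) 2
  have h := hx (‖ξ‖⁻¹ • ξ) (by simp [norm_smul, h0])
  rw [quadraticForm_smul] at h
  simp only [Pi.smul_apply, smul_eq_mul, mul_pow, ← Finset.mul_sum] at h
  rw [mul_left_comm] at h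
  exact (lt_of_mul_lt_mul_left h hinv.le).le

end QuadraticForm

section Carleman

variable {n : ℕ} {γ : Fin n → Fin n → Pt n → ℝ} {φ u v w : Pt n → ℝ} {x x0 : Pt n}

/-- The squared length `u² + |∂u|²` of the first jet of `u`. -/
def firstJetSq (u : Pt n → ℝ) (x : Pt n) : ℝ :=
  u x ^ 2 + ∑ a, pd a u x ^ 2

/-- Strong pseudoconvexity of the weight `φ` at `x0` for the operator `div (γ∇·)`: with the shift
`σ`, the form `carlemanForm` of the multiplier identity and the coefficient of its potential term
are both positive. -/
structure PseudoconvexAt (γ : Fin n → Fin n → Pt n → ℝ) (φ : Pt n → ℝ) (σ : ℝ) (x0 : Pt n) :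
    Prop where
  form_pos : ∀ ξ : Pt n, ξ ≠ 0 → 0 < ∑ b, ∑ c, carlemanForm γ φ σ b c x0 * ξ b * ξ c
  potential_pos : 0 < 1 / 2 * gradInner γ φ (gradInner γ φ φ) x0 - σ * gradInner γ φ φ x0

/-- Quantitative pseudoconvexity at `x`: `c` bounds the form and the potential of the multiplier
identity from below, `K` bounds its lower order coefficients from above. -/
structure CarlemanBounds (γ : Fin n → Fin n → Pt n → ℝ) (φ : Pt n → ℝ) (σ c K : ℝ) (x : Pt n) :
    Prop where
  form_ge : ∀ ξ : Pt n, c * ∑ i, ξ i ^ 2 ≤ ∑ a, ∑ b, carlemanForm γ φ σ a b x * ξ a * ξ b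
  potential_ge : c ≤ 1 / 2 * gradInner γ φ (gradInner γ φ φ) x - σ * gradInner γ φ φ x
  lower_order_le : ∑ b, matGrad γ (divGrad γ φ) b x ^ 2 ≤ K
  grad_le : ∑ b, pd b φ x ^ 2 ≤ K

theorem continuous_carlemanForm (hγ : ∀ a b, ContDiff ℝ 1 (γ a b)) (hφ : ContDiff ℝ 2 φ) (σ : ℝ)
    (b c : Fin n) : Continuous (carlemanForm γ φ σ b c) := by
  have cγ (a b : Fin n) : Continuous (γ a b) := (hγ a b).continuous
  have cγ' (a b d : Fin n) : Continuous (pd d (γ a b)) :=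
    (contDiff_pd (m := 0) (hγ a b) (by norm_num)).continuous
  have cG (a : Fin n) : ContDiff ℝ 1 (matGrad γ φ a) := contDiff_matGrad hγ hφ le_rfl a
  have cG0 (a : Fin n) : Continuous (matGrad γ φ a) := (cG a).continuous
  have cG' (a d : Fin n) : Continuous (pd d (matGrad γ φ a)) :=
    (contDiff_pd (m := 0) (cG a) (by norm_num)).continuous
  unfold carlemanForm
  fun_prop

theorem PseudoconvexAt.eventually_carlemanBounds {σ : ℝ} (h : PseudoconvexAt γ φ σ x0)
    (hγ : ∀ a b, ContDiff ℝ 2 (γ a b)) (hφ : ContDiff ℝ 3 φ) :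
    ∃ c > 0, ∃ K > 0, ∀ᶠ x in nhds x0, CarlemanBounds γ φ σ c K x := by
  have hγ1 (a b : Fin n) : ContDiff ℝ 1 (γ a b) := (hγ a b).of_le (by norm_num)
  have cN : ContDiff ℝ 1 (gradInner γ φ φ) :=
    contDiff_gradInner hγ1 (hφ.of_le (by norm_num)) (hφ.of_le (by norm_num)) le_rfl
  have cN0 : Continuous (gradInner γ φ φ) := cN.continuous
  have cNN : Continuous (gradInner γ φ (gradInner γ φ φ)) :=
    (contDiff_gradInner (m := 0) (fun a b => (hγ a b).of_le (by norm_num))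
      (hφ.of_le (by norm_num)) cN (by norm_num)).continuous
  have ck (b : Fin n) : Continuous (matGrad γ (divGrad γ φ) b) :=
    (contDiff_matGrad (m := 0) (fun a b => (hγ a b).of_le (by norm_num))
      (contDiff_divGrad hγ hφ (m := 1) (by norm_num) (by norm_num)) (by norm_num) b).continuous
  have cφ' (d : Fin n) : Continuous (pd d φ) :=
    (contDiff_pd (m := 2) hφ (by norm_num)).continuous
  obtain ⟨c, hc, hform⟩ := eventually_mul_sum_sq_le_quadraticForm (fun b c =>
    (continuous_carlemanForm hγ1 (hφ.of_le (by norm_num)) σ b c).continuousAt) h.form_pos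
  obtain ⟨d, hd, hdlt⟩ := exists_between h.potential_pos
  have hpot := (show Continuous fun x => 1 / 2 * gradInner γ φ (gradInner γ φ φ) x
    - σ * gradInner γ φ φ x by fun_prop).continuousAt.eventually (lt_mem_nhds hdlt)
  obtain ⟨K, hK⟩ := exists_gt
    (max 0 (max (∑ b, matGrad γ (divGrad γ φ) b x0 ^ 2) (∑ b, pd b φ x0 ^ 2)))
  simp only [max_lt_iff] at hK
  have hlow := (show Continuous fun x => ∑ b, matGrad γ (divGrad γ φ) b x ^ 2 by
    fun_prop).continuousAt.eventually (gt_mem_nhds hK.2.1)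
  have hgrad := (show Continuous fun x => ∑ b, pd b φ x ^ 2 by
    fun_prop).continuousAt.eventually (gt_mem_nhds hK.2.2)
  refine ⟨min c d, lt_min hc hd, K, hK.1, ?_⟩
  filter_upwards [hform, hpot, hlow, hgrad] with x h1 h2 h3 h4
  refine ⟨fun ξ => le_trans ?_ (h1 ξ), (min_le_right _ _).trans h2.le, h3.le, h4.le⟩
  exact mul_le_mul_of_nonneg_right (min_le_left _ _) (Finset.sum_nonneg fun _ _ => sq_nonneg _)

/-- The conjugated operator `e^{τφ} div (γ∇(e^{-τφ} ·))`. -/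
def conjugatedOp (γ : Fin n → Fin n → Pt n → ℝ) (φ : Pt n → ℝ) (τ : ℝ) (w : Pt n → ℝ)
    (x : Pt n) : ℝ :=
  Real.exp (τ * φ x) * divGrad γ (fun y => Real.exp (-τ * φ y) * w y) x

theorem two_mul_conjugatedOp_sub_multiplier (hs : ∀ a b x, γ a b x = γ b a x)
    (hγ : ∀ a b, ContDiff ℝ 1 (γ a b)) (hφ : ContDiff ℝ 2 φ) (hw : ContDiff ℝ 2 w) (σ τ : ℝ)
    (x : Pt n) :
    conjugatedOp γ φ τ w x - 2 * τ * σ * w x =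
      divGrad γ w x + τ ^ 2 * gradInner γ φ φ x * w x
        - 2 * τ * carlemanMultiplier γ φ σ w x := by
  rw [conjugatedOp, divGrad_exp_mul hs hγ hφ hw, ← mul_assoc, ← Real.exp_add, carlemanMultiplier]
  simp only [neg_mul, add_neg_cancel, Real.exp_zero]
  ring

theorem CarlemanBounds.lower_order_ge {σ c K : ℝ} (h : CarlemanBounds γ φ σ c K x)
    (hs : ∀ a b x, γ a b x = γ b a x) (hc : 0 < c) (w : Pt n → ℝ) :
    -(c / 2 * ∑ b, pd b w x ^ 2) - K / (8 * c) * w x ^ 2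
      ≤ 1 / 2 * (w x * gradInner γ w (divGrad γ φ) x) := by
  set k : Fin n → ℝ := fun b => matGrad γ (divGrad γ φ) b x
  have hterm (b : Fin n) : -(c / 2 * pd b w x ^ 2) - k b ^ 2 * (w x ^ 2 / (8 * c))
      ≤ 1 / 2 * (w x * (k b * pd b w x)) := by
    have hsq : 0 ≤ (2 * c * pd b w x + k b * w x) ^ 2 / (8 * c) := by positivity
    have hexpand : (2 * c * pd b w x + k b * w x) ^ 2 / (8 * c) = c / 2 * pd b w x ^ 2
        + k b ^ 2 * (w x ^ 2 / (8 * c)) + 1 / 2 * (w x * (k b * pd b w x)) := by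
      field_simp; ring
    linarith
  have hsum := Finset.sum_le_sum fun b (_ : b ∈ Finset.univ) => hterm b
  simp only [Finset.sum_sub_distrib, Finset.sum_neg_distrib, ← Finset.mul_sum,
    ← Finset.sum_mul] at hsum
  have hK : (∑ b, k b ^ 2) * (w x ^ 2 / (8 * c)) ≤ K * (w x ^ 2 / (8 * c)) :=
    mul_le_mul_of_nonneg_right h.lower_order_le (by positivity)
  rw [gradInner_comm hs w]
  calc _ = -(c / 2 * ∑ b, pd b w x ^ 2) - K * (w x ^ 2 / (8 * c)) := by ring
    _ ≤ _ := by rw [gradInner]; linarith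

theorem CarlemanBounds.pointwise_estimate {σ c K τ : ℝ} (h : CarlemanBounds γ φ σ c K x)
    (hs : ∀ a b x, γ a b x = γ b a x) (hγ : ∀ a b, ContDiff ℝ 2 (γ a b)) (hφ : ContDiff ℝ 3 φ)
    (hw : ContDiff ℝ 2 w) (hc : 0 < c) (hτ : 0 ≤ τ)
    (hlarge : K / (2 * c) * τ + 8 * σ ^ 2 * τ ^ 2 ≤ 2 * c * τ ^ 3) :
    2 * c * (τ * ∑ a, pd a w x ^ 2 + τ ^ 3 * w x ^ 2) ≤
      2 * conjugatedOp γ φ τ w x ^ 2 - 4 * τ * ∑ a, pd a (carlemanFlux γ φ σ τ w a) x := by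
  have hform := h.form_ge fun a => pd a w x
  have hpot := mul_le_mul_of_nonneg_left h.potential_ge (by positivity : 0 ≤ τ ^ 2 * w x ^ 2)
  have hlow := h.lower_order_ge hs hc w
  have hid := multiplier_identity hs hγ hφ hw σ τ x
  have hconj := two_mul_conjugatedOp_sub_multiplier hs (fun a b => (hγ a b).of_le (by norm_num))
    (hφ.of_le (by norm_num)) hw σ τ x
  set S := divGrad γ w x + τ ^ 2 * gradInner γ φ φ x * w x
  set M := carlemanMultiplier γ φ σ w x
  set A := conjugatedOp γ φ τ w x
  have hQ : c / 2 * ∑ a, pd a w x ^ 2 + (c * τ ^ 2 - K / (8 * c)) * w x ^ 2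
      ≤ -(S * M) - ∑ a, pd a (carlemanFlux γ φ σ τ w a) x := by
    rw [hid]; linarith
  have hsq : -(4 * τ * (S * M)) ≤ 2 * A ^ 2 + 8 * τ ^ 2 * σ ^ 2 * w x ^ 2 := by
    have hpar : (A - 2 * τ * σ * w x) ^ 2 = (S - 2 * τ * M) ^ 2 := by rw [hconj]
    linarith [sq_nonneg S, sq_nonneg (2 * τ * M), sq_nonneg (A + 2 * τ * σ * w x)]
  have hnum : 2 * c * τ ^ 3 ≤ 4 * τ * (c * τ ^ 2 - K / (8 * c)) - 8 * τ ^ 2 * σ ^ 2 := by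
    have hK : 4 * τ * (K / (8 * c)) = K / (2 * c) * τ := by field_simp; ring
    linarith
  linarith [mul_le_mul_of_nonneg_left hQ (by linarith : 0 ≤ 4 * τ),
    mul_le_mul_of_nonneg_right hnum (sq_nonneg (w x))]

theorem matGrad_eventuallyEq (h : u =ᶠ[nhds x] v) (c : Fin n) :
    matGrad γ u c =ᶠ[nhds x] matGrad γ v c := by
  filter_upwards [h.eventuallyEq_nhds] with y hy
  simp only [matGrad, pd_congr hy]

theorem divGrad_congr (h : u =ᶠ[nhds x] v) : divGrad γ u x = divGrad γ v x :=
  Finset.sum_congr rfl fun c _ => pd_congr (matGrad_eventuallyEq h c)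

theorem divGrad_zero : divGrad γ (fun _ => 0) x = 0 := by
  have hG (c : Fin n) : matGrad γ (fun _ => 0) c = fun _ => 0 := by
    funext y; simp only [matGrad, pd_const, mul_zero, Finset.sum_const_zero]
  simp only [divGrad, hG, pd_const, Finset.sum_const_zero]

theorem pd_eq_zero_of_notMem_tsupport (hx : x ∉ tsupport u) (a : Fin n) : pd a u x = 0 := by
  rw [pd_congr (notMem_tsupport_iff_eventuallyEq.1 hx)]
  exact pd_const 0

theorem divGrad_eq_zero_of_notMem_tsupport (hx : x ∉ tsupport u) : divGrad γ u x = 0 :=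
  (divGrad_congr (notMem_tsupport_iff_eventuallyEq.1 hx)).trans divGrad_zero

theorem tsupport_carlemanFlux_subset (σ τ : ℝ) (a : Fin n) :
    tsupport (carlemanFlux γ φ σ τ w a) ⊆ tsupport w := by
  refine closure_minimal (fun x hx => ?_) (isClosed_tsupport w)
  by_contra hxw
  refine hx ?_
  simp [carlemanFlux, carlemanMultiplier, gradInner, matGrad, image_eq_zero_of_notMem_tsupport hxw,
    pd_eq_zero_of_notMem_tsupport hxw]

theorem contDiff_carlemanFlux (hγ : ∀ a b, ContDiff ℝ 2 (γ a b)) (hφ : ContDiff ℝ 3 φ)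
    (hw : ContDiff ℝ 2 w) (σ τ : ℝ) (a : Fin n) : ContDiff ℝ 1 (carlemanFlux γ φ σ τ w a) := by
  have hγ1 (a b : Fin n) : ContDiff ℝ 1 (γ a b) := (hγ a b).of_le (by norm_num)
  have hφ2 : ContDiff ℝ 2 φ := hφ.of_le (by norm_num)
  have hG (a : Fin n) : ContDiff ℝ 1 (matGrad γ w a) := contDiff_matGrad hγ1 hw le_rfl a
  have hGφ (a : Fin n) : ContDiff ℝ 1 (matGrad γ φ a) := contDiff_matGrad hγ1 hφ2 le_rfl a
  have hNw : ContDiff ℝ 1 (gradInner γ w w) := contDiff_gradInner hγ1 hw hw le_rfl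
  have hNφ : ContDiff ℝ 1 (gradInner γ φ φ) := contDiff_gradInner hγ1 hφ2 hφ2 le_rfl
  have hNφw : ContDiff ℝ 1 (gradInner γ φ w) := contDiff_gradInner hγ1 hφ2 hw le_rfl
  have hL : ContDiff ℝ 1 (divGrad γ φ) := contDiff_divGrad hγ hφ le_rfl le_rfl
  have hw1 : ContDiff ℝ 1 w := hw.of_le (by norm_num)
  unfold carlemanFlux carlemanMultiplier
  fun_prop

theorem continuous_divGrad (hγ : ∀ a b, ContDiff ℝ 1 (γ a b)) (hu : ContDiff ℝ 2 u) :
    Continuous (divGrad γ u) :=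
  (contDiff_divGrad (m := 0) hγ hu (by norm_num) (by norm_num)).continuous

theorem continuous_firstJetSq (hu : ContDiff ℝ 1 u) : Continuous (firstJetSq u) := by
  have hpd (a : Fin n) : Continuous (pd a u) := (contDiff_pd (m := 0) hu (by norm_num)).continuous
  have := hu.continuous
  unfold firstJetSq
  fun_prop

theorem firstJetSq_eq_zero_of_notMem_tsupport (hx : x ∉ tsupport u) : firstJetSq u x = 0 := by
  simp [firstJetSq, image_eq_zero_of_notMem_tsupport hx, pd_eq_zero_of_notMem_tsupport hx]

theorem integrable_mul_firstJetSq (hv : Continuous v) (hu : ContDiff ℝ 1 u)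
    (hcu : HasCompactSupport u) : Integrable fun x => v x * firstJetSq u x := by
  have := continuous_firstJetSq hu
  refine Continuous.integrable_of_hasCompactSupport (by fun_prop) (.intro hcu fun x hx => ?_)
  rw [firstJetSq_eq_zero_of_notMem_tsupport hx, mul_zero]

theorem integrable_conjugatedOp_sq (hγ : ∀ a b, ContDiff ℝ 1 (γ a b)) (hφ : ContDiff ℝ 2 φ)
    (hw : ContDiff ℝ 2 w) (hcw : HasCompactSupport w) (τ : ℝ) :
    Integrable fun x => conjugatedOp γ φ τ w x ^ 2 := by
  have hexp : ContDiff ℝ 2 fun y => Real.exp (-τ * φ y) * w y := by fun_prop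
  have := continuous_divGrad hγ hexp
  have := hφ.continuous
  refine Continuous.integrable_of_hasCompactSupport (by unfold conjugatedOp; fun_prop)
    (.intro hcw fun x hx => ?_)
  rw [conjugatedOp, divGrad_eq_zero_of_notMem_tsupport fun h => hx (tsupport_mul_subset_right h),
    mul_zero, zero_pow two_ne_zero]

theorem integrable_mul_sum_pd_sq_add (hw : ContDiff ℝ 1 w) (hcw : HasCompactSupport w) (s t : ℝ) :
    Integrable fun x => s * ∑ a, pd a w x ^ 2 + t * w x ^ 2 := by
  have hpd (a : Fin n) : Continuous (pd a w) := (contDiff_pd (m := 0) hw (by norm_num)).continuous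
  have := hw.continuous
  refine Continuous.integrable_of_hasCompactSupport (by fun_prop) (.intro hcw fun x hx => ?_)
  simp [image_eq_zero_of_notMem_tsupport hx, pd_eq_zero_of_notMem_tsupport hx]

theorem conjugated_carleman_estimate {σ c K τ : ℝ} {s : Set (Pt n)}
    (hs : ∀ a b x, γ a b x = γ b a x) (hγ : ∀ a b, ContDiff ℝ 2 (γ a b)) (hφ : ContDiff ℝ 3 φ)
    (hb : ∀ x ∈ s, CarlemanBounds γ φ σ c K x) (hc : 0 < c) (hτ : 0 ≤ τ)
    (hlarge : K / (2 * c) * τ + 8 * σ ^ 2 * τ ^ 2 ≤ 2 * c * τ ^ 3)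
    (hw : ContDiff ℝ 2 w) (hcw : HasCompactSupport w) (hws : tsupport w ⊆ s) :
    c * ∫ x, (τ * ∑ a, pd a w x ^ 2 + τ ^ 3 * w x ^ 2) ≤ ∫ x, conjugatedOp γ φ τ w x ^ 2 := by
  have flux_supp (a : Fin n) : tsupport (carlemanFlux γ φ σ τ w a) ⊆ tsupport w :=
    tsupport_carlemanFlux_subset σ τ a
  have flux_compact (a : Fin n) : HasCompactSupport (carlemanFlux γ φ σ τ w a) :=
    hcw.of_isClosed_subset (isClosed_tsupport _) (flux_supp a)
  have hflux (a : Fin n) : ContDiff ℝ 1 (carlemanFlux γ φ σ τ w a) :=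
    contDiff_carlemanFlux hγ hφ hw σ τ a
  have int_pd_flux (a : Fin n) : Integrable (pd a (carlemanFlux γ φ σ τ w a)) :=
    (contDiff_pd (m := 0) (hflux a) (by norm_num)).continuous.integrable_of_hasCompactSupport
      (hasCompactSupport_pd (flux_compact a))
  have int_flux : Integrable fun x => ∑ a, pd a (carlemanFlux γ φ σ τ w a) x :=
    integrable_finsetSum _ fun a _ => int_pd_flux a
  have flux_zero : ∫ x, ∑ a, pd a (carlemanFlux γ φ σ τ w a) x = 0 := by
    rw [integral_finsetSum _ fun a _ => int_pd_flux a]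
    exact Finset.sum_eq_zero fun a _ => integral_pd_eq_zero (hflux a) (flux_compact a)
  have int_op := integrable_conjugatedOp_sq (fun a b => (hγ a b).of_le (by norm_num))
    (hφ.of_le (by norm_num)) hw hcw τ
  have int_jet := integrable_mul_sum_pd_sq_add (hw.of_le (by norm_num)) hcw τ (τ ^ 3)
  have pointwise (x : Pt n) : 2 * c * (τ * ∑ a, pd a w x ^ 2 + τ ^ 3 * w x ^ 2) ≤
      2 * conjugatedOp γ φ τ w x ^ 2 - 4 * τ * ∑ a, pd a (carlemanFlux γ φ σ τ w a) x := by
    by_cases hx : x ∈ tsupport w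
    · exact (hb x (hws hx)).pointwise_estimate hs hγ hφ hw hc hτ hlarge
    · simp only [pd_eq_zero_of_notMem_tsupport hx, image_eq_zero_of_notMem_tsupport hx,
        pd_eq_zero_of_notMem_tsupport fun h => hx (flux_supp _ h)]
      simp [sq_nonneg]
  have hinteg := integral_mono (int_jet.const_mul (2 * c))
    ((int_op.const_mul 2).sub (int_flux.const_mul (4 * τ))) pointwise
  simp only [Pi.sub_apply] at hinteg
  rw [integral_sub (int_op.const_mul 2) (int_flux.const_mul (4 * τ)), integral_const_mul,
    integral_const_mul, integral_const_mul, flux_zero] at hinteg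
  linarith

theorem exp_mul_firstJetSq_le {K τ : ℝ} (hφ : DifferentiableAt ℝ φ x)
    (hu : DifferentiableAt ℝ u x) (hK : ∑ b, pd b φ x ^ 2 ≤ K) (hτ : 1 ≤ τ) :
    τ * (Real.exp (2 * τ * φ x) * firstJetSq u x) ≤
      (2 * K + 2) * (τ * ∑ a, pd a (fun y => Real.exp (τ * φ y) * u y) x ^ 2
        + τ ^ 3 * (Real.exp (τ * φ x) * u x) ^ 2) := by
  set E := Real.exp (τ * φ x)
  set W := E * u x
  have hpd (a : Fin n) :
      E * pd a u x = pd a (fun y => Real.exp (τ * φ y) * u y) x - τ * (pd a φ x * W) := by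
    rw [pd_mul (hφ.const_mul τ).exp hu, pd_exp (hφ.const_mul τ), pd_const_mul τ hφ]; ring
  have hE : Real.exp (2 * τ * φ x) = E ^ 2 := by
    rw [← Real.exp_nat_mul]; congr 1; push_cast; ring
  have hterm (a : Fin n) : (E * pd a u x) ^ 2 ≤
      2 * pd a (fun y => Real.exp (τ * φ y) * u y) x ^ 2 + 2 * τ ^ 2 * W ^ 2 * pd a φ x ^ 2 := by
    rw [hpd a]
    linarith [sq_nonneg (pd a (fun y => Real.exp (τ * φ y) * u y) x + τ * (pd a φ x * W))]
  have hsum := Finset.sum_le_sum fun a (_ : a ∈ Finset.univ) => hterm a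
  rw [Finset.sum_add_distrib, ← Finset.mul_sum, ← Finset.mul_sum] at hsum
  have hgrad := mul_le_mul_of_nonneg_left hK (by positivity : 0 ≤ 2 * τ ^ 2 * W ^ 2)
  have hone : W ^ 2 ≤ τ ^ 2 * W ^ 2 := le_mul_of_one_le_left (sq_nonneg W) (one_le_pow₀ hτ)
  have hK0 : 0 ≤ K := (Finset.sum_nonneg fun _ _ => sq_nonneg _).trans hK
  set s := ∑ a, pd a (fun y => Real.exp (τ * φ y) * u y) x ^ 2
  have hs0 : 0 ≤ K * s := mul_nonneg hK0 (Finset.sum_nonneg fun _ _ => sq_nonneg _)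
  have hjet : Real.exp (2 * τ * φ x) * firstJetSq u x = W ^ 2 + ∑ a, (E * pd a u x) ^ 2 := by
    simp only [hE, firstJetSq, mul_pow, ← Finset.mul_sum, W]; ring
  have hle : Real.exp (2 * τ * φ x) * firstJetSq u x ≤ (2 * K + 2) * (s + τ ^ 2 * W ^ 2) := by
    rw [hjet]
    linarith [mul_nonneg (sq_nonneg τ) (sq_nonneg W)]
  calc τ * (Real.exp (2 * τ * φ x) * firstJetSq u x)
      ≤ τ * ((2 * K + 2) * (s + τ ^ 2 * W ^ 2)) := by gcongr
    _ = _ := by ring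

theorem hasCompactSupport_of_tsupport_subset_ball {E F : Type*} [PseudoMetricSpace E]
    [ProperSpace E] [Zero F] {u : E → F} {x0 : E} {r : ℝ} (h : tsupport u ⊆ Metric.ball x0 r) :
    HasCompactSupport u :=
  (isCompact_closedBall x0 r).of_isClosed_subset (isClosed_tsupport u)
    (h.trans Metric.ball_subset_closedBall)

theorem mul_add_mul_sq_le_mul_cube {a b c τ : ℝ} (ha : 0 ≤ a) (hc : 0 < c) (hτ : 1 ≤ τ)
    (h : (a + b) / c ≤ τ) : a * τ + b * τ ^ 2 ≤ c * τ ^ 3 := by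
  rw [div_le_iff₀ hc] at h
  have hlin : a * τ ≤ a * τ ^ 2 := by
    gcongr; exact le_self_pow₀ hτ two_ne_zero
  linarith [mul_le_mul_of_nonneg_right h (sq_nonneg τ)]

theorem PseudoconvexAt.carleman_estimate {σ : ℝ} (h : PseudoconvexAt γ φ σ x0)
    (hs : ∀ a b x, γ a b x = γ b a x) (hγ : ∀ a b, ContDiff ℝ 2 (γ a b)) (hφ : ContDiff ℝ 3 φ) :
    ∃ r > 0, ∃ C > 0, ∃ τ0 : ℝ, ∀ τ ≥ τ0, ∀ u : Pt n → ℝ, ContDiff ℝ 2 u →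
      tsupport u ⊆ Metric.ball x0 r →
      τ * ∫ x, Real.exp (2 * τ * φ x) * firstJetSq u x ≤
        C * ∫ x, Real.exp (2 * τ * φ x) * divGrad γ u x ^ 2 := by
  obtain ⟨c, hc, K, hK, hev⟩ := h.eventually_carlemanBounds hγ hφ
  obtain ⟨r, hr, hball⟩ := Metric.eventually_nhds_iff_ball.1 hev
  refine ⟨r, hr, (2 * K + 2) / c, by positivity, 1 + (K / (2 * c) + 8 * σ ^ 2) / (2 * c),
    fun τ hτ u hu hsupp => ?_⟩
  have hτ1 : 1 ≤ τ := le_trans (le_add_of_nonneg_right (by positivity)) hτ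
  have hlarge : K / (2 * c) * τ + 8 * σ ^ 2 * τ ^ 2 ≤ 2 * c * τ ^ 3 :=
    mul_add_mul_sq_le_mul_cube (by positivity) (by positivity) hτ1 (by linarith)
  set w : Pt n → ℝ := fun x => Real.exp (τ * φ x) * u x
  have huw : u = fun y => Real.exp (-τ * φ y) * w y := by
    funext y; simp [w, ← mul_assoc, ← Real.exp_add]
  have hw : ContDiff ℝ 2 w := by
    have := hφ.of_le (show (2 : WithTop ℕ∞) ≤ 3 by norm_num); fun_prop
  have hcu : HasCompactSupport u := hasCompactSupport_of_tsupport_subset_ball hsupp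
  have hcw : HasCompactSupport w := hcu.mul_left
  have hest := conjugated_carleman_estimate hs hγ hφ hball hc (by linarith) hlarge hw hcw
    (tsupport_mul_subset_right.trans hsupp)
  have hop (x : Pt n) :
      conjugatedOp γ φ τ w x ^ 2 = Real.exp (2 * τ * φ x) * divGrad γ u x ^ 2 := by
    rw [conjugatedOp, ← huw, mul_pow, ← Real.exp_nat_mul]; congr 2; push_cast; ring
  simp only [hop] at hest
  have pointwise (x : Pt n) : τ * (Real.exp (2 * τ * φ x) * firstJetSq u x) ≤
      (2 * K + 2) * (τ * ∑ a, pd a w x ^ 2 + τ ^ 3 * w x ^ 2) := by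
    by_cases hx : x ∈ tsupport u
    · exact exp_mul_firstJetSq_le (hφ.differentiable three_ne_zero x)
        (hu.differentiable two_ne_zero x) (hball x (hsupp hx)).grad_le hτ1
    · rw [firstJetSq_eq_zero_of_notMem_tsupport hx, mul_zero, mul_zero]
      positivity
  have hjet := integral_mono
    ((integrable_mul_firstJetSq (by have := hφ.continuous; fun_prop) (hu.of_le (by norm_num))
      hcu).const_mul τ)
    ((integrable_mul_sum_pd_sq_add (hw.of_le (by norm_num)) hcw τ (τ ^ 3)).const_mul (2 * K + 2))
    pointwise
  rw [integral_const_mul, integral_const_mul] at hjet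
  refine hjet.trans ?_
  rw [div_mul_eq_mul_div, le_div_iff₀ hc]
  nlinarith

end Carleman

/-! ### Pseudoconvex weights -/

section Weight

variable {n : ℕ} {γ : Fin n → Fin n → Pt n → ℝ} {ψ : Pt n → ℝ} {x x0 : Pt n}

theorem abs_mul_le_sum_sq (ξ : Pt n) (b c : Fin n) : |ξ b * ξ c| ≤ ∑ i, ξ i ^ 2 := by
  have hle (b : Fin n) : ξ b ^ 2 ≤ ∑ i, ξ i ^ 2 := Finset.single_le_sum (f := fun i => ξ i ^ 2)
    (fun _ _ => sq_nonneg _) (Finset.mem_univ b)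
  have hb := hle b
  have hc := hle c
  rw [abs_le]
  constructor <;> nlinarith [sq_nonneg (ξ b + ξ c), sq_nonneg (ξ b - ξ c)]

theorem neg_sum_abs_mul_sum_sq_le_quadraticForm (B : Fin n → Fin n → ℝ) (ξ : Pt n) :
    -((∑ b, ∑ c, |B b c|) * ∑ i, ξ i ^ 2) ≤ ∑ b, ∑ c, B b c * ξ b * ξ c := by
  simp only [Finset.sum_mul, ← Finset.sum_neg_distrib]
  refine Finset.sum_le_sum fun b _ => Finset.sum_le_sum fun c _ => ?_
  have := mul_le_mul_of_nonneg_left (abs_mul_le_sum_sq ξ b c) (abs_nonneg (B b c))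
  rw [← abs_mul, ← mul_assoc] at this
  linarith [neg_abs_le (B b c * ξ b * ξ c)]

/-- The convexification `ψ + (l/2) ψ²`. On the level set `ψ = 0` it has the same differential as
`ψ`, and its Hessian gains the rank one term `l dψ ⊗ dψ`. -/
def convexify (l : ℝ) (ψ : Pt n → ℝ) (x : Pt n) : ℝ :=
  ψ x + l / 2 * (ψ x * ψ x)

theorem contDiff_convexify {k : WithTop ℕ∞} {l : ℝ} (hψ : ContDiff ℝ k ψ) :
    ContDiff ℝ k (convexify l ψ) :=
  hψ.add (contDiff_const.mul (hψ.mul hψ))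

theorem pd_convexify (l : ℝ) (hψ : DifferentiableAt ℝ ψ x) (a : Fin n) :
    pd a (convexify l ψ) x = (1 + l * ψ x) * pd a ψ x := by
  unfold convexify
  rw [pd_add hψ (by fun_prop), pd_const_mul _ (by fun_prop), pd_mul hψ hψ]
  ring

theorem matGrad_convexify (l : ℝ) (hψ : DifferentiableAt ℝ ψ x) (c : Fin n) :
    matGrad γ (convexify l ψ) c x = (1 + l * ψ x) * matGrad γ ψ c x := by
  simp only [matGrad, pd_convexify l hψ, Finset.mul_sum, mul_left_comm]

theorem gradInner_convexify (l : ℝ) (hψ : DifferentiableAt ℝ ψ x) :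
    gradInner γ (convexify l ψ) (convexify l ψ) x = (1 + l * ψ x) ^ 2 * gradInner γ ψ ψ x := by
  simp only [gradInner, matGrad_convexify l hψ, pd_convexify l hψ, Finset.mul_sum]
  exact Finset.sum_congr rfl fun c _ => by ring

theorem pd_matGrad_convexify (hγ : ∀ a b, ContDiff ℝ 1 (γ a b)) (hψ : ContDiff ℝ 2 ψ)
    (h0 : ψ x = 0) (l : ℝ) (a c : Fin n) :
    pd a (matGrad γ (convexify l ψ) c) x
      = pd a (matGrad γ ψ c) x + l * (pd a ψ x * matGrad γ ψ c x) := by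
  have dψ : Differentiable ℝ ψ := hψ.differentiable two_ne_zero
  have dG : Differentiable ℝ (matGrad γ ψ c) :=
    (contDiff_matGrad hγ hψ (by norm_num) c).differentiable one_ne_zero
  rw [show matGrad γ (convexify l ψ) c = fun y => (1 + l * ψ y) * matGrad γ ψ c y from
    funext fun y => matGrad_convexify l (dψ y) c, pd_mul (by fun_prop) (dG x),
    pd_add (by fun_prop) (by fun_prop), pd_const_mul l (dψ x), pd_const, h0]
  ring

theorem carlemanForm_convexify (hs : ∀ a b x, γ a b x = γ b a x)
    (hγ : ∀ a b, ContDiff ℝ 1 (γ a b)) (hψ : ContDiff ℝ 2 ψ) (h0 : ψ x = 0) (l σ : ℝ)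
    (b c : Fin n) :
    carlemanForm γ (convexify l ψ) σ b c x = carlemanForm γ ψ 0 b c x
      + l * (matGrad γ ψ b x * matGrad γ ψ c x) + σ * γ b c x := by
  have dψ : DifferentiableAt ℝ ψ x := hψ.differentiable two_ne_zero x
  have hb : ∑ a, γ a b x * (l * (pd a ψ x * matGrad γ ψ c x))
      = l * (matGrad γ ψ b x * matGrad γ ψ c x) := by
    rw [show matGrad γ ψ b x = ∑ a, γ b a x * pd a ψ x from rfl, Finset.sum_mul, Finset.mul_sum]
    exact Finset.sum_congr rfl fun a _ => by rw [hs a b x]; ring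
  simp only [carlemanForm, pd_matGrad_convexify hγ hψ h0, mul_add, Finset.sum_add_distrib, hb,
    matGrad_convexify l dψ, h0]
  ring_nf

theorem gradInner_gradInner_convexify (hγ : ∀ a b, ContDiff ℝ 1 (γ a b)) (hψ : ContDiff ℝ 2 ψ)
    (h0 : ψ x = 0) (l : ℝ) :
    gradInner γ (convexify l ψ) (gradInner γ (convexify l ψ) (convexify l ψ)) x
      = gradInner γ ψ (gradInner γ ψ ψ) x + 2 * l * gradInner γ ψ ψ x ^ 2 := by
  have dψ : Differentiable ℝ ψ := hψ.differentiable two_ne_zero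
  have dN : Differentiable ℝ (gradInner γ ψ ψ) :=
    (contDiff_gradInner hγ hψ hψ (by norm_num)).differentiable one_ne_zero
  have hpd (c : Fin n) : pd c (gradInner γ (convexify l ψ) (convexify l ψ)) x
      = pd c (gradInner γ ψ ψ) x + 2 * l * gradInner γ ψ ψ x * pd c ψ x := by
    rw [show gradInner γ (convexify l ψ) (convexify l ψ)
        = fun y => (1 + l * ψ y) * (1 + l * ψ y) * gradInner γ ψ ψ y from
      funext fun y => by rw [gradInner_convexify l (dψ y)]; ring,
      pd_mul (by fun_prop) (dN x), pd_mul (by fun_prop) (by fun_prop),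
      pd_add (by fun_prop) (by fun_prop), pd_const_mul l (dψ x), pd_const, h0]
    ring
  simp only [gradInner.eq_def γ (convexify l ψ) (gradInner γ _ _), hpd,
    matGrad_convexify l (dψ x), h0, mul_zero, add_zero, one_mul, mul_add, Finset.sum_add_distrib]
  congr 1
  calc ∑ c, matGrad γ ψ c x * (2 * l * gradInner γ ψ ψ x * pd c ψ x)
      = 2 * l * gradInner γ ψ ψ x * ∑ c, matGrad γ ψ c x * pd c ψ x := by
        rw [Finset.mul_sum]; exact Finset.sum_congr rfl fun c _ => by ring
    _ = _ := by rw [← gradInner]; ring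

theorem exists_pseudoconvexAt_convexify (hs : ∀ a b x, γ a b x = γ b a x)
    (hγ : ∀ a b, ContDiff ℝ 1 (γ a b)) (hψ : ContDiff ℝ 2 ψ)
    (hpos : ∀ ξ : Pt n, ξ ≠ 0 → 0 < ∑ a, ∑ b, γ a b x0 * ξ a * ξ b) (h0 : ψ x0 = 0)
    (hN : 0 < gradInner γ ψ ψ x0) :
    ∃ l σ, PseudoconvexAt γ (convexify l ψ) σ x0 := by
  obtain ⟨c, hc, hev⟩ := eventually_mul_sum_sq_le_quadraticForm
    (fun a b => (hγ a b).continuous.continuousAt) hpos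
  have hcoercive := hev.self_of_nhds
  set B : Fin n → Fin n → ℝ := fun b c => carlemanForm γ ψ 0 b c x0
  set σ := ((∑ b, ∑ c, |B b c|) + 1) / c with hσ
  have hσ0 : 0 < σ := by positivity
  set N := gradInner γ ψ ψ x0
  set Z := gradInner γ ψ (gradInner γ ψ ψ) x0
  set l := (|Z| + σ * N + 1) / N ^ 2 with hl
  refine ⟨l, σ, fun ξ hξ => ?_, ?_⟩
  · have hexpand : ∑ b, ∑ c, carlemanForm γ (convexify l ψ) σ b c x0 * ξ b * ξ c =
        (∑ b, ∑ c, B b c * ξ b * ξ c) + l * (∑ b, matGrad γ ψ b x0 * ξ b) ^ 2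
          + σ * ∑ b, ∑ c, γ b c x0 * ξ b * ξ c := by
      rw [pow_two, Finset.sum_mul_sum]
      simp only [Finset.mul_sum, ← Finset.sum_add_distrib, carlemanForm_convexify hs hγ hψ h0]
      exact Finset.sum_congr rfl fun b _ => Finset.sum_congr rfl fun c _ => by ring
    have hlow := mul_le_mul_of_nonneg_left (hcoercive ξ) hσ0.le
    have hcancel : σ * (c * ∑ i, ξ i ^ 2) = ((∑ b, ∑ c, |B b c|) + 1) * ∑ i, ξ i ^ 2 := by
      rw [hσ]; field_simp
    have hrank : 0 ≤ l * (∑ b, matGrad γ ψ b x0 * ξ b) ^ 2 :=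
      mul_nonneg (by positivity) (sq_nonneg _)
    linarith [neg_sum_abs_mul_sum_sq_le_quadraticForm B ξ, sum_sq_pos hξ]
  · rw [gradInner_gradInner_convexify hγ hψ h0,
      gradInner_convexify l (hψ.differentiable two_ne_zero x0), h0]
    have hlN : l * N ^ 2 = |Z| + σ * N + 1 := by rw [hl]; field_simp
    linarith [neg_abs_le Z, abs_nonneg Z]

end Weight

/-! ### Unique continuation for differential inequalities -/

section Absorption

variable {α : Type*} [TopologicalSpace α] [MeasurableSpace α] [OpensMeasurableSpace α]
  {μ : Measure α} [IsFiniteMeasureOnCompacts μ] {φ E Y : α → ℝ} {C K c τ : ℝ}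

theorem nonpos_of_eventually_mul_le {J B : ℝ} (h : ∀ᶠ τ : ℝ in atTop, τ * J ≤ B) : J ≤ 0 := by
  by_contra! hJ
  obtain ⟨τ, hle, hlt⟩ :=
    (h.and ((tendsto_id.atTop_mul_const hJ).eventually_gt_atTop B)).exists
  exact hle.not_gt hlt

theorem integral_exp_mul_le_of_absorbable (hφ : Continuous φ) (hE : Continuous E)
    (hY : Continuous Y) (hEc : HasCompactSupport E) (hYc : HasCompactSupport Y)
    (hE0 : ∀ x, 0 ≤ E x) (hY0 : ∀ x, 0 ≤ Y x) (hK : 0 ≤ K) (hτ : 0 ≤ τ)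
    (hor : ∀ x, Y x ≤ K * E x ∨ φ x ≤ -c) :
    ∫ x, Real.exp (2 * τ * φ x) * Y x ∂μ ≤
      K * (∫ x, Real.exp (2 * τ * φ x) * E x ∂μ) + Real.exp (-(2 * τ * c)) * ∫ x, Y x ∂μ := by
  have hexp : Continuous fun x => Real.exp (2 * τ * φ x) := by fun_prop
  have iE : Integrable (fun x => K * (Real.exp (2 * τ * φ x) * E x)) μ :=
    ((hexp.mul hE).integrable_of_hasCompactSupport hEc.mul_left).const_mul K
  have iY := (hY.integrable_of_hasCompactSupport (μ := μ) hYc).const_mul (Real.exp (-(2 * τ * c)))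
  rw [← integral_const_mul, ← integral_const_mul, ← integral_add iE iY]
  refine integral_mono ((hexp.mul hY).integrable_of_hasCompactSupport hYc.mul_left) (iE.add iY)
    fun x => ?_
  have hpos := Real.exp_pos (2 * τ * φ x)
  rcases hor x with h | h
  · calc Real.exp (2 * τ * φ x) * Y x ≤ Real.exp (2 * τ * φ x) * (K * E x) := by gcongr
      _ = K * (Real.exp (2 * τ * φ x) * E x) := by ring
      _ ≤ _ := le_add_of_nonneg_right (mul_nonneg (Real.exp_pos _).le (hY0 x))
  · have hle : Real.exp (2 * τ * φ x) ≤ Real.exp (-(2 * τ * c)) := by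
      rw [Real.exp_le_exp]
      linarith [mul_le_mul_of_nonneg_left h (by positivity : 0 ≤ 2 * τ)]
    exact (mul_le_mul_of_nonneg_right hle (hY0 x)).trans
      (le_add_of_nonneg_left (mul_nonneg hK (mul_nonneg hpos.le (hE0 x))))

theorem mul_integral_cutoff_mul_le (hφ : Continuous φ) (hE : Continuous E) (hY : Continuous Y)
    (hEc : HasCompactSupport E) (hYc : HasCompactSupport Y)
    (hE0 : ∀ x, 0 ≤ E x) (hY0 : ∀ x, 0 ≤ Y x) (hC : 0 ≤ C) (hK : 0 ≤ K) (hτ : 0 ≤ τ)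
    (hCK : 2 * C * K ≤ τ)
    (hcar : τ * ∫ x, Real.exp (2 * τ * φ x) * E x ∂μ ≤ C * ∫ x, Real.exp (2 * τ * φ x) * Y x ∂μ)
    (hor : ∀ x, Y x ≤ K * E x ∨ φ x ≤ -c) :
    τ * ∫ x, min 1 (max 0 (φ x + c)) * E x ∂μ ≤ 2 * C * ∫ x, Y x ∂μ := by
  have habs := integral_exp_mul_le_of_absorbable (μ := μ) hφ hE hY hEc hYc hE0 hY0 hK hτ hor
  set I := ∫ x, Real.exp (2 * τ * φ x) * E x ∂μ
  have hI : 0 ≤ I := integral_nonneg fun x => mul_nonneg (Real.exp_pos _).le (hE0 x)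
  have habsorbed : τ * I ≤ 2 * C * (Real.exp (-(2 * τ * c)) * ∫ x, Y x ∂μ) := by
    linarith [mul_le_mul_of_nonneg_left habs hC, mul_le_mul_of_nonneg_right hCK hI]
  have hcut (x : α) :
      min 1 (max 0 (φ x + c)) ≤ Real.exp (2 * τ * c) * Real.exp (2 * τ * φ x) := by
    rw [← Real.exp_add]
    rcases le_or_gt (φ x + c) 0 with h | h
    · simpa [max_eq_left h] using (Real.exp_pos _).le
    · refine (min_le_left _ _).trans (Real.one_le_exp ?_)
      linarith [show 0 ≤ 2 * τ * (φ x + c) by positivity]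
  have hle : ∫ x, min 1 (max 0 (φ x + c)) * E x ∂μ ≤ Real.exp (2 * τ * c) * I := by
    rw [← integral_const_mul]
    have hE' {w : α → ℝ} (hw : Continuous w) : Integrable (fun x => w x * E x) μ :=
      (hw.mul hE).integrable_of_hasCompactSupport hEc.mul_left
    refine integral_mono (hE' (by fun_prop)) ((hE' (by fun_prop)).const_mul _) fun x => ?_
    simpa only [mul_assoc] using mul_le_mul_of_nonneg_right (hcut x) (hE0 x)
  calc τ * ∫ x, min 1 (max 0 (φ x + c)) * E x ∂μ ≤ τ * (Real.exp (2 * τ * c) * I) := by gcongr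
    _ = Real.exp (2 * τ * c) * (τ * I) := by ring
    _ ≤ Real.exp (2 * τ * c) * (2 * C * (Real.exp (-(2 * τ * c)) * ∫ x, Y x ∂μ)) := by gcongr
    _ = 2 * C * (∫ x, Y x ∂μ) * (Real.exp (2 * τ * c) * Real.exp (-(2 * τ * c))) := by ring
    _ = 2 * C * ∫ x, Y x ∂μ := by rw [← Real.exp_add]; simp

theorem eq_zero_of_weighted_estimate [μ.IsOpenPosMeasure] (hφ : Continuous φ) (hE : Continuous E)
    (hY : Continuous Y) (hEc : HasCompactSupport E) (hYc : HasCompactSupport Y)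
    (hE0 : ∀ x, 0 ≤ E x) (hY0 : ∀ x, 0 ≤ Y x) (hC : 0 ≤ C) (hK : 0 ≤ K)
    (hcar : ∀ᶠ τ : ℝ in atTop,
      τ * ∫ x, Real.exp (2 * τ * φ x) * E x ∂μ ≤ C * ∫ x, Real.exp (2 * τ * φ x) * Y x ∂μ)
    (hor : ∀ x, Y x ≤ K * E x ∨ φ x ≤ -c) {x : α} (hx : -c < φ x) : E x = 0 := by
  set m : α → ℝ := fun x => min 1 (max 0 (φ x + c))
  have hm : Continuous m := by fun_prop
  have hm0 (x : α) : 0 ≤ m x := le_min zero_le_one (le_max_left _ _)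
  have hinteg : ∫ x, m x * E x ∂μ ≤ 0 := by
    refine nonpos_of_eventually_mul_le (B := 2 * C * ∫ x, Y x ∂μ) ?_
    filter_upwards [hcar, eventually_ge_atTop 0, eventually_ge_atTop (2 * C * K)] with τ h h0 hCK
    exact mul_integral_cutoff_mul_le hφ hE hY hEc hYc hE0 hY0 hC hK h0 hCK h hor
  by_contra hne
  have hmx : m x ≠ 0 := (lt_min one_pos (lt_max_of_lt_right (by linarith))).ne'
  exact hinteg.not_gt <| (hm.mul hE).integral_pos_of_hasCompactSupport_nonneg_nonzero
    hEc.mul_left (fun x => mul_nonneg (hm0 x) (hE0 x)) (mul_ne_zero hmx hne)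

end Absorption

section SphereWeight

variable {n : ℕ} {x x0 z : Pt n}

/-- The function `½ (|x0 - z|² - |x - z|² - |x - x0|²)`: it vanishes at `x0`, where its gradient
points towards `z`, and it is negative on the complement of the ball around `z` through `x0`,
except at `x0`. -/
def sphereWeight (x0 z x : Pt n) : ℝ :=
  1 / 2 * (∑ i, (x0 i - z i) ^ 2 - ∑ i, (x i - z i) ^ 2 - ∑ i, (x i - x0 i) ^ 2)

theorem sphereWeight_self : sphereWeight x0 z x0 = 0 := by simp [sphereWeight]

theorem contDiff_sphereWeight {k : WithTop ℕ∞} : ContDiff ℝ k (sphereWeight x0 z) := by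
  unfold sphereWeight; fun_prop

theorem pd_sum_sub_sq (z x : Pt n) (a : Fin n) :
    pd a (fun y => ∑ i, (y i - z i) ^ 2) x = 2 * (x a - z a) := by
  have hterm (i : Fin n) :
      pd a (fun y => (y i - z i) ^ 2) x = if i = a then 2 * (x i - z i) else 0 := by
    simp only [pow_two]
    rw [pd_mul (by fun_prop) (by fun_prop), pd_sub (by fun_prop) (by fun_prop), pd_coord, pd_const]
    split_ifs <;> ring
  rw [pd_sum fun i _ => by fun_prop]
  simp [hterm]

theorem pd_sphereWeight_self (a : Fin n) : pd a (sphereWeight x0 z) x0 = z a - x0 a := by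
  unfold sphereWeight
  rw [pd_const_mul _ (by fun_prop), pd_sub (by fun_prop) (by fun_prop),
    pd_sub (by fun_prop) (by fun_prop), pd_const, pd_sum_sub_sq, pd_sum_sub_sq]
  ring

theorem gradInner_sphereWeight_self (γ : Fin n → Fin n → Pt n → ℝ) :
    gradInner γ (sphereWeight x0 z) (sphereWeight x0 z) x0
      = ∑ a, ∑ b, γ a b x0 * (z - x0) a * (z - x0) b := by
  simp only [gradInner, matGrad, pd_sphereWeight_self, Pi.sub_apply, Finset.sum_mul]
  exact Finset.sum_congr rfl fun a _ => Finset.sum_congr rfl fun b _ => by ring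

theorem sq_norm_le_sum_sq (v : Pt n) : ‖v‖ ^ 2 ≤ ∑ i, v i ^ 2 := by
  have : ‖v‖ ≤ √(∑ i, v i ^ 2) := (pi_norm_le_iff_of_nonneg (Real.sqrt_nonneg _)).2 fun i =>
    Real.abs_le_sqrt (Finset.single_le_sum (f := fun i => v i ^ 2) (fun _ _ => sq_nonneg _)
      (Finset.mem_univ i))
  exact (Real.le_sqrt (norm_nonneg _) (by positivity)).1 this

theorem convexify_sphereWeight_le {l r : ℝ} (hl : -1 ≤ l * sphereWeight x0 z x) (hr : 0 ≤ r)
    (hx : ∑ i, (x0 i - z i) ^ 2 ≤ ∑ i, (x i - z i) ^ 2) (hfar : r ≤ ‖x - x0‖) :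
    convexify l (sphereWeight x0 z) x ≤ -(r ^ 2 / 4) := by
  have hsq : r ^ 2 ≤ ∑ i, (x i - x0 i) ^ 2 :=
    (pow_le_pow_left₀ hr hfar 2).trans (sq_norm_le_sum_sq _)
  have hle : sphereWeight x0 z x ≤ -(r ^ 2 / 2) := by
    unfold sphereWeight; linarith
  have hneg : sphereWeight x0 z x ≤ 0 := hle.trans (by linarith [sq_nonneg r])
  have := mul_nonpos_of_nonpos_of_nonneg hneg (by linarith : 0 ≤ 1 + l * sphereWeight x0 z x)
  unfold convexify
  linarith

end SphereWeight

section UniqueContinuation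

variable {n : ℕ} {ι : Type*} [Fintype ι] {γ : Fin n → Fin n → Pt n → ℝ} {W : ι → Pt n → ℝ}
  {χ u v : Pt n → ℝ} {x x0 z : Pt n} {K : ℝ}

theorem firstJetSq_nonneg (u : Pt n → ℝ) (x : Pt n) : 0 ≤ firstJetSq u x := by
  unfold firstJetSq; positivity

theorem firstJetSq_congr (h : u =ᶠ[nhds x] v) : firstJetSq u x = firstJetSq v x := by
  simp only [firstJetSq, h.self_of_nhds, pd_congr h]

theorem eq_zero_of_firstJetSq_eq_zero (h : firstJetSq u x = 0) : u x = 0 := by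
  have hgrad : 0 ≤ ∑ a, pd a u x ^ 2 := by positivity
  unfold firstJetSq at h
  exact pow_eq_zero_iff two_ne_zero |>.1 (le_antisymm (by linarith) (sq_nonneg _))

theorem cutoff_absorbable {U V Z : Set (Pt n)} (hV : IsOpen V) (hU : IsOpen U) (hZ : IsOpen Z)
    (hVU : V ⊆ U) (hχ : tsupport χ ⊆ U) (hχ1 : ∀ x ∈ V, χ x = 1)
    (hW : ∀ x ∈ U, ∀ b, divGrad γ (W b) x ^ 2 ≤ K * ∑ c, firstJetSq (W c) x)
    (hWZ : ∀ x ∈ U ∩ Z, ∀ b, W b x = 0) (x : Pt n) :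
    ∑ b, divGrad γ (fun y => χ y * W b y) x ^ 2 ≤
        Fintype.card ι * K * ∑ b, firstJetSq (fun y => χ y * W b y) x
      ∨ x ∈ U \ (V ∪ Z) := by
  by_cases hxV : x ∈ V
  · left
    have hnear (b : ι) : (fun y => χ y * W b y) =ᶠ[nhds x] W b := by
      filter_upwards [hV.mem_nhds hxV] with y hy
      rw [hχ1 y hy, one_mul]
    simp only [fun b => divGrad_congr (γ := γ) (hnear b), fun b => firstJetSq_congr (hnear b)]
    refine (Finset.sum_le_sum fun b _ => hW x (hVU hxV) b).trans_eq ?_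
    rw [Finset.sum_const, nsmul_eq_mul, Finset.card_univ, mul_assoc]
  by_cases hx : x ∈ U ∧ x ∉ Z
  · exact Or.inr ⟨hx.1, by simp [hxV, hx.2]⟩
  have hout (b : ι) : x ∉ tsupport fun y => χ y * W b y := by
    rw [notMem_tsupport_iff_eventuallyEq]
    by_cases hxU : x ∈ U
    · filter_upwards [hU.mem_nhds hxU, hZ.mem_nhds (not_not.1 fun h => hx ⟨hxU, h⟩)] with y hyU hyZ
      simp [hWZ y ⟨hyU, hyZ⟩ b]
    · filter_upwards [notMem_tsupport_iff_eventuallyEq.1 fun h => hxU (hχ h)] with y hy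
      simp [hy]
  left
  simp [fun b => divGrad_eq_zero_of_notMem_tsupport (γ := γ) (hout b),
    fun b => firstJetSq_eq_zero_of_notMem_tsupport (hout b)]

theorem sum_carleman_estimate {ω : Pt n → ℝ} {C r τ : ℝ} (hω : Continuous ω)
    (hγ : ∀ a b, ContDiff ℝ 1 (γ a b))
    (hcar : ∀ u : Pt n → ℝ, ContDiff ℝ 2 u → tsupport u ⊆ Metric.ball x0 r →
      τ * ∫ x, ω x * firstJetSq u x ≤ C * ∫ x, ω x * divGrad γ u x ^ 2)
    (hW : ∀ b, ContDiff ℝ 2 (W b)) (hsupp : ∀ b, tsupport (W b) ⊆ Metric.ball x0 r) :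
    τ * ∫ x, ω x * ∑ b, firstJetSq (W b) x ≤ C * ∫ x, ω x * ∑ b, divGrad γ (W b) x ^ 2 := by
  have hcpt (b : ι) : HasCompactSupport (W b) := hasCompactSupport_of_tsupport_subset_ball (hsupp b)
  have hinteg (b : ι) : Integrable fun x => ω x * divGrad γ (W b) x ^ 2 :=
    (hω.mul ((continuous_divGrad hγ (hW b)).pow 2)).integrable_of_hasCompactSupport
      (.intro (hcpt b) fun x hx => by simp [divGrad_eq_zero_of_notMem_tsupport hx])
  simp only [Finset.mul_sum]
  rw [integral_finsetSum _ fun b _ =>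
      integrable_mul_firstJetSq hω ((hW b).of_le one_le_two) (hcpt b),
    integral_finsetSum _ fun b _ => hinteg b, Finset.mul_sum, Finset.mul_sum]
  exact Finset.sum_le_sum fun b _ => hcar (W b) (hW b) (hsupp b)

theorem eq_zero_of_carleman_of_absorbable {φ : Pt n → ℝ} {C K c r τ0 : ℝ}
    (hγ : ∀ a b, ContDiff ℝ 1 (γ a b)) (hφ : Continuous φ) (hC : 0 ≤ C) (hK : 0 ≤ K)
    (hcar : ∀ τ ≥ τ0, ∀ u : Pt n → ℝ, ContDiff ℝ 2 u → tsupport u ⊆ Metric.ball x0 r →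
      τ * ∫ x, Real.exp (2 * τ * φ x) * firstJetSq u x ≤
        C * ∫ x, Real.exp (2 * τ * φ x) * divGrad γ u x ^ 2)
    (hW : ∀ b, ContDiff ℝ 2 (W b)) (hsupp : ∀ b, tsupport (W b) ⊆ Metric.ball x0 r)
    (hor : ∀ x, ∑ b, divGrad γ (W b) x ^ 2 ≤ K * ∑ b, firstJetSq (W b) x ∨ φ x ≤ -c)
    (hx : -c < φ x) (b : ι) : W b x = 0 := by
  have hE (b : ι) : Continuous (firstJetSq (W b)) :=
    continuous_firstJetSq ((hW b).of_le one_le_two)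
  have hY (b : ι) : Continuous fun x => divGrad γ (W b) x ^ 2 :=
    (continuous_divGrad hγ (hW b)).pow 2
  have hsupp_union : IsCompact (⋃ b, tsupport (W b)) :=
    isCompact_iUnion fun b => hasCompactSupport_of_tsupport_subset_ball (hsupp b)
  have hEc : HasCompactSupport fun x => ∑ b, firstJetSq (W b) x := .intro hsupp_union fun x hx => by
    simp only [Set.mem_iUnion, not_exists] at hx
    simp [fun b => firstJetSq_eq_zero_of_notMem_tsupport (hx b)]
  have hYc : HasCompactSupport fun x => ∑ b, divGrad γ (W b) x ^ 2 :=
    .intro hsupp_union fun x hx => by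
    simp only [Set.mem_iUnion, not_exists] at hx
    simp [fun b => divGrad_eq_zero_of_notMem_tsupport (γ := γ) (hx b)]
  have hsum : ∀ᶠ τ : ℝ in atTop,
      τ * ∫ x, Real.exp (2 * τ * φ x) * ∑ b, firstJetSq (W b) x ≤
        C * ∫ x, Real.exp (2 * τ * φ x) * ∑ b, divGrad γ (W b) x ^ 2 := by
    filter_upwards [eventually_ge_atTop τ0] with τ hτ
    exact sum_carleman_estimate (by fun_prop) hγ (hcar τ hτ) hW hsupp
  have hzero : ∑ b, firstJetSq (W b) x = 0 :=
    eq_zero_of_weighted_estimate hφ (continuous_finsetSum _ fun b _ => hE b)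
      (continuous_finsetSum _ fun b _ => hY b) hEc hYc
      (fun x => Finset.sum_nonneg fun b _ => firstJetSq_nonneg (W b) x)
      (fun x => Finset.sum_nonneg fun b _ => sq_nonneg _) hC hK hsum hor hx
  exact eq_zero_of_firstJetSq_eq_zero <|
    (Finset.sum_eq_zero_iff_of_nonneg fun b _ => firstJetSq_nonneg (W b) x).1 hzero b
      (Finset.mem_univ b)

theorem exists_carleman_estimate_convexify_sphereWeight (hs : ∀ a b x, γ a b x = γ b a x)
    (hγ : ∀ a b, ContDiff ℝ 2 (γ a b)) (hz : z ≠ x0)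
    (hpos : ∀ ξ : Pt n, ξ ≠ 0 → 0 < ∑ a, ∑ b, γ a b x0 * ξ a * ξ b) :
    ∃ l : ℝ, ∃ r > 0, ∃ C > 0, ∃ τ0 : ℝ, ∀ τ ≥ τ0, ∀ u : Pt n → ℝ, ContDiff ℝ 2 u →
      tsupport u ⊆ Metric.ball x0 r →
      τ * ∫ x, Real.exp (2 * τ * convexify l (sphereWeight x0 z) x) * firstJetSq u x ≤
        C * ∫ x, Real.exp (2 * τ * convexify l (sphereWeight x0 z) x) * divGrad γ u x ^ 2 := by
  obtain ⟨l, σ, hpc⟩ := exists_pseudoconvexAt_convexify hs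
    (fun a b => (hγ a b).of_le one_le_two) (contDiff_sphereWeight (x0 := x0) (z := z)) hpos
    sphereWeight_self (by rw [gradInner_sphereWeight_self]; exact hpos _ (sub_ne_zero.2 hz))
  exact ⟨l, hpc.carleman_estimate hs hγ (contDiff_convexify contDiff_sphereWeight)⟩

theorem eventually_eq_zero_of_eq_zero_in_sphere (hs : ∀ a b x, γ a b x = γ b a x)
    (hγ : ∀ a b, ContDiff ℝ 2 (γ a b)) (hz : z ≠ x0)
    (hpos : ∀ ξ : Pt n, ξ ≠ 0 → 0 < ∑ a, ∑ b, γ a b x0 * ξ a * ξ b)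
    (hW : ∀ b, ContDiff ℝ 2 (W b)) (hK : 0 ≤ K)
    (hin : ∀ᶠ x in nhds x0, ∀ b, divGrad γ (W b) x ^ 2 ≤ K * ∑ c, firstJetSq (W c) x)
    (hv : ∀ᶠ x in nhds x0, ∑ i, (x i - z i) ^ 2 < ∑ i, (x0 i - z i) ^ 2 → ∀ b, W b x = 0) :
    ∀ᶠ x in nhds x0, ∀ b, W b x = 0 := by
  obtain ⟨l, r1, hr1, C, hC, τ0, hcar⟩ :=
    exists_carleman_estimate_convexify_sphereWeight hs hγ hz hpos
  have hψ : ContDiff ℝ 0 (sphereWeight x0 z) := contDiff_sphereWeight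
  have hφ : Continuous (convexify l (sphereWeight x0 z)) := (contDiff_convexify hψ).continuous
  have hconv : ∀ᶠ x in nhds x0, -1 ≤ l * sphereWeight x0 z x :=
    (continuous_const.mul hψ.continuous).continuousAt.eventually <| le_mem_nhds <| by
      simp [sphereWeight_self]
  obtain ⟨r2, hr2, hball⟩ := Metric.eventually_nhds_iff_ball.1 (hin.and (hv.and hconv))
  obtain ⟨r, hr0, hrr1, hrr2⟩ : ∃ r, 0 < r ∧ r ≤ r1 ∧ r ≤ r2 :=
    ⟨min r1 r2, lt_min hr1 hr2, min_le_left _ _, min_le_right _ _⟩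
  let χ : ContDiffBump x0 := ⟨r / 2, 3 * r / 4, by positivity, by linarith⟩
  have hsub : Metric.ball x0 r ⊆ Metric.ball x0 r2 := Metric.ball_subset_ball hrr2
  have hsuppχ : tsupport χ ⊆ Metric.ball x0 r := by
    rw [χ.tsupport_eq]; exact Metric.closedBall_subset_ball (show 3 * r / 4 < r by linarith)
  have hχ1 (x : Pt n) (hx : x ∈ Metric.ball x0 (r / 2)) : χ x = 1 :=
    χ.one_of_mem_closedBall (Metric.ball_subset_closedBall hx)
  have hor := cutoff_absorbable (Z := {x | ∑ i, (x i - z i) ^ 2 < ∑ i, (x0 i - z i) ^ 2})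
    Metric.isOpen_ball Metric.isOpen_ball (isOpen_lt (by fun_prop) continuous_const)
    (Metric.ball_subset_ball (by linarith)) hsuppχ hχ1 (fun x hx => (hball x (hsub hx)).1)
    (fun x hx => (hball x (hsub hx.1)).2.1 hx.2)
  -- Where the cutoff spoils the differential inequality, the weight is below its value `0` at `x0`.
  have hlow (x : Pt n) (hx : x ∈ Metric.ball x0 r \ (Metric.ball x0 (r / 2) ∪
      {x | ∑ i, (x i - z i) ^ 2 < ∑ i, (x0 i - z i) ^ 2})) :
      convexify l (sphereWeight x0 z) x ≤ -((r / 2) ^ 2 / 4) := by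
    simp only [Set.mem_sdiff, Set.mem_union, not_or, Metric.mem_ball, not_lt, Set.mem_ofPred_eq,
      dist_eq_norm] at hx
    exact convexify_sphereWeight_le (hball x (hsub (mem_ball_iff_norm.2 hx.1))).2.2
      (by positivity) hx.2.2 hx.2.1
  have hgt : ∀ᶠ x in nhds x0, -((r / 2) ^ 2 / 4) < convexify l (sphereWeight x0 z) x :=
    hφ.continuousAt.eventually (lt_mem_nhds (by simp [convexify, sphereWeight_self, hr0]))
  filter_upwards [hgt, Metric.ball_mem_nhds x0 (half_pos hr0)] with x hx hxr b
  have := eq_zero_of_carleman_of_absorbable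
    (fun a b => (hγ a b).of_le one_le_two) hφ hC.le (by positivity) hcar
    (fun b => χ.contDiff.mul (hW b))
    (fun b => (tsupport_mul_subset_left.trans hsuppχ).trans (Metric.ball_subset_ball hrr1))
    (fun x => (hor x).imp_right (hlow x)) hx b
  rwa [hχ1 x hxr, one_mul] at this

theorem isCompact_setOf_sum_sub_sq_le (z : Pt n) (R : ℝ) :
    IsCompact {x : Pt n | ∑ i, (x i - z i) ^ 2 ≤ R} := by
  refine Metric.isCompact_of_isClosed_isBounded (isClosed_le (by fun_prop) continuous_const)
    ((Metric.isBounded_closedBall (x := z) (r := √R)).subset fun x hx => ?_)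
  rw [Metric.mem_closedBall, dist_eq_norm]
  exact Real.le_sqrt_of_sq_le ((sq_norm_le_sum_sq (x - z)).trans hx)

theorem eventually_eq_zero_of_eventually_eq_zero {s : Set (Pt n)} (hs : ∀ a b x, γ a b x = γ b a x)
    (hγ : ∀ a b, ContDiff ℝ 2 (γ a b)) (hso : IsOpen s)
    (hpos : ∀ x ∈ s, ∀ ξ : Pt n, ξ ≠ 0 → 0 < ∑ a, ∑ b, γ a b x * ξ a * ξ b)
    (hW : ∀ b, ContDiff ℝ 2 (W b)) (hK : 0 ≤ K)
    (hin : ∀ x ∈ s, ∀ b, divGrad γ (W b) x ^ 2 ≤ K * ∑ c, firstJetSq (W c) x)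
    (hz : ∀ᶠ x in nhds z, ∀ b, W b x = 0)
    (hzs : {x | ∑ i, (x i - z i) ^ 2 ≤ ∑ i, (x0 i - z i) ^ 2} ⊆ s) :
    ∀ᶠ x in nhds x0, ∀ b, W b x = 0 := by
  by_contra hx0
  set S : Set (Pt n) := closure {x | ∃ b, W b x ≠ 0}
  have mem_S (x : Pt n) : x ∈ S ↔ ¬ ∀ᶠ y in nhds x, ∀ b, W b y = 0 := by
    simp only [S, mem_closure_iff_frequently, Set.mem_ofPred_eq, Filter.Frequently, not_exists,
      not_not]
  obtain ⟨y, hy, hmin⟩ := ((isCompact_setOf_sum_sub_sq_le z (∑ i, (x0 i - z i) ^ 2)).inter_left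
    isClosed_closure).exists_isMinOn ⟨x0, (mem_S x0).2 hx0, by simp⟩
    (f := fun x : Pt n => ∑ i, (x i - z i) ^ 2) (by fun_prop)
  refine (mem_S y).1 hy.1 (eventually_eq_zero_of_eq_zero_in_sphere hs hγ (z := z) ?_
    (hpos y (hzs hy.2)) hW hK ?_ (.of_forall fun x hx => ?_))
  · rintro rfl
    exact (mem_S z).1 hy.1 hz
  · filter_upwards [hso.mem_nhds (hzs hy.2)] with x hx using hin x hx
  · by_contra! hne
    exact hx.not_ge (hmin ⟨subset_closure hne, hx.le.trans hy.2⟩)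

end UniqueContinuation

/-! ### Metrics and their inverses -/

section MatrixInverse

variable {n : ℕ} {E : Type*} [NormedAddCommGroup E] [NormedSpace ℝ E]
  {M : E → Matrix (Fin n) (Fin n) ℝ} {q : E} {k : WithTop ℕ∞}

theorem contDiffAt_matrix_det (hM : ∀ i j, ContDiffAt ℝ k (fun p => M p i j) q) :
    ContDiffAt ℝ k (fun p => (M p).det) q := by
  simp only [Matrix.det_apply]
  exact ContDiffAt.sum fun σ _ => (contDiffAt_prod fun i _ => hM _ _).const_smul _

theorem contDiffAt_matrix_inv_apply (hM : ∀ i j, ContDiffAt ℝ k (fun p => M p i j) q)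
    (hd : (M q).det ≠ 0) (i j : Fin n) : ContDiffAt ℝ k (fun p => (M p)⁻¹ i j) q := by
  have hadj : ContDiffAt ℝ k (fun p => (M p).adjugate i j) q := by
    simp only [Matrix.adjugate_apply]
    refine contDiffAt_matrix_det fun a b => ?_
    simp only [Matrix.updateRow_apply]
    split_ifs
    · exact contDiffAt_const
    · exact hM a b
  simp only [Matrix.inv_def, Ring.inverse_eq_inv', Matrix.smul_apply, smul_eq_mul]
  exact ((contDiffAt_matrix_det hM).inv hd).mul hadj

theorem fderiv_matrix_inv_apply (hM : ∀ i j, ContDiffAt ℝ 1 (fun p => M p i j) q)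
    (hd : (M q).det ≠ 0) (i j : Fin n) (v : E) :
    fderiv ℝ (fun p => (M p)⁻¹ i j) q v =
      -∑ a, ∑ b, (M q)⁻¹ i a * fderiv ℝ (fun p => M p a b) q v * (M q)⁻¹ b j := by
  let dM : Matrix (Fin n) (Fin n) ℝ := .of fun a b => fderiv ℝ (fun p => M p a b) q v
  let dI : Matrix (Fin n) (Fin n) ℝ := .of fun a b => fderiv ℝ (fun p => (M p)⁻¹ a b) q v
  have hIdiff (a b) : DifferentiableAt ℝ (fun p => (M p)⁻¹ a b) q :=
    (contDiffAt_matrix_inv_apply hM hd a b).differentiableAt one_ne_zero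
  have hMdiff (a b) : DifferentiableAt ℝ (fun p => M p a b) q :=
    (hM a b).differentiableAt one_ne_zero
  have product_rule : dI * M q + (M q)⁻¹ * dM = 0 := by
    ext a b
    have hconst : (fun p => ∑ c, (M p)⁻¹ a c * M p c b) =ᶠ[nhds q]
        fun _ => (1 : Matrix (Fin n) (Fin n) ℝ) a b := by
      filter_upwards [(contDiffAt_matrix_det hM).continuousAt.eventually_ne hd] with p hp
      rw [← Matrix.mul_apply, Matrix.nonsing_inv_mul _ (isUnit_iff_ne_zero.2 hp)]
    have h := congrArg (fun L : E →L[ℝ] ℝ => L v) (hconst.fderiv_eq (𝕜 := ℝ))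
    simp only [fderiv_fun_sum fun c (_ : c ∈ Finset.univ) => (hIdiff a c).fun_mul (hMdiff c b),
      fderiv_fun_mul (hIdiff a _) (hMdiff _ b), fderiv_fun_const, sum_apply, add_apply,
      smul_apply, smul_eq_mul, Pi.zero_apply, zero_apply, Finset.sum_add_distrib] at h
    rw [Matrix.zero_apply, ← h, Matrix.add_apply, Matrix.mul_apply, Matrix.mul_apply, add_comm]
    congr 1
    exact Finset.sum_congr rfl fun c _ => mul_comm _ _
  have hdI : dI = -((M q)⁻¹ * dM * (M q)⁻¹) := by
    calc dI = dI * M q * (M q)⁻¹ := by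
          rw [Matrix.mul_assoc, Matrix.mul_nonsing_inv _ (isUnit_iff_ne_zero.2 hd), Matrix.mul_one]
      _ = -((M q)⁻¹ * dM * (M q)⁻¹) := by
          rw [eq_neg_of_add_eq_zero_left product_rule, Matrix.neg_mul]
  change dI i j = _
  rw [hdI, Matrix.neg_apply, Matrix.mul_apply]
  simp only [Matrix.mul_apply, Finset.sum_mul]
  rw [Finset.sum_comm]
  rfl

end MatrixInverse

section InverseMetric

variable {n : ℕ} {m : Pt n → Fin n → Fin n → ℝ} {x : Pt n}

theorem ginv_mul (hd : (Matrix.of (m x)).det ≠ 0) (i l : Fin n) :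
    ∑ j, ginv m x i j * m x j l = if i = l then 1 else 0 := by
  rw [← Matrix.one_apply, ← Matrix.nonsing_inv_mul _ (isUnit_iff_ne_zero.2 hd), Matrix.mul_apply]
  rfl

theorem ginv_symm (hs : ∀ i j, m x i j = m x j i) (i j : Fin n) :
    ginv m x i j = ginv m x j i := by
  have htranspose : (Matrix.of (m x)).transpose = Matrix.of (m x) := Matrix.ext fun a b => hs b a
  have h := Matrix.transpose_nonsing_inv (Matrix.of (m x))
  rw [htranspose] at h
  exact congrFun (congrFun h.symm i) j

theorem sum_ginv_mul_sum_mul (hd : (Matrix.of (m x)).det ≠ 0) (v : Fin n → ℝ) (i : Fin n) :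
    ∑ j, ginv m x i j * ∑ l, m x j l * v l = v i := by
  simp only [Finset.mul_sum]
  rw [Finset.sum_comm]
  simp only [← mul_assoc, ← Finset.sum_mul, ginv_mul hd]
  simp

theorem dotProduct_mulVec_self (A : Matrix (Fin n) (Fin n) ℝ) (v : Fin n → ℝ) :
    v ⬝ᵥ A.mulVec v = ∑ i, ∑ j, A i j * v i * v j := by
  simp only [dotProduct, Matrix.mulVec, Finset.mul_sum]
  exact Finset.sum_congr rfl fun i _ => Finset.sum_congr rfl fun j _ => by ring

theorem posdef.posDef (hs : symT m) (hp : posdef m) (x : Pt n) : (Matrix.of (m x)).PosDef := by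
  refine Matrix.posDef_iff_dotProduct_mulVec.2 ⟨Matrix.ext fun i j => hs x j i, fun v hv => ?_⟩
  rw [star_trivial, dotProduct_mulVec_self]
  exact hp x v hv

theorem posdef.det_ne_zero (hs : symT m) (hp : posdef m) (x : Pt n) :
    (Matrix.of (m x)).det ≠ 0 :=
  ((Matrix.isUnit_iff_isUnit_det _).1 (hp.posDef hs x).isUnit).ne_zero

theorem posdef.ginv_pos (hs : symT m) (hp : posdef m) {ζ : Fin n → ℝ} (hζ : ζ ≠ 0) :
    0 < ∑ i, ∑ j, ginv m x i j * ζ i * ζ j := by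
  have h := (hp.posDef hs x).inv.dotProduct_mulVec_pos hζ
  rwa [star_trivial, dotProduct_mulVec_self] at h

theorem contDiffAt_ginv {E : Type*} [NormedAddCommGroup E] [NormedSpace ℝ E] {k : WithTop ℕ∞}
    {M : E → Pt n → Fin n → Fin n → ℝ} {p : E → Pt n} {q : E}
    (hM : ∀ a b, ContDiffAt ℝ k (fun q => M q (p q) a b) q)
    (hd : (Matrix.of (M q (p q))).det ≠ 0) (i j : Fin n) :
    ContDiffAt ℝ k (fun q => ginv (M q) (p q) i j) q :=
  contDiffAt_matrix_inv_apply hM hd i j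

theorem contDiff_ginv (hs : symT m) (hp : posdef m) (hm : smoothT m) (i j : Fin n) :
    ContDiff ℝ (⊤ : ℕ∞) (fun x => ginv m x i j) :=
  contDiff_iff_contDiffAt.2 fun x =>
    contDiffAt_ginv (M := fun _ => m) (fun a b => (hm a b).contDiffAt) (hp.det_ne_zero hs x) i j

theorem pd_ginv (hs : symT m) (hp : posdef m) (hm : smoothT m) (i j k : Fin n) :
    pd k (fun x => ginv m x i j) x =
      -∑ a, ∑ b, ginv m x i a * pd k (fun y => m y a b) x * ginv m x b j :=
  fderiv_matrix_inv_apply (M := fun y => Matrix.of (m y))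
    (fun a b => ((hm a b).of_le (by norm_cast)).contDiffAt) (hp.det_ne_zero hs x) i j _

theorem hasDerivAt_ginv_mpert (h : Pt n → Fin n → Fin n → ℝ)
    (hd : (Matrix.of (m x)).det ≠ 0) (i j : Fin n) :
    HasDerivAt (fun s => ginv (mpert m h s) x i j)
      (-∑ a, ∑ b, ginv m x i a * h x a b * ginv m x b j) 0 := by
  have hM (a b) : ContDiffAt ℝ 1 (fun s : ℝ => Matrix.of (mpert m h s x) a b) 0 := by
    simp only [Matrix.of_apply, mpert]; fun_prop
  have h0 : mpert m h 0 x = m x := by funext a b; simp [mpert]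
  have hd0 : (Matrix.of (mpert m h 0 x)).det ≠ 0 := by rwa [h0]
  have hderiv (a b) : fderiv ℝ (fun s : ℝ => mpert m h s x a b) 0 1 = h x a b := by
    simp [mpert]
  have hinv :=
    ((contDiffAt_matrix_inv_apply hM hd0 i j).differentiableAt one_ne_zero).hasDerivAt
  rw [← fderiv_apply_one_eq_deriv, fderiv_matrix_inv_apply hM hd0] at hinv
  simp only [Matrix.of_apply, hderiv, h0] at hinv
  exact hinv

end InverseMetric

/-! ### Divergence and Lie derivative in coordinates -/

/-- The derivative `Y u` of a function `u` along a vector field `Y`. -/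
def dirDeriv {n : ℕ} (Y : Pt n → Fin n → ℝ) (u : Pt n → ℝ) (x : Pt n) : ℝ :=
  fderiv ℝ u x (Y x)

/-- The derivative `∂ᵢ log √(det m)` of the logarithm of the volume density of the metric `m`,
written without the determinant as half the trace of `∂ᵢ m`. -/
def logDensityDeriv {n : ℕ} (m : Pt n → Fin n → Fin n → ℝ) (i : Fin n) (x : Pt n) : ℝ :=
  (1 / 2) * ∑ a, ∑ b, ginv m x a b * pd i (fun y => m y a b) x

/-- The divergence of a vector field `Y` with respect to the volume of the metric `m`, in the
coordinate form `∂ᵢ Yⁱ + Yⁱ ∂ᵢ log √(det m)`. -/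
def divergence {n : ℕ} (m : Pt n → Fin n → Fin n → ℝ) (Y : Pt n → Fin n → ℝ) (x : Pt n) : ℝ :=
  ∑ i, (pd i (fun y => Y y i) x + Y x i * logDensityDeriv m i x)

section DirectionalDerivative

variable {n : ℕ} {Y Z : Pt n → Fin n → ℝ} {u v : Pt n → ℝ} {x : Pt n}

theorem dirDeriv_eq_sum_pd : dirDeriv Y u x = ∑ k, Y x k * pd k u x :=
  fderiv_apply_eq_sum_pd u x (Y x)

theorem dirDeriv_add (hu : DifferentiableAt ℝ u x) (hv : DifferentiableAt ℝ v x) :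
    dirDeriv Y (fun y => u y + v y) x = dirDeriv Y u x + dirDeriv Y v x := by
  simp only [dirDeriv, fderiv_fun_add hu hv, add_apply]

theorem dirDeriv_mul (hu : DifferentiableAt ℝ u x) (hv : DifferentiableAt ℝ v x) :
    dirDeriv Y (fun y => u y * v y) x = dirDeriv Y u x * v x + u x * dirDeriv Y v x := by
  simp only [dirDeriv, fderiv_fun_mul hu hv, add_apply, smul_apply, smul_eq_mul]
  ring

theorem dirDeriv_sum {ι : Type*} {s : Finset ι} {u : ι → Pt n → ℝ}
    (hu : ∀ j ∈ s, DifferentiableAt ℝ (u j) x) :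
    dirDeriv Y (fun y => ∑ j ∈ s, u j y) x = ∑ j ∈ s, dirDeriv Y (u j) x := by
  simp only [dirDeriv, fderiv_fun_sum hu, sum_apply]

theorem contDiffAt_dirDeriv {k l : WithTop ℕ∞} (hY : ∀ i, ContDiffAt ℝ k (fun y => Y y i) x)
    (hu : ContDiffAt ℝ l u x) (hkl : k + 1 ≤ l) : ContDiffAt ℝ k (dirDeriv Y u) x :=
  (hu.fderiv_right hkl).clm_apply (contDiffAt_pi.2 hY)

theorem contDiff_dirDeriv {k l : WithTop ℕ∞} (hY : ∀ i, ContDiff ℝ k fun y => Y y i)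
    (hu : ContDiff ℝ l u) (hkl : k + 1 ≤ l) : ContDiff ℝ k (dirDeriv Y u) :=
  contDiff_iff_contDiffAt.2 fun _ =>
    contDiffAt_dirDeriv (fun i => (hY i).contDiffAt) hu.contDiffAt hkl

theorem pd_dirDeriv (hY : ∀ i, DifferentiableAt ℝ (fun y => Y y i) x)
    (hu : ContDiffAt ℝ 2 u x) (i : Fin n) :
    pd i (dirDeriv Y u) x = ∑ k, pd i (fun y => Y y k) x * pd k u x + dirDeriv Y (pd i u) x := by
  have hpd (k) : DifferentiableAt ℝ (pd k u) x :=
    (contDiffAt_pd (m := 1) hu (by norm_num)).differentiableAt one_ne_zero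
  have : dirDeriv Y u = fun y => ∑ k, Y y k * pd k u y := funext fun y => dirDeriv_eq_sum_pd
  rw [this, pd_sum fun k _ => (hY k).fun_mul (hpd k), dirDeriv_eq_sum_pd,
    ← Finset.sum_add_distrib]
  exact Finset.sum_congr rfl fun k _ => by rw [pd_mul (hY k) (hpd k), pd_comm hu]

end DirectionalDerivative

section Divergence

variable {n : ℕ} {g m : Pt n → Fin n → Fin n → ℝ} {X Y Z : Pt n → Fin n → ℝ} {x : Pt n}

theorem sum_chr_mul_lowerV (hd : (Matrix.of (m x)).det ≠ 0) (hs : ∀ i j, m x i j = m x j i)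
    (i j : Fin n) :
    ∑ k, chr m x k i j * lowerV m Y x k = (1 / 2) * ∑ l, (pd i (fun y => m y j l) x
      + pd j (fun y => m y i l) x - pd l (fun y => m y i j) x) * Y x l := by
  have hraise (l : Fin n) : ∑ k, ginv m x k l * lowerV m Y x k = Y x l := by
    simp only [ginv_symm hs _ l]
    exact sum_ginv_mul_sum_mul hd (Y x) l
  simp only [chr, mul_assoc, ← Finset.mul_sum, Finset.sum_mul]
  rw [Finset.sum_comm]
  congr 1
  refine Finset.sum_congr rfl fun l _ => ?_
  rw [← hraise l, Finset.mul_sum]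
  exact Finset.sum_congr rfl fun k _ => by ring

theorem cdCov_lowerV (hd : (Matrix.of (m x)).det ≠ 0) (hs : ∀ i j, m x i j = m x j i)
    (hm : ∀ i j, DifferentiableAt ℝ (fun y => m y i j) x)
    (hY : ∀ i, DifferentiableAt ℝ (fun y => Y y i) x) (i j : Fin n) :
    cdCov m (lowerV m Y) x i j = ∑ l, m x i l * pd j (fun y => Y y l) x
      + (1 / 2) * ∑ l, (pd j (fun y => m y i l) x - pd i (fun y => m y j l) x
        + pd l (fun y => m y i j) x) * Y x l := by
  have hlower : pd j (fun y => lowerV m Y y i) x =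
      ∑ l, (pd j (fun y => m y i l) x * Y x l + m x i l * pd j (fun y => Y y l) x) := by
    simp only [lowerV]
    rw [pd_sum fun l _ => (hm i l).fun_mul (hY l)]
    exact Finset.sum_congr rfl fun l _ => pd_mul (hm i l) (hY l)
  rw [cdCov, sum_chr_mul_lowerV hd hs, hlower]
  simp only [Finset.mul_sum]
  rw [← Finset.sum_sub_distrib, ← Finset.sum_add_distrib]
  exact Finset.sum_congr rfl fun l _ => by ring

theorem lieg_eq (hd : (Matrix.of (m x)).det ≠ 0) (hs : symT m)
    (hm : ∀ i j, DifferentiableAt ℝ (fun y => m y i j) x)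
    (hX : ∀ i, DifferentiableAt ℝ (fun y => X y i) x) (i j : Fin n) :
    lieg m X x i j = dirDeriv X (fun y => m y i j) x
      + ∑ k, m x k j * pd i (fun y => X y k) x + ∑ k, m x i k * pd j (fun y => X y k) x := by
  have hji : (fun y => m y j i) = fun y => m y i j := funext fun y => hs y j i
  rw [lieg, cdCov_lowerV hd (hs x) hm hX, cdCov_lowerV hd (hs x) hm hX, dirDeriv_eq_sum_pd, hji]
  simp only [hs x j, Finset.mul_sum]
  rw [← Finset.sum_add_distrib, ← Finset.sum_add_distrib, ← Finset.sum_add_distrib,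
    ← Finset.sum_add_distrib, ← Finset.sum_add_distrib]
  exact Finset.sum_congr rfl fun k _ => by ring

theorem sum_ginv_mul_dirDeriv :
    ∑ i, ∑ j, ginv m x i j * dirDeriv Y (fun y => m y i j) x =
      2 * ∑ l, Y x l * logDensityDeriv m l x := by
  simp only [logDensityDeriv, dirDeriv_eq_sum_pd, Finset.mul_sum]
  rw [Finset.sum_comm_cycle]
  exact Finset.sum_congr rfl fun l _ => Finset.sum_congr rfl fun i _ =>
    Finset.sum_congr rfl fun j _ => by ring

theorem sum_ginv_mul_lower (hd : (Matrix.of (m x)).det ≠ 0) (hs : ∀ i j, m x i j = m x j i)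
    (A : Fin n → Fin n → ℝ) :
    ∑ i, ∑ j, ginv m x i j * ∑ l, m x i l * A j l = ∑ j, A j j := by
  rw [Finset.sum_comm]
  refine Finset.sum_congr rfl fun j _ => ?_
  rw [← sum_ginv_mul_sum_mul hd (A j) j]
  exact Finset.sum_congr rfl fun i _ => by rw [ginv_symm hs]

theorem sum_ginv_mul_comm (hs : ∀ i j, m x i j = m x j i) (A : Fin n → Fin n → ℝ) :
    ∑ i, ∑ j, ginv m x i j * A i j = ∑ i, ∑ j, ginv m x i j * A j i := by
  rw [Finset.sum_comm]
  exact Finset.sum_congr rfl fun j _ => Finset.sum_congr rfl fun i _ => by rw [ginv_symm hs]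

theorem sum_ginv_mul_cdCov_lowerV (hd : (Matrix.of (m x)).det ≠ 0)
    (hs : ∀ i j, m x i j = m x j i) (hm : ∀ i j, DifferentiableAt ℝ (fun y => m y i j) x)
    (hY : ∀ i, DifferentiableAt ℝ (fun y => Y y i) x) :
    ∑ i, ∑ j, ginv m x i j * cdCov m (lowerV m Y) x i j = divergence m Y x := by
  have split (i j : Fin n) : ginv m x i j * cdCov m (lowerV m Y) x i j =
      ginv m x i j * ∑ l, m x i l * pd j (fun y => Y y l) x
      + (1 / 2) * (ginv m x i j * ∑ l, Y x l * pd j (fun y => m y i l) x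
        - ginv m x i j * ∑ l, Y x l * pd i (fun y => m y j l) x)
      + (1 / 2) * (ginv m x i j * dirDeriv Y (fun y => m y i j) x) := by
    rw [cdCov_lowerV hd hs hm hY, dirDeriv_eq_sum_pd]
    simp only [add_mul, sub_mul, Finset.sum_add_distrib, Finset.sum_sub_distrib, mul_comm (Y x _)]
    ring
  simp only [split, Finset.sum_add_distrib, Finset.sum_sub_distrib, ← Finset.mul_sum,
    sum_ginv_mul_lower hd hs, sum_ginv_mul_dirDeriv, divergence]
  rw [sum_ginv_mul_comm hs fun i j => ∑ l, Y x l * pd j (fun y => m y i l) x]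
  ring

theorem hmean_eq_divergence {f : Pt n → ℝ} (hd : (Matrix.of (m x)).det ≠ 0)
    (hs : ∀ i j, m x i j = m x j i) (hm : ∀ i j, DifferentiableAt ℝ (fun y => m y i j) x)
    (hν : ∀ i, DifferentiableAt ℝ (fun y => nuV m f y i) x) :
    hmean m f x = divergence m (nuV m f) x :=
  sum_ginv_mul_cdCov_lowerV hd hs hm hν

theorem trT_lieg (hd : (Matrix.of (m x)).det ≠ 0) (hs : ∀ i j, m x i j = m x j i)
    (hm : ∀ i j, DifferentiableAt ℝ (fun y => m y i j) x)
    (hX : ∀ i, DifferentiableAt ℝ (fun y => X y i) x) :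
    trT m (lieg m X) x = 2 * divergence m X x := by
  simp only [trT, lieg, mul_add, Finset.sum_add_distrib]
  rw [sum_ginv_mul_comm hs fun i j => cdCov m (lowerV m X) x j i,
    sum_ginv_mul_cdCov_lowerV hd hs hm hX, two_mul]

theorem contDiff_logDensityDeriv (hs : symT g) (hp : posdef g) (hg : smoothT g) (i : Fin n) :
    ContDiff ℝ (⊤ : ℕ∞) (logDensityDeriv g i) :=
  contDiff_const.mul (ContDiff.sum fun a _ => ContDiff.sum fun b _ =>
    (contDiff_ginv hs hp hg a b).mul (contDiff_infty_pd (hg a b)))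

theorem pd_logDensityDeriv (hs : symT g) (hp : posdef g) (hg : smoothT g) (i k : Fin n) :
    pd i (logDensityDeriv g k) x =
      (1 / 2) * (∑ a, ∑ b, ginv g x a b * pd i (pd k (fun y => g y a b)) x
        - ∑ a, ∑ b, ∑ c, ∑ d, ginv g x a c * pd i (fun y => g y c d) x * ginv g x d b *
          pd k (fun y => g y a b) x) := by
  have hginv (a b) : DifferentiableAt ℝ (fun y => ginv g y a b) x :=
    (contDiff_ginv hs hp hg a b).differentiable (by simp) x
  have hpd (a b) : DifferentiableAt ℝ (pd k fun y => g y a b) x :=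
    (contDiff_infty_pd (hg a b)).differentiable (by simp) x
  have hterm (a b) := (hginv a b).fun_mul (hpd a b)
  unfold logDensityDeriv
  rw [pd_const_mul _ (.fun_sum fun a _ => .fun_sum fun b _ => hterm a b),
    pd_sum fun a _ => .fun_sum fun b _ => hterm a b, ← Finset.sum_sub_distrib]
  congr 1
  refine Finset.sum_congr rfl fun a _ => ?_
  rw [pd_sum fun b _ => hterm a b, ← Finset.sum_sub_distrib]
  refine Finset.sum_congr rfl fun b _ => ?_
  rw [pd_mul (hginv a b) (hpd a b), pd_ginv hs hp hg]
  simp only [neg_mul, Finset.sum_mul]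
  ring

theorem sum_ginv_mul_mul_ginv_mul_comm (hs : ∀ i j, m x i j = m x j i)
    (A B : Fin n → Fin n → ℝ) :
    ∑ a, ∑ b, ∑ c, ∑ d, ginv m x a c * A c d * ginv m x d b * B a b =
      ∑ a, ∑ b, ∑ c, ∑ d, ginv m x a c * B c d * ginv m x d b * A a b := by
  calc _ = ∑ p : Fin n × Fin n, ∑ q : Fin n × Fin n,
          ginv m x p.1 q.1 * A q.1 q.2 * ginv m x q.2 p.2 * B p.1 p.2 := by
        simp only [Fintype.sum_prod_type]
    _ = ∑ q : Fin n × Fin n, ∑ p : Fin n × Fin n,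
          ginv m x q.1 p.1 * B p.1 p.2 * ginv m x p.2 q.2 * A q.1 q.2 := by
        rw [Finset.sum_comm]
        refine Finset.sum_congr rfl fun q _ => Finset.sum_congr rfl fun p _ => ?_
        rw [ginv_symm hs p.1, ginv_symm hs q.2]
        ring
    _ = _ := by simp only [Fintype.sum_prod_type]

theorem pd_logDensityDeriv_comm (hs : symT g) (hp : posdef g) (hg : smoothT g) (i k : Fin n) :
    pd i (logDensityDeriv g k) x = pd k (logDensityDeriv g i) x := by
  have hsecond (a b : Fin n) :
      pd i (pd k (fun y => g y a b)) x = pd k (pd i (fun y => g y a b)) x :=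
    pd_comm ((hg a b).of_le (by norm_cast)).contDiffAt
  simp only [pd_logDensityDeriv hs hp hg, hsecond]
  rw [sum_ginv_mul_mul_ginv_mul_comm (hs x) (fun c d => pd i (fun y => g y c d) x)]

theorem contDiffAt_divergence (hs : symT g) (hp : posdef g) (hg : smoothT g) {k : ℕ}
    (hZ : ∀ i, ContDiffAt ℝ (k + 1) (fun y => Z y i) x) : ContDiffAt ℝ k (divergence g Z) x :=
  ContDiffAt.sum fun i _ => (contDiffAt_pd (hZ i) le_rfl).add
    (((hZ i).of_le le_self_add).mul
      ((contDiff_logDensityDeriv hs hp hg i).of_le (by exact_mod_cast le_top)).contDiffAt)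

theorem dirDeriv_divergence (hs : symT g) (hp : posdef g) (hg : smoothT g)
    (hZ : ∀ i, ContDiffAt ℝ 2 (fun y => Z y i) x) :
    dirDeriv Y (divergence g Z) x =
      ∑ i, (dirDeriv Y (pd i fun y => Z y i) x + (dirDeriv Y (fun y => Z y i) x *
        logDensityDeriv g i x + Z x i * dirDeriv Y (logDensityDeriv g i) x)) := by
  have hpd (i) : DifferentiableAt ℝ (pd i fun y => Z y i) x :=
    (contDiffAt_pd (m := 1) (hZ i) (by norm_num)).differentiableAt one_ne_zero
  have hZ' (i) : DifferentiableAt ℝ (fun y => Z y i) x := (hZ i).differentiableAt two_ne_zero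
  have hlog (i) : DifferentiableAt ℝ (logDensityDeriv g i) x :=
    (contDiff_logDensityDeriv hs hp hg i).differentiable (by simp) x
  unfold divergence
  rw [dirDeriv_sum fun i _ => (hpd i).fun_add ((hZ' i).fun_mul (hlog i))]
  exact Finset.sum_congr rfl fun i _ => by
    rw [dirDeriv_add (hpd i) ((hZ' i).fun_mul (hlog i)), dirDeriv_mul (hZ' i) (hlog i)]

theorem divergence_bracket (hs : symT g) (hp : posdef g) (hg : smoothT g)
    (hY : ∀ i, ContDiffAt ℝ 2 (fun y => Y y i) x)
    (hZ : ∀ i, ContDiffAt ℝ 2 (fun y => Z y i) x) :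
    divergence g (fun y i => dirDeriv Y (fun z => Z z i) y - dirDeriv Z (fun z => Y z i) y) x =
      dirDeriv Y (divergence g Z) x - dirDeriv Z (divergence g Y) x := by
  have hY' (i) : DifferentiableAt ℝ (fun y => Y y i) x := (hY i).differentiableAt two_ne_zero
  have hZ' (i) : DifferentiableAt ℝ (fun y => Z y i) x := (hZ i).differentiableAt two_ne_zero
  have hYZ (i) : DifferentiableAt ℝ (dirDeriv Y fun y => Z y i) x :=
    (contDiffAt_dirDeriv (k := 1) (fun j => (hY j).of_le (by norm_num)) (hZ i)
      (by norm_num)).differentiableAt one_ne_zero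
  have hZY (i) : DifferentiableAt ℝ (dirDeriv Z fun y => Y y i) x :=
    (contDiffAt_dirDeriv (k := 1) (fun j => (hZ j).of_le (by norm_num)) (hY i)
      (by norm_num)).differentiableAt one_ne_zero
  have hfirst : ∑ i, ∑ k, pd i (fun y => Y y k) x * pd k (fun y => Z y i) x =
      ∑ i, ∑ k, pd i (fun y => Z y k) x * pd k (fun y => Y y i) x := by
    rw [Finset.sum_comm]
    exact Finset.sum_congr rfl fun i _ => Finset.sum_congr rfl fun k _ => mul_comm _ _
  have hclosed : ∑ i, Z x i * dirDeriv Y (logDensityDeriv g i) x =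
      ∑ i, Y x i * dirDeriv Z (logDensityDeriv g i) x := by
    simp only [dirDeriv_eq_sum_pd, Finset.mul_sum]
    rw [Finset.sum_comm]
    exact Finset.sum_congr rfl fun i _ => Finset.sum_congr rfl fun k _ => by
      rw [pd_logDensityDeriv_comm hs hp hg]; ring
  rw [dirDeriv_divergence hs hp hg hZ, dirDeriv_divergence hs hp hg hY]
  simp only [divergence, pd_sub (hYZ _) (hZY _), pd_dirDeriv hY' (hZ _), pd_dirDeriv hZ' (hY _),
    sub_mul, Finset.sum_add_distrib, Finset.sum_sub_distrib, hfirst, hclosed]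
  ring

end Divergence

/-! ### Linearisation along a Lie derivative -/

section Parameter

variable {n : ℕ} {F : ℝ → Pt n → ℝ} {s : ℝ} {x : Pt n}

theorem hasDerivAt_slice (hF : DifferentiableAt ℝ (fun q : ℝ × Pt n => F q.1 q.2) (s, x)) :
    HasDerivAt (fun t => F t x) (fderiv ℝ (fun q : ℝ × Pt n => F q.1 q.2) (s, x) (1, 0)) s :=
  hF.hasFDerivAt.comp_hasDerivAt (f := fun t : ℝ => (t, x)) s
    ((hasDerivAt_id s).prodMk (hasDerivAt_const s x))

theorem pd_slice (hF : DifferentiableAt ℝ (fun q : ℝ × Pt n => F q.1 q.2) (s, x)) (i : Fin n) :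
    pd i (F s) x = fderiv ℝ (fun q : ℝ × Pt n => F q.1 q.2) (s, x) (0, Pi.single i 1) := by
  have h := hF.hasFDerivAt.comp (f := fun y : Pt n => (s, y)) x (hasFDerivAt_prodMk_right s x)
  exact congrArg (fun L : Pt n →L[ℝ] ℝ => L (Pi.single i 1)) h.fderiv

theorem hasDerivAt_pd (hF : ContDiffAt ℝ 2 (fun q : ℝ × Pt n => F q.1 q.2) (s, x)) (i : Fin n) :
    HasDerivAt (fun t => pd i (F t) x) (pd i (fun y => deriv (fun t => F t y) s) x) s := by
  set U : ℝ × Pt n → ℝ := fun q => F q.1 q.2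
  have hU : ∀ᶠ q in nhds (s, x), DifferentiableAt ℝ U q :=
    (hF.eventually (by simp)).mono fun q hq => hq.differentiableAt two_ne_zero
  have hU' : DifferentiableAt ℝ (fderiv ℝ U) (s, x) :=
    (hF.fderiv_right (m := 1) (by norm_num)).differentiableAt one_ne_zero
  have happly (v : ℝ × Pt n) : DifferentiableAt ℝ (fun q => fderiv ℝ U q v) (s, x) :=
    hU'.clm_apply (differentiableAt_const v)
  have hpd : (fun t => pd i (F t) x) =ᶠ[nhds s]
      fun t => fderiv ℝ U (t, x) (0, Pi.single i 1) :=
    (((Continuous.prodMk_left x).tendsto s).eventually hU).mono fun t ht => pd_slice ht i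
  have hderiv : (fun y => deriv (fun t => F t y) s) =ᶠ[nhds x]
      fun y => fderiv ℝ U (s, y) (1, 0) :=
    (((Continuous.prodMk_right s).tendsto x).eventually hU).mono
      fun y hy => (hasDerivAt_slice hy).deriv
  have hsymm : fderiv ℝ (fderiv ℝ U) (s, x) (1, 0) (0, Pi.single i 1) =
      fderiv ℝ (fderiv ℝ U) (s, x) (0, Pi.single i 1) (1, 0) :=
    hF.isSymmSndFDerivAt (by simp) _ _
  have hslice := hasDerivAt_slice (F := fun t y => fderiv ℝ U (t, y) (0, Pi.single i 1))
    (happly (0, Pi.single i 1))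
  rw [pd_congr hderiv, pd_slice (F := fun t y => fderiv ℝ U (t, y) (1, 0)) (happly (1, 0))]
  refine (hslice.congr_of_eventuallyEq hpd).congr_deriv ?_
  simpa [fderiv_clm_apply hU' (differentiableAt_const _)] using hsymm

end Parameter

/-- The squared length of the gradient of `f` with respect to the metric `m`. -/
def gradSq {n : ℕ} (m : Pt n → Fin n → Fin n → ℝ) (f : Pt n → ℝ) (x : Pt n) : ℝ :=
  ∑ j, ∑ k, ginv m x j k * pd j f x * pd k f x

/-- The coefficients `(g^{ij} - νⁱνʲ) / |∇f|`, which vanish in the normal direction. With them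
`matGrad` is the gradient along the level sets of `f`, rescaled by `|∇f|⁻¹`. -/
def tangentialSymbol {n : ℕ} (g : Pt n → Fin n → Fin n → ℝ) (f : Pt n → ℝ) (i j : Fin n)
    (x : Pt n) : ℝ :=
  (ginv g x i j - nuV g f x i * nuV g f x j) / √(gradSq g f x)

section Gradient

variable {n : ℕ} {m : Pt n → Fin n → Fin n → ℝ} {X : Pt n → Fin n → ℝ} {f u v : Pt n → ℝ}
  {x : Pt n}

theorem gradSq_eq_dirDeriv : gradSq m f x = dirDeriv (gradV m f) f x := by
  rw [dirDeriv_eq_sum_pd]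
  simp only [gradSq, gradV, Finset.sum_mul]
  exact Finset.sum_congr rfl fun i _ => Finset.sum_congr rfl fun j _ => mul_right_comm _ _ _

theorem dirDeriv_gradV_comm (hs : ∀ i j, m x i j = m x j i) :
    dirDeriv (gradV m u) v x = dirDeriv (gradV m v) u x := by
  simp only [dirDeriv_eq_sum_pd, gradV, Finset.sum_mul]
  rw [Finset.sum_comm]
  exact Finset.sum_congr rfl fun i _ => Finset.sum_congr rfl fun j _ => by
    rw [ginv_symm hs]; ring

theorem exists_pd_ne_zero (h : fderiv ℝ f x ≠ 0) : ∃ k, pd k f x ≠ 0 := by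
  by_contra! h0
  refine h (ContinuousLinearMap.ext fun v => ?_)
  simp [fderiv_apply_eq_sum_pd, h0]

theorem gradSq_pos (hs : symT m) (hp : posdef m) (h : fderiv ℝ f x ≠ 0) : 0 < gradSq m f x := by
  obtain ⟨k, hk⟩ := exists_pd_ne_zero h
  exact hp.ginv_pos hs (ζ := fun k => pd k f x) fun h0 => hk (congrFun h0 k)

theorem sum_ginv_mul_lower_snd_mul_ginv (hs : ∀ i j, m x i j = m x j i)
    (hd : (Matrix.of (m x)).det ≠ 0) (A : Fin n → Fin n → ℝ) (i j : Fin n) :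
    ∑ a, ∑ b, ginv m x i a * (∑ k, m x a k * A b k) * ginv m x b j =
      ∑ b, ginv m x j b * A b i := by
  rw [Finset.sum_comm]
  refine Finset.sum_congr rfl fun b _ => ?_
  rw [← Finset.sum_mul, sum_ginv_mul_sum_mul hd, ginv_symm hs, mul_comm]

theorem sum_ginv_mul_lower_fst_mul_ginv (hs : ∀ i j, m x i j = m x j i)
    (hd : (Matrix.of (m x)).det ≠ 0) (A : Fin n → Fin n → ℝ) (i j : Fin n) :
    ∑ a, ∑ b, ginv m x i a * (∑ k, m x k b * A a k) * ginv m x b j =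
      ∑ a, ginv m x i a * A a j := by
  refine Finset.sum_congr rfl fun a _ => ?_
  simp_rw [mul_assoc]
  rw [← Finset.mul_sum, ← sum_ginv_mul_sum_mul hd (A a) j]
  congr 1
  refine Finset.sum_congr rfl fun b _ => ?_
  simp only [ginv_symm hs b j, hs _ b]
  ring

theorem hasDerivAt_ginv_mpert_lieg (hs : symT m) (hp : posdef m) (hm : smoothT m)
    (hX : ∀ i, DifferentiableAt ℝ (fun y => X y i) x) (i j : Fin n) :
    HasDerivAt (fun s => ginv (mpert m (lieg m X) s) x i j)
      (dirDeriv X (fun y => ginv m y i j) x - gradV m (fun y => X y j) x i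
        - gradV m (fun y => X y i) x j) 0 := by
  have hd := hp.det_ne_zero hs x
  have hm1 (a b) : ContDiffAt ℝ 1 (fun y => m y a b) x :=
    ((hm a b).of_le (by norm_cast)).contDiffAt
  have hfirst : dirDeriv X (fun y => ginv m y i j) x =
      -∑ a, ∑ b, ginv m x i a * dirDeriv X (fun y => m y a b) x * ginv m x b j :=
    fderiv_matrix_inv_apply (M := fun y => Matrix.of (m y)) hm1 hd i j (X x)
  refine (hasDerivAt_ginv_mpert (lieg m X) hd i j).congr_deriv ?_
  rw [hfirst, gradV, gradV,
    ← sum_ginv_mul_lower_fst_mul_ginv (hs x) hd fun a k => pd a (fun y => X y k) x,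
    ← sum_ginv_mul_lower_snd_mul_ginv (hs x) hd fun a k => pd a (fun y => X y k) x]
  simp only [lieg_eq hd hs (fun a b => (hm1 a b).differentiableAt one_ne_zero) hX, mul_add,
    add_mul, Finset.sum_add_distrib]
  ring

theorem dirDeriv_pd (hX : ∀ i, DifferentiableAt ℝ (fun y => X y i) x)
    (hu : ContDiffAt ℝ 2 u x) (j : Fin n) :
    dirDeriv X (pd j u) x =
      pd j (dirDeriv X u) x - ∑ k, pd j (fun y => X y k) x * pd k u x := by
  rw [pd_dirDeriv hX hu]; ring

theorem dirDeriv_gradV (hs : symT m) (hp : posdef m) (hm : smoothT m)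
    (hX : ∀ i, DifferentiableAt ℝ (fun y => X y i) x) (hf : ContDiffAt ℝ 2 f x) (i : Fin n) :
    dirDeriv X (fun y => gradV m f y i) x =
      ∑ j, (dirDeriv X (fun y => ginv m y i j) x - gradV m (fun y => X y j) x i) * pd j f x
        + gradV m (dirDeriv X f) x i := by
  have hginv (j) : DifferentiableAt ℝ (fun y => ginv m y i j) x :=
    (contDiff_ginv hs hp hm i j).differentiable (by simp) x
  have hpd (j) : DifferentiableAt ℝ (pd j f) x :=
    (contDiffAt_pd (m := 1) hf (by norm_num)).differentiableAt one_ne_zero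
  have hswap : ∑ j, ginv m x i j * ∑ k, pd j (fun y => X y k) x * pd k f x =
      ∑ k, gradV m (fun y => X y k) x i * pd k f x := by
    simp only [gradV, Finset.mul_sum, Finset.sum_mul]
    rw [Finset.sum_comm]
    simp only [mul_assoc]
  change dirDeriv X (fun y => ∑ j, ginv m y i j * pd j f y) x = _ + ∑ j, ginv m x i j * _
  rw [dirDeriv_sum fun j _ => (hginv j).fun_mul (hpd j)]
  simp only [dirDeriv_mul (hginv _) (hpd _), dirDeriv_pd hX hf, mul_sub, sub_mul,
    Finset.sum_add_distrib, Finset.sum_sub_distrib, hswap]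
  ring

theorem hasDerivAt_gradV_mpert_lieg (hs : symT m) (hp : posdef m) (hm : smoothT m)
    (hX : ∀ i, DifferentiableAt ℝ (fun y => X y i) x) (hf : ContDiffAt ℝ 2 f x) (i : Fin n) :
    HasDerivAt (fun s => gradV (mpert m (lieg m X) s) f x i)
      (dirDeriv X (fun y => gradV m f y i) x - dirDeriv (gradV m f) (fun y => X y i) x
        - gradV m (dirDeriv X f) x i) 0 := by
  refine HasDerivAt.congr_deriv (HasDerivAt.fun_sum fun j _ =>
    (hasDerivAt_ginv_mpert_lieg hs hp hm hX i j).mul_const (pd j f x)) ?_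
  rw [dirDeriv_gradV hs hp hm hX hf, dirDeriv_gradV_comm (hs x), dirDeriv_eq_sum_pd]
  simp only [sub_mul, Finset.sum_sub_distrib]
  ring

theorem contDiff_gradV (hs : symT m) (hp : posdef m) (hm : smoothT m)
    (hf : ContDiff ℝ (⊤ : ℕ∞) f) (i : Fin n) :
    ContDiff ℝ (⊤ : ℕ∞) fun y => gradV m f y i :=
  ContDiff.sum fun j _ => (contDiff_ginv hs hp hm i j).mul (contDiff_infty_pd hf)

theorem hasDerivAt_gradSq_mpert_lieg (hs : symT m) (hp : posdef m) (hm : smoothT m)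
    (hX : ∀ i, DifferentiableAt ℝ (fun y => X y i) x) (hf : ContDiff ℝ (⊤ : ℕ∞) f) :
    HasDerivAt (fun s => gradSq (mpert m (lieg m X) s) f x)
      (dirDeriv X (gradSq m f) x - 2 * dirDeriv (gradV m f) (dirDeriv X f) x) 0 := by
  have hf2 : ContDiffAt ℝ 2 f x := (hf.of_le (by norm_cast)).contDiffAt
  have hgrad (i) : DifferentiableAt ℝ (fun y => gradV m f y i) x :=
    (contDiff_gradV hs hp hm hf i).differentiable (by simp) x
  have hpd (i) : DifferentiableAt ℝ (pd i f) x :=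
    (contDiff_infty_pd hf).differentiable (by simp) x
  have hgradSq (m : Pt n → Fin n → Fin n → ℝ) :
      gradSq m f = fun y => ∑ i, gradV m f y i * pd i f y :=
    funext fun y => by rw [gradSq_eq_dirDeriv, dirDeriv_eq_sum_pd]
  have hswap : ∑ i, gradV m f x i * ∑ k, pd i (fun y => X y k) x * pd k f x =
      ∑ k, dirDeriv (gradV m f) (fun y => X y k) x * pd k f x := by
    simp only [dirDeriv_eq_sum_pd, Finset.mul_sum, Finset.sum_mul]
    rw [Finset.sum_comm]
    simp only [mul_assoc]
  simp only [hgradSq]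
  refine HasDerivAt.congr_deriv (HasDerivAt.fun_sum fun i _ =>
    (hasDerivAt_gradV_mpert_lieg hs hp hm hX hf2 i).mul_const (pd i f x)) ?_
  rw [dirDeriv_sum fun i _ => (hgrad i).fun_mul (hpd i)]
  simp only [dirDeriv_mul (hgrad _) (hpd _), dirDeriv_pd hX hf2, mul_sub, sub_mul,
    Finset.sum_add_distrib, Finset.sum_sub_distrib, hswap]
  rw [two_mul, ← dirDeriv_eq_sum_pd (u := f), dirDeriv_gradV_comm (hs x),
    ← dirDeriv_eq_sum_pd (Y := gradV m f), dirDeriv_gradV_comm (hs x)]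
  ring

end Gradient

section UnitNormal

variable {n : ℕ} {g : Pt n → Fin n → Fin n → ℝ} {X : Pt n → Fin n → ℝ} {f : Pt n → ℝ} {x : Pt n}

section Regularity

variable {E : Type*} [NormedAddCommGroup E] [NormedSpace ℝ E] {k : WithTop ℕ∞}
  {M : E → Pt n → Fin n → Fin n → ℝ} {p : E → Pt n} {q : E}

theorem contDiffAt_gradSq_family (hM : ∀ a b, ContDiffAt ℝ k (fun q => M q (p q) a b) q)
    (hd : (Matrix.of (M q (p q))).det ≠ 0)
    (hf : ∀ j, ContDiffAt ℝ k (fun q => pd j f (p q)) q) :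
    ContDiffAt ℝ k (fun q => gradSq (M q) f (p q)) q :=
  ContDiffAt.sum fun i _ => ContDiffAt.sum fun j _ =>
    ((contDiffAt_ginv hM hd i j).mul (hf i)).mul (hf j)

theorem contDiffAt_nuV_family (hM : ∀ a b, ContDiffAt ℝ k (fun q => M q (p q) a b) q)
    (hd : (Matrix.of (M q (p q))).det ≠ 0)
    (hf : ∀ j, ContDiffAt ℝ k (fun q => pd j f (p q)) q)
    (h0 : 0 < gradSq (M q) f (p q)) (i : Fin n) :
    ContDiffAt ℝ k (fun q => nuV (M q) f (p q) i) q :=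
  (ContDiffAt.sum fun j _ => (contDiffAt_ginv hM hd i j).mul (hf j)).div
    ((contDiffAt_gradSq_family hM hd hf).sqrt h0.ne') (Real.sqrt_pos.2 h0).ne'

theorem contDiff_gradSq (hs : symT g) (hp : posdef g) (hg : smoothT g)
    (hf : ContDiff ℝ (⊤ : ℕ∞) f) : ContDiff ℝ (⊤ : ℕ∞) (gradSq g f) :=
  contDiff_iff_contDiffAt.2 fun x => contDiffAt_gradSq_family (M := fun _ => g) (p := id)
    (fun a b => (hg a b).contDiffAt) (hp.det_ne_zero hs x)
    fun _ => (contDiff_infty_pd hf).contDiffAt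

theorem contDiffAt_nuV (hs : symT g) (hp : posdef g) (hg : smoothT g)
    (hf : ContDiff ℝ (⊤ : ℕ∞) f) (hreg : fderiv ℝ f x ≠ 0) (i : Fin n) :
    ContDiffAt ℝ (⊤ : ℕ∞) (fun y => nuV g f y i) x :=
  contDiffAt_nuV_family (M := fun _ => g) (p := id) (fun a b => (hg a b).contDiffAt)
    (hp.det_ne_zero hs x) (fun _ => (contDiff_infty_pd hf).contDiffAt) (gradSq_pos hs hp hreg) i

theorem contDiffAt_tangentialSymbol (hs : symT g) (hp : posdef g) (hg : smoothT g)
    (hf : ContDiff ℝ (⊤ : ℕ∞) f) (hreg : fderiv ℝ f x ≠ 0) (i j : Fin n) :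
    ContDiffAt ℝ (⊤ : ℕ∞) (tangentialSymbol g f i j) x := by
  have hpos := gradSq_pos hs hp hreg
  exact ((contDiff_ginv hs hp hg i j).contDiffAt.sub ((contDiffAt_nuV hs hp hg hf hreg i).mul
    (contDiffAt_nuV hs hp hg hf hreg j))).div
    ((contDiff_gradSq hs hp hg hf).contDiffAt.sqrt hpos.ne') (Real.sqrt_pos.2 hpos).ne'

theorem contDiffAt_matGrad_tangentialSymbol (hs : symT g) (hp : posdef g) (hg : smoothT g)
    (hf : ContDiff ℝ (⊤ : ℕ∞) f) (hreg : fderiv ℝ f x ≠ 0) {k : ℕ} {u : Pt n → ℝ}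
    (hu : ContDiffAt ℝ (k + 1) u x) (i : Fin n) :
    ContDiffAt ℝ k (matGrad (tangentialSymbol g f) u i) x :=
  ContDiffAt.sum fun j _ => ((contDiffAt_tangentialSymbol hs hp hg hf hreg i j).of_le
    (by exact_mod_cast le_top)).mul (contDiffAt_pd hu le_rfl)

theorem contDiff_lieg (hs : symT g) (hp : posdef g) (hg : smoothT g)
    (hX : ∀ i, ContDiff ℝ 3 fun y => X y i) (i j : Fin n) :
    ContDiff ℝ 2 fun y => lieg g X y i j := by
  have hg2 (a b) : ContDiff ℝ 2 fun y => g y a b := (hg a b).of_le (by norm_cast)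
  have hX2 (a) : ContDiff ℝ 2 fun y => X y a := (hX a).of_le (by norm_num)
  have hpd (a b) : ContDiff ℝ 2 (pd a fun y => X y b) := contDiff_pd (hX b) (by norm_num)
  have hlieg : (fun y => lieg g X y i j) = _ := funext fun y =>
    lieg_eq (hp.det_ne_zero hs y) hs (fun a b => (hg a b).differentiable (by simp) y)
      (fun a => (hX a).differentiable (by norm_num) y) i j
  rw [hlieg]
  exact ((contDiff_dirDeriv hX2 ((hg i j).of_le (m := 3) (by norm_cast)) (by norm_num)).add
    (ContDiff.sum fun k _ => (hg2 k j).mul (hpd i k))).add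
    (ContDiff.sum fun k _ => (hg2 i k).mul (hpd j k))

end Regularity

theorem dirDeriv_div_sqrt {Y : Pt n → Fin n → ℝ} {u R : Pt n → ℝ} (hu : DifferentiableAt ℝ u x)
    (hR : DifferentiableAt ℝ R x) (h0 : 0 < R x) :
    dirDeriv Y (fun y => u y / √(R y)) x =
      (dirDeriv Y u x * √(R x) - u x * (dirDeriv Y R x / (2 * √(R x)))) / √(R x) ^ 2 := by
  have hinv : HasFDerivAt (fun y => (√(R y))⁻¹) _ x := ((Real.hasDerivAt_sqrt h0.ne').fun_inv
    (Real.sqrt_pos.2 h0).ne').comp_hasFDerivAt x hR.hasFDerivAt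
  have hinvDeriv : dirDeriv Y (fun y => (√(R y))⁻¹) x =
      -(1 / (2 * √(R x))) / √(R x) ^ 2 * dirDeriv Y R x :=
    congrArg (fun L : Pt n →L[ℝ] ℝ => L (Y x)) hinv.fderiv
  have hroot : √(R x) ≠ 0 := (Real.sqrt_pos.2 h0).ne'
  simp only [div_eq_mul_inv (u _)]
  rw [dirDeriv_mul hu hinv.differentiableAt, hinvDeriv]
  field_simp
  ring

theorem dirDeriv_nuV (u : Pt n → ℝ) :
    dirDeriv (nuV g f) u x = dirDeriv (gradV g f) u x / √(gradSq g f x) := by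
  simp only [dirDeriv_eq_sum_pd, Finset.sum_div]
  exact Finset.sum_congr rfl fun i _ => div_mul_eq_mul_div _ _ _

theorem sum_tangentialSymbol_mul (ξ : Fin n → ℝ) (i : Fin n) :
    ∑ j, tangentialSymbol g f i j x * ξ j =
      (∑ j, ginv g x i j * ξ j - nuV g f x i * ∑ j, nuV g f x j * ξ j) / √(gradSq g f x) := by
  simp only [tangentialSymbol, div_mul_eq_mul_div, ← Finset.sum_div, sub_mul,
    Finset.sum_sub_distrib, Finset.mul_sum, mul_assoc]

theorem matGrad_tangentialSymbol (u : Pt n → ℝ) (i : Fin n) :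
    matGrad (tangentialSymbol g f) u i x =
      (gradV g u x i - nuV g f x i * dirDeriv (nuV g f) u x) / √(gradSq g f x) := by
  rw [matGrad, sum_tangentialSymbol_mul, dirDeriv_eq_sum_pd, gradV]

theorem mpert_zero (h : Pt n → Fin n → Fin n → ℝ) : mpert g h 0 = g := by
  funext y a b
  simp [mpert]

theorem hasDerivAt_nuV_mpert_lieg (hs : symT g) (hp : posdef g) (hg : smoothT g)
    (hX : ∀ i, DifferentiableAt ℝ (fun y => X y i) x) (hf : ContDiff ℝ (⊤ : ℕ∞) f)
    (hreg : fderiv ℝ f x ≠ 0) (i : Fin n) :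
    HasDerivAt (fun s => nuV (mpert g (lieg g X) s) f x i)
      (dirDeriv X (fun y => nuV g f y i) x - dirDeriv (nuV g f) (fun y => X y i) x
        - matGrad (tangentialSymbol g f) (dirDeriv X f) i x) 0 := by
  have hpos : 0 < gradSq g f x := gradSq_pos hs hp hreg
  have hroot : √(gradSq g f x) ≠ 0 := (Real.sqrt_pos.2 hpos).ne'
  have hR : DifferentiableAt ℝ (gradSq g f) x :=
    (contDiff_gradSq hs hp hg hf).differentiable (by simp) x
  have hgrad : DifferentiableAt ℝ (fun y => gradV g f y i) x :=
    (contDiff_gradV hs hp hg hf i).differentiable (by simp) x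
  have hlin := (hasDerivAt_gradV_mpert_lieg hs hp hg hX
    (hf.of_le (by norm_cast)).contDiffAt i).fun_div
    ((hasDerivAt_gradSq_mpert_lieg hs hp hg hX hf).sqrt (by rw [mpert_zero]; exact hpos.ne'))
    (by rw [mpert_zero]; exact hroot)
  have hnormal : (fun y => nuV g f y i) = fun y => gradV g f y i / √(gradSq g f y) := rfl
  have hcomponent : nuV g f x i = gradV g f x i / √(gradSq g f x) := rfl
  refine hlin.congr_deriv ?_
  rw [hnormal, dirDeriv_div_sqrt hgrad hR hpos, matGrad_tangentialSymbol, dirDeriv_nuV,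
    dirDeriv_nuV, hcomponent, mpert_zero]
  field_simp
  ring

theorem hasDerivAt_logDensityDeriv_mpert {h : Pt n → Fin n → Fin n → ℝ} (hs : symT g)
    (hp : posdef g) (hg : smoothT g) (hh : ∀ a b, DifferentiableAt ℝ (fun y => h y a b) x)
    (i : Fin n) :
    HasDerivAt (fun s => logDensityDeriv (mpert g h s) i x) ((1 / 2) * pd i (trT g h) x) 0 := by
  have hginv (a b) : DifferentiableAt ℝ (fun y => ginv g y a b) x :=
    (contDiff_ginv hs hp hg a b).differentiable (by simp) x
  have hpert (a b) : HasDerivAt (fun s => pd i (fun y => mpert g h s y a b) x)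
      (pd i (fun y => h y a b) x) 0 := by
    have hlinear (s : ℝ) : pd i (fun y => mpert g h s y a b) x =
        pd i (fun y => g y a b) x + s * pd i (fun y => h y a b) x := by
      simp only [mpert]
      rw [pd_add ((hg a b).differentiable (by simp) x) ((hh a b).const_mul s),
        pd_const_mul s (hh a b)]
    simp only [hlinear]
    simpa using ((hasDerivAt_id (0 : ℝ)).mul_const (pd i (fun y => h y a b) x)).const_add
      (pd i (fun y => g y a b) x)
  refine HasDerivAt.congr_deriv ((HasDerivAt.fun_sum fun a _ => HasDerivAt.fun_sum fun b _ =>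
    (hasDerivAt_ginv_mpert h (hp.det_ne_zero hs x) a b).fun_mul (hpert a b)).const_mul _) ?_
  have hcross : ∑ a, ∑ b, (∑ c, ∑ d, ginv g x a c * h x c d * ginv g x d b) *
      pd i (fun y => g y a b) x = -∑ a, ∑ b, pd i (fun y => ginv g y a b) x * h x a b := by
    simp only [pd_ginv hs hp hg, neg_mul, Finset.sum_neg_distrib, neg_neg, Finset.sum_mul]
    exact sum_ginv_mul_mul_ginv_mul_comm (hs x) _ _
  unfold trT
  rw [pd_sum fun a _ => .fun_sum fun b _ => (hginv a b).fun_mul (hh a b)]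
  simp only [pd_sum fun b _ => (hginv _ b).fun_mul (hh _ b), pd_mul (hginv _ _) (hh _ _),
    Finset.sum_add_distrib, neg_mul, Finset.sum_neg_distrib, hcross, mpert_zero]
  ring

theorem hasDerivAt_logDensityDeriv_mpert_lieg (hs : symT g) (hp : posdef g) (hg : smoothT g)
    (hX : ∀ i, ContDiff ℝ 3 fun y => X y i) (i : Fin n) :
    HasDerivAt (fun s => logDensityDeriv (mpert g (lieg g X) s) i x)
      (pd i (divergence g X) x) 0 := by
  have hdiv : trT g (lieg g X) = fun y => 2 * divergence g X y := funext fun y =>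
    trT_lieg (hp.det_ne_zero hs y) (hs y) (fun a b => (hg a b).differentiable (by simp) y)
      fun a => (hX a).differentiable (by norm_num) y
  have hdivDiff : DifferentiableAt ℝ (divergence g X) x := by
    refine ContDiffAt.differentiableAt (n := 1) ?_ one_ne_zero
    exact_mod_cast contDiffAt_divergence (k := 1) hs hp hg fun i =>
      ((hX i).of_le (by norm_num)).contDiffAt
  refine (hasDerivAt_logDensityDeriv_mpert hs hp hg (fun a b =>
    (contDiff_lieg hs hp hg hX a b).differentiable two_ne_zero x) i).congr_deriv ?_
  rw [hdiv, pd_const_mul _ hdivDiff]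
  ring

theorem contDiffAt_nuV_mpert_lieg (hs : symT g) (hp : posdef g) (hg : smoothT g)
    (hX : ∀ i, ContDiff ℝ 3 fun y => X y i) (hf : ContDiff ℝ (⊤ : ℕ∞) f)
    (hreg : fderiv ℝ f x ≠ 0) (i : Fin n) :
    ContDiffAt ℝ 2 (fun q : ℝ × Pt n => nuV (mpert g (lieg g X) q.1) f q.2 i) (0, x) := by
  refine contDiffAt_nuV_family (fun a b => ?_) (by rw [mpert_zero]; exact hp.det_ne_zero hs x)
    (fun j => ?_) (by rw [mpert_zero]; exact gradSq_pos hs hp hreg) i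
  · have hg2 : ContDiff ℝ 2 fun y => g y a b := (hg a b).of_le (by norm_cast)
    have := contDiff_lieg hs hp hg hX a b
    unfold mpert
    fun_prop
  · have : ContDiff ℝ 2 (pd j f) := (contDiff_infty_pd hf).of_le (by norm_cast)
    fun_prop

theorem hmean_mpert_lieg_eventuallyEq (hs : symT g) (hp : posdef g) (hg : smoothT g)
    (hX : ∀ i, ContDiff ℝ 3 fun y => X y i) (hf : ContDiff ℝ (⊤ : ℕ∞) f)
    (hreg : fderiv ℝ f x ≠ 0) :
    (fun s => hmean (mpert g (lieg g X) s) f x) =ᶠ[nhds 0] fun s =>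
      divergence (mpert g (lieg g X) s) (nuV (mpert g (lieg g X) s) f) x := by
  have hdet : ∀ᶠ s in nhds (0 : ℝ), (Matrix.of (mpert g (lieg g X) s x)).det ≠ 0 := by
    refine ContinuousAt.eventually_ne (contDiffAt_matrix_det (k := 0) fun a b => ?_).continuousAt
      ?_
    · simp only [Matrix.of_apply, mpert]; fun_prop
    · simpa only [mpert_zero] using hp.det_ne_zero hs x
  have hnu : ∀ᶠ s in nhds (0 : ℝ), ∀ i, DifferentiableAt ℝ
      (fun q : ℝ × Pt n => nuV (mpert g (lieg g X) q.1) f q.2 i) (s, x) :=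
    eventually_all.2 fun i => ((Continuous.prodMk_left x).tendsto 0).eventually
      (((contDiffAt_nuV_mpert_lieg hs hp hg hX hf hreg i).eventually (by simp)).mono
        fun q hq => hq.differentiableAt two_ne_zero)
  filter_upwards [hdet, hnu] with s hs_det hs_nu
  refine hmean_eq_divergence hs_det (fun i j => ?_) (fun i j => ?_) fun i => ?_
  · simp only [mpert, hs x i j, lieg, add_comm (cdCov g (lowerV g X) x i j)]
  · exact ((hg i j).differentiable (by simp) x).fun_add
      (((contDiff_lieg hs hp hg hX i j).differentiable two_ne_zero x).const_mul s)
  · exact (hs_nu i).comp (f := fun y : Pt n => (s, y)) x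
      (hasFDerivAt_prodMk_right s x).differentiableAt

theorem hasDerivAt_divergence_nuV_mpert_lieg (hs : symT g) (hp : posdef g) (hg : smoothT g)
    (hX : ∀ i, ContDiff ℝ 3 fun y => X y i) (hf : ContDiff ℝ (⊤ : ℕ∞) f)
    (hreg : fderiv ℝ f x ≠ 0) :
    HasDerivAt (fun s => divergence (mpert g (lieg g X) s) (nuV (mpert g (lieg g X) s) f) x)
      (divergence g (fun y i => dirDeriv X (fun z => nuV g f z i) y
          - dirDeriv (nuV g f) (fun z => X z i) y
          - matGrad (tangentialSymbol g f) (dirDeriv X f) i y) x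
        + dirDeriv (nuV g f) (divergence g X) x) 0 := by
  have hXdiff (i y) : DifferentiableAt ℝ (fun y => X y i) y :=
    (hX i).differentiable (by norm_num) y
  have hlinNormal (i : Fin n) : (fun y => deriv (fun s => nuV (mpert g (lieg g X) s) f y i) 0)
      =ᶠ[nhds x] fun y => dirDeriv X (fun z => nuV g f z i) y
        - dirDeriv (nuV g f) (fun z => X z i) y
        - matGrad (tangentialSymbol g f) (dirDeriv X f) i y := by
    filter_upwards [(hf.continuous_fderiv (by simp)).continuousAt.eventually_ne hreg] with y hy
    exact (hasDerivAt_nuV_mpert_lieg hs hp hg (fun i => hXdiff i y) hf hy i).deriv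
  have hderiv := HasDerivAt.fun_sum (u := Finset.univ) fun i _ =>
    (hasDerivAt_pd (F := fun s y => nuV (mpert g (lieg g X) s) f y i)
      (contDiffAt_nuV_mpert_lieg hs hp hg hX hf hreg i) i).fun_add
      ((hasDerivAt_nuV_mpert_lieg hs hp hg (fun i => hXdiff i x) hf hreg i).fun_mul
        (hasDerivAt_logDensityDeriv_mpert_lieg (x := x) hs hp hg hX i))
  refine hderiv.congr_deriv ?_
  simp only [pd_congr (hlinNormal _), mpert_zero, divergence, Finset.sum_add_distrib]
  rw [dirDeriv_eq_sum_pd (Y := nuV g f) (u := divergence g X), add_assoc]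

/-- Naturality of the mean curvature under the flow of `X`: pulling back the metric amounts to
moving the level set, and what remains besides `X H` is the variation caused by changing the
defining function `f` at the rate `X f`. -/
theorem hmeanLin_lieg (hs : symT g) (hp : posdef g) (hg : smoothT g)
    (hX : ∀ i, ContDiff ℝ 3 fun y => X y i) (hf : ContDiff ℝ (⊤ : ℕ∞) f)
    (hreg : fderiv ℝ f x ≠ 0) :
    hmeanLin g (lieg g X) f x = dirDeriv X (divergence g (nuV g f)) x
      - divergence g (fun y i => matGrad (tangentialSymbol g f) (dirDeriv X f) i y) x := by
  have hν (i) : ContDiffAt ℝ 2 (fun y => nuV g f y i) x :=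
    (contDiffAt_nuV hs hp hg hf hreg i).of_le (by norm_cast)
  have hX2 (i) : ContDiffAt ℝ 2 (fun y => X y i) x := ((hX i).of_le (by norm_num)).contDiffAt
  have hbracket (i) : DifferentiableAt ℝ (fun y => dirDeriv X (fun z => nuV g f z i) y
      - dirDeriv (nuV g f) (fun z => X z i) y) x :=
    ((contDiffAt_dirDeriv (k := 1) (fun j => (hX2 j).of_le (by norm_num)) (hν i)
      (by norm_num)).sub (contDiffAt_dirDeriv (fun j => (hν j).of_le (by norm_num)) (hX2 i)
      (by norm_num))).differentiableAt one_ne_zero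
  have hXf : ContDiffAt ℝ (1 + 1) (dirDeriv X f) x :=
    contDiffAt_dirDeriv (fun j => (hX2 j).of_le (by norm_num))
      ((hf.of_le (m := 3) (by norm_cast)).contDiffAt) (by norm_num)
  have hdeviation (i) : DifferentiableAt ℝ
      (matGrad (tangentialSymbol g f) (dirDeriv X f) i) x :=
    ContDiffAt.differentiableAt
      (contDiffAt_matGrad_tangentialSymbol (k := 1) hs hp hg hf hreg hXf i) one_ne_zero
  rw [hmeanLin, (hmean_mpert_lieg_eventuallyEq hs hp hg hX hf hreg).deriv_eq,
    (hasDerivAt_divergence_nuV_mpert_lieg hs hp hg hX hf hreg).deriv,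
    sub_eq_iff_eq_add'.1 (divergence_bracket hs hp hg hX2 hν).symm]
  simp only [divergence, pd_sub (hbracket _) (hdeviation _), sub_mul, Finset.sum_add_distrib,
    Finset.sum_sub_distrib]
  ring

end UnitNormal

/-! ### Graph charts of a level set -/

section GraphChart

variable {n : ℕ} {f : Pt n → ℝ} {k : Fin n}

/-- The map replacing the `k`-th coordinate by the value of `f`; where `pd k f ≠ 0` it straightens
the level sets of `f` into hyperplanes. -/
def straighten (f : Pt n → ℝ) (k : Fin n) (x : Pt n) : Pt n :=
  Function.update x k (f x)

theorem contDiff_straighten {m : WithTop ℕ∞} (hf : ContDiff ℝ m f) :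
    ContDiff ℝ m (straighten f k) := by
  refine contDiff_pi.2 fun i => ?_
  rcases eq_or_ne i k with rfl | h
  · simpa only [straighten, Function.update_self] using hf
  · simpa only [straighten, Function.update_of_ne h] using contDiff_apply ℝ ℝ i

theorem fderiv_straighten_apply {x : Pt n} (hf : DifferentiableAt ℝ f x)
    (hF : DifferentiableAt ℝ (straighten f k) x) (v : Pt n) :
    fderiv ℝ (straighten f k) x v = Function.update v k (fderiv ℝ f x v) := by
  funext i
  have hi : HasFDerivAt (fun y => straighten f k y i)
      ((ContinuousLinearMap.proj i).comp (fderiv ℝ (straighten f k) x)) x :=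
    (hasFDerivAt_pi'.1 hF.hasFDerivAt) i
  rcases eq_or_ne i k with rfl | h
  · simp only [straighten, Function.update_self] at hi ⊢
    exact DFunLike.congr_fun (hi.unique hf.hasFDerivAt) v
  · simp only [straighten, Function.update_of_ne h] at hi ⊢
    exact DFunLike.congr_fun (hi.unique (hasFDerivAt_apply i x)) v

theorem exists_equiv_hasFDerivAt_straighten (hf : ContDiff ℝ 1 f) {x : Pt n}
    (hx : pd k f x ≠ 0) :
    ∃ A : Pt n ≃L[ℝ] Pt n, HasFDerivAt (straighten f k) (A : Pt n →L[ℝ] Pt n) x := by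
  have hF := (contDiff_straighten (k := k) hf).differentiable one_ne_zero x
  have hinj : Function.Injective (fderiv ℝ (straighten f k) x : Pt n →ₗ[ℝ] Pt n) := by
    refine (injective_iff_map_eq_zero (fderiv ℝ (straighten f k) x)).2 fun v hv => ?_
    have hv' : Function.update v k (fderiv ℝ f x v) = 0 :=
      (fderiv_straighten_apply (hf.differentiable one_ne_zero x) hF v).symm.trans hv
    have hne : ∀ i, i ≠ k → v i = 0 := fun i hi => by
      simpa only [Function.update_of_ne hi, Pi.zero_apply] using congrFun hv' i
    have hk : v k * pd k f x = 0 := by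
      have h := congrFun hv' k
      rwa [Function.update_self, fderiv_apply_eq_sum_pd, Finset.sum_eq_single k
        (fun i _ hi => by rw [hne i hi, zero_mul]) (by simp)] at h
    funext i
    rcases eq_or_ne i k with rfl | hi
    exacts [(mul_eq_zero.1 hk).resolve_right hx, hne i hi]
  refine ⟨(LinearEquiv.ofInjectiveEndo (fderiv ℝ (straighten f k) x : Pt n →ₗ[ℝ] Pt n)
    hinj).toContinuousLinearEquiv,
    hF.hasFDerivAt.congr_fderiv ?_⟩
  ext v : 1
  rfl

theorem exists_contDiff_mem_ball_hyperplane (c : Pt n) (k : Fin n) {r : ℝ} (hr : 0 < r) :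
    ∃ T : Pt n → Pt n, ContDiff ℝ (⊤ : ℕ∞) T ∧ (∀ y, T y ∈ Metric.ball c r) ∧
      (∀ y, T y k = c k) ∧ ∀ y ∈ Metric.ball 0 (r / 2), ∀ i, i ≠ k → T y i = c i + y i := by
  let χ : ContDiffBump (0 : Pt n) := ⟨r / 2, r, by linarith, by linarith⟩
  have hχ : ∀ y, χ y * ‖y‖ < r := fun y => by
    by_cases hy : ‖y‖ < r
    · exact (mul_le_of_le_one_left (norm_nonneg y) χ.le_one).trans_lt hy
    · rwa [χ.zero_of_le_dist (by simpa using hy), zero_mul]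
  refine ⟨fun y => c + Function.update (χ y • y) k 0, ?_, fun y => ?_, fun y => ?_,
    fun y hy i hi => ?_⟩
  · refine contDiff_const.add (contDiff_pi.2 fun i => ?_)
    rcases eq_or_ne i k with rfl | h
    · simpa only [Function.update_self] using contDiff_const
    · simp only [Function.update_of_ne h]
      exact χ.contDiff.mul (contDiff_apply ℝ ℝ i)
  · rw [mem_ball_iff_norm, add_sub_cancel_left, pi_norm_lt_iff hr]
    intro i
    rcases eq_or_ne i k with rfl | h
    · simpa only [Function.update_self, norm_zero] using hr
    · rw [Function.update_of_ne h, Pi.smul_apply, norm_smul, Real.norm_of_nonneg χ.nonneg]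
      exact (mul_le_mul_of_nonneg_left (norm_le_pi_norm y i) χ.nonneg).trans_lt (hχ y)
  · simp only [Pi.add_apply, Function.update_self, add_zero]
  · simp only [Pi.add_apply, Function.update_of_ne hi,
      χ.one_of_mem_closedBall (Metric.ball_subset_closedBall hy), one_smul]

/-- `Φ` parametrises part of `{f = 0}` as a graph over the hyperplane of the coordinates `i ≠ k`,
with these coordinates as parameters on the open set `s`. The parameter space is all of `Pt n`; on
`s` the map `Φ` does not depend on the `k`-th parameter. -/
structure IsGraphChart (f : Pt n → ℝ) (k : Fin n) (Φ : Pt n → Pt n) (s : Set (Pt n)) : Prop where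
  isOpen : IsOpen s
  contDiff : ContDiff ℝ (⊤ : ℕ∞) Φ
  apply_eq_zero : ∀ y, f (Φ y) = 0
  pd_ne_zero : ∀ y, pd k f (Φ y) ≠ 0
  pd_of_ne : ∀ y ∈ s, ∀ a i, i ≠ k → pd a (fun z => Φ z i) y = if i = a then 1 else 0

theorem exists_straighten_rightInverse (hf : ContDiff ℝ (⊤ : ℕ∞) f) {p : Pt n}
    (hk : pd k f p ≠ 0) :
    ∃ (Ψ : Pt n → Pt n) (r : ℝ), 0 < r ∧
      ContDiffOn ℝ (⊤ : ℕ∞) Ψ (Metric.ball (straighten f k p) r) ∧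
      (∀ z ∈ Metric.ball (straighten f k p) r,
        straighten f k (Ψ z) = z ∧ pd k f (Ψ z) ≠ 0) ∧
      ∀ᶠ q in nhds p, Ψ (straighten f k q) = q := by
  have hf1 : ContDiff ℝ 1 f := hf.of_le (by simp)
  obtain ⟨A, hA⟩ := exists_equiv_hasFDerivAt_straighten hf1 hk
  have hF : ContDiff ℝ (⊤ : ℕ∞) (straighten f k) := contDiff_straighten hf
  let e := hF.contDiffAt.toOpenPartialHomeomorph (straighten f k) hA (by simp)
  have hps : p ∈ e.source := hF.contDiffAt.mem_toOpenPartialHomeomorph_source hA (by simp)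
  have hopen : IsOpen (e.target ∩ e.symm ⁻¹' {x | pd k f x ≠ 0}) :=
    e.isOpen_inter_preimage_symm
      (isOpen_ne_fun (contDiff_infty_pd hf).continuous continuous_const)
  have hmem : straighten f k p ∈ e.target ∩ e.symm ⁻¹' {x | pd k f x ≠ 0} := by
    refine ⟨e.map_source hps, ?_⟩
    change pd k f (e.symm (e p)) ≠ 0
    rwa [e.left_inv hps]
  obtain ⟨r, hr, hball⟩ := Metric.isOpen_iff.1 hopen _ hmem
  refine ⟨e.symm, r, hr, fun z hz => ?_, fun z hz => ⟨e.right_inv (hball hz).1, (hball hz).2⟩, ?_⟩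
  · obtain ⟨B, hB⟩ := exists_equiv_hasFDerivAt_straighten hf1 (hball hz).2
    exact (e.contDiffAt_symm (hball hz).1 hB hF.contDiffAt).contDiffWithinAt
  · filter_upwards [e.open_source.mem_nhds hps] with q hq using e.left_inv hq

theorem exists_isGraphChart (hf : ContDiff ℝ (⊤ : ℕ∞) f) {p : Pt n} (hp : f p = 0)
    (hdf : fderiv ℝ f p ≠ 0) :
    ∃ (k : Fin n) (Φ : Pt n → Pt n) (δ : ℝ), 0 < δ ∧ IsGraphChart f k Φ (Metric.ball 0 δ) ∧
      Φ 0 = p ∧ ∀ᶠ q in nhds p, f q = 0 → Φ (q - p) = q := by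
  obtain ⟨k, hk⟩ := exists_pd_ne_zero hdf
  obtain ⟨Ψ, r, hr, hΨ, hinv, hleft⟩ := exists_straighten_rightInverse hf hk
  obtain ⟨T, hT, hTball, hTk, hTne⟩ :=
    exists_contDiff_mem_ball_hyperplane (straighten f k p) k hr
  have hΦ : ∀ y i, straighten f k (Ψ (T y)) i = T y i := fun y i => by
    rw [(hinv _ (hTball y)).1]
  have hΦk : ∀ y, f (Ψ (T y)) = 0 := fun y => by
    simpa only [straighten, Function.update_self, hTk, hp] using hΦ y k
  have hΦne : ∀ y ∈ Metric.ball 0 (r / 2), ∀ i, i ≠ k → Ψ (T y) i = p i + y i :=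
    fun y hy i hi => by
      simpa only [straighten, Function.update_of_ne hi, hTne y hy i hi] using hΦ y i
  have hTsub : ∀ q ∈ Metric.ball p (r / 2), f q = 0 → T (q - p) = straighten f k q := by
    intro q hq hfq
    funext i
    rcases eq_or_ne i k with rfl | hi
    · simp only [hTk, straighten, Function.update_self, hp, hfq]
    · rw [hTne _ (by simpa [dist_eq_norm] using hq) i hi]
      simp only [straighten, Function.update_of_ne hi, Pi.sub_apply, add_sub_cancel]
  refine ⟨k, Ψ ∘ T, r / 2, half_pos hr, ⟨Metric.isOpen_ball, ?_, hΦk,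
    fun y => (hinv _ (hTball y)).2, fun y hy a i hi => ?_⟩, ?_, ?_⟩
  · exact hΨ.comp_contDiff hT hTball
  · rw [pd_congr (v := fun z => p i + z i), pd_add (by fun_prop) (by fun_prop), pd_const,
      pd_coord, zero_add]
    filter_upwards [Metric.isOpen_ball.mem_nhds hy] with z hz using hΦne z hz i hi
  · rw [Function.comp_apply, ← sub_self p, hTsub p (Metric.mem_ball_self (half_pos hr)) hp]
    exact hleft.self_of_nhds
  · filter_upwards [hleft, Metric.ball_mem_nhds p (half_pos hr)] with q hq hqr hfq
    rw [Function.comp_apply, hTsub q hqr hfq, hq]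

end GraphChart

namespace IsGraphChart

variable {n : ℕ} {f V : Pt n → ℝ} {k : Fin n} {Φ : Pt n → Pt n} {s : Set (Pt n)} {y : Pt n}

theorem contDiff_apply (hΦ : IsGraphChart f k Φ s) (i : Fin n) :
    ContDiff ℝ (⊤ : ℕ∞) fun z => Φ z i :=
  contDiff_pi.1 hΦ.contDiff i

theorem fderiv_ne_zero (hΦ : IsGraphChart f k Φ s) (y : Pt n) : fderiv ℝ f (Φ y) ≠ 0 := fun h =>
  hΦ.pd_ne_zero y (by rw [pd, h, zero_apply])

theorem sum_pd_mul_pd (hΦ : IsGraphChart f k Φ s) (hf : DifferentiableAt ℝ f (Φ y))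
    (a : Fin n) : ∑ i, pd i f (Φ y) * pd a (fun z => Φ z i) y = 0 := by
  rw [← _root_.pd_comp hf (hΦ.contDiff.differentiable (by simp) y)]
  simp only [hΦ.apply_eq_zero, pd_const]

theorem pd_apply (hΦ : IsGraphChart f k Φ s) (hf : DifferentiableAt ℝ f (Φ y)) (hy : y ∈ s)
    (a i : Fin n) :
    pd a (fun z => Φ z i) y =
      (if i = a then 1 else 0) - if i = k then pd a f (Φ y) / pd k f (Φ y) else 0 := by
  rcases eq_or_ne i k with rfl | hi
  · have hterm : ∀ j, pd j f (Φ y) * pd a (fun z => Φ z j) y =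
        (if j = a then pd j f (Φ y) else 0) + if j = i then
          pd i f (Φ y) * (pd a (fun z => Φ z i) y - if i = a then 1 else 0) else 0 := fun j => by
      rcases eq_or_ne j i with rfl | hj
      · rw [if_pos rfl]
        split_ifs <;> ring
      · rw [hΦ.pd_of_ne y hy a j hj, if_neg hj, add_zero, mul_ite, mul_one, mul_zero]
    have h := hΦ.sum_pd_mul_pd hf a
    simp only [hterm, Finset.sum_add_distrib, Finset.sum_ite_eq', Finset.mem_univ, if_true] at h
    have hi := hΦ.pd_ne_zero y
    rw [if_pos rfl]
    field_simp
    linarith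
  · rw [hΦ.pd_of_ne y hy a i hi, if_neg hi, sub_zero]

theorem pd_comp (hΦ : IsGraphChart f k Φ s) (hf : DifferentiableAt ℝ f (Φ y)) (hy : y ∈ s)
    (hV : DifferentiableAt ℝ V (Φ y)) (a : Fin n) :
    pd a (fun z => V (Φ z)) y = pd a V (Φ y) - pd a f (Φ y) / pd k f (Φ y) * pd k V (Φ y) := by
  rw [_root_.pd_comp hV (hΦ.contDiff.differentiable (by simp) y)]
  simp only [hΦ.pd_apply hf hy, mul_sub, Finset.sum_sub_distrib, mul_ite, mul_one, mul_zero,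
    Finset.sum_ite_eq', Finset.mem_univ, if_true, mul_comm]

theorem pd_comp_self (hΦ : IsGraphChart f k Φ s) (hf : DifferentiableAt ℝ f (Φ y)) (hy : y ∈ s)
    (hV : DifferentiableAt ℝ V (Φ y)) : pd k (fun z => V (Φ z)) y = 0 := by
  rw [hΦ.pd_comp hf hy hV, div_self (hΦ.pd_ne_zero y), one_mul, sub_self]

theorem sum_mul_pd_comp (hΦ : IsGraphChart f k Φ s) (hf : DifferentiableAt ℝ f (Φ y))
    (hy : y ∈ s) (hV : DifferentiableAt ℝ V (Φ y)) {t : Fin n → ℝ}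
    (ht : ∑ a, t a * pd a f (Φ y) = 0) :
    ∑ a, t a * pd a (fun z => V (Φ z)) y = ∑ a, t a * pd a V (Φ y) := by
  have h : ∑ a, t a * (pd a f (Φ y) / pd k f (Φ y) * pd k V (Φ y)) =
      (∑ a, t a * pd a f (Φ y)) * (pd k V (Φ y) / pd k f (Φ y)) := by
    rw [Finset.sum_mul]
    exact Finset.sum_congr rfl fun a _ => by ring
  simp only [hΦ.pd_comp hf hy hV, mul_sub, Finset.sum_sub_distrib, h, ht, zero_mul, sub_zero]

theorem sum_pd_comp (hΦ : IsGraphChart f k Φ s) (hf : ContDiff ℝ 2 f) (hy : y ∈ s)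
    {J : Pt n → Fin n → ℝ} (hJ : ∀ a, DifferentiableAt ℝ (fun x => J x a) (Φ y))
    (hJf : ∀ᶠ x in nhds (Φ y), ∑ a, J x a * pd a f x = 0) :
    ∑ a, pd a (fun z => J (Φ z) a) y = ∑ a, pd a (fun x => J x a) (Φ y)
      + (∑ a, J (Φ y) a * pd k (pd a f) (Φ y)) / pd k f (Φ y) := by
  have hf1 : DifferentiableAt ℝ f (Φ y) := hf.differentiable two_ne_zero _
  have hdiff : ∑ a, (J (Φ y) a * pd k (pd a f) (Φ y)
      + pd k (fun x => J x a) (Φ y) * pd a f (Φ y)) = 0 := by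
    rw [← pd_const (n := n) (i := k) (x := Φ y) 0, ← pd_congr hJf,
      pd_sum fun a _ => (hJ a).fun_mul (differentiable_pd hf _)]
    exact Finset.sum_congr rfl fun a _ => by
      rw [pd_mul (hJ a) (differentiable_pd hf _), add_comm]
  simp only [hΦ.pd_comp hf1 hy (hJ _), Finset.sum_sub_distrib]
  rw [Finset.sum_add_distrib] at hdiff
  rw [eq_neg_of_add_eq_zero_left hdiff, neg_div, Finset.sum_div, sub_eq_add_neg]
  congr 2
  exact Finset.sum_congr rfl fun a _ => by ring

end IsGraphChart

/-! ### The elliptic system on the hypersurface -/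

section TangentialSymbol

variable {n : ℕ} {g : Pt n → Fin n → Fin n → ℝ} {f : Pt n → ℝ} {x : Pt n}

theorem tangentialSymbol_symm (hs : symT g) (i j : Fin n) :
    tangentialSymbol g f i j x = tangentialSymbol g f j i x := by
  rw [tangentialSymbol, tangentialSymbol, ginv_symm (hs x), mul_comm (nuV g f x i)]

theorem sum_nuV_mul (ξ : Fin n → ℝ) :
    ∑ j, nuV g f x j * ξ j = (∑ j, gradV g f x j * ξ j) / √(gradSq g f x) := by
  rw [Finset.sum_div]
  exact Finset.sum_congr rfl fun j _ => div_mul_eq_mul_div _ _ _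

theorem sum_tangentialSymbol_mul_pd_self (h : 0 < gradSq g f x) (i : Fin n) :
    ∑ j, tangentialSymbol g f i j x * pd j f x = 0 := by
  rw [sum_tangentialSymbol_mul, sum_nuV_mul, ← dirDeriv_eq_sum_pd, ← gradSq_eq_dirDeriv,
    Real.div_sqrt]
  change (gradV g f x i - gradV g f x i / √(gradSq g f x) * √(gradSq g f x)) / _ = 0
  rw [div_mul_cancel₀ _ (Real.sqrt_pos.2 h).ne', sub_self, zero_div]

theorem sum_ginv_mul_sub_pd_mul_sub_pd (hs : ∀ i j, g x i j = g x j i) (ξ : Fin n → ℝ) (t : ℝ) :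
    ∑ i, ∑ j, ginv g x i j * (ξ i - t * pd i f x) * (ξ j - t * pd j f x) =
      ∑ i, ∑ j, ginv g x i j * ξ i * ξ j - 2 * t * ∑ i, gradV g f x i * ξ i
        + t ^ 2 * gradSq g f x := by
  have hcross : ∑ i, ∑ j, ginv g x i j * pd i f x * ξ j = ∑ i, gradV g f x i * ξ i := by
    rw [Finset.sum_comm]
    simp only [gradV, Finset.sum_mul, ginv_symm hs]
  have hcross' : ∑ i, ∑ j, ginv g x i j * ξ i * pd j f x = ∑ i, gradV g f x i * ξ i := by
    simp only [gradV, Finset.sum_mul, mul_right_comm]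
  calc
    _ = ∑ i, ∑ j, ginv g x i j * ξ i * ξ j - t * ∑ i, ∑ j, ginv g x i j * pd i f x * ξ j
        - t * ∑ i, ∑ j, ginv g x i j * ξ i * pd j f x + t ^ 2 * gradSq g f x := by
      simp only [gradSq, Finset.mul_sum, ← Finset.sum_sub_distrib, ← Finset.sum_add_distrib]
      exact Finset.sum_congr rfl fun i _ => Finset.sum_congr rfl fun j _ => by ring
    _ = _ := by rw [hcross, hcross']; ring

theorem sum_tangentialSymbol_mul_mul (hs : ∀ i j, g x i j = g x j i) (h : 0 < gradSq g f x)
    (ξ : Fin n → ℝ) :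
    ∃ t, ∑ i, ∑ j, tangentialSymbol g f i j x * ξ i * ξ j =
      (∑ i, ∑ j, ginv g x i j * (ξ i - t * pd i f x) * (ξ j - t * pd j f x))
        / √(gradSq g f x) := by
  refine ⟨(∑ i, gradV g f x i * ξ i) / gradSq g f x, ?_⟩
  have hsum : ∑ i, ∑ j, tangentialSymbol g f i j x * ξ i * ξ j =
      (∑ i, ∑ j, ginv g x i j * ξ i * ξ j - (∑ i, nuV g f x i * ξ i) ^ 2)
        / √(gradSq g f x) := by
    simp only [tangentialSymbol, sq, Finset.sum_mul_sum, ← Finset.sum_sub_distrib, Finset.sum_div]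
    exact Finset.sum_congr rfl fun i _ => Finset.sum_congr rfl fun j _ => by ring
  rw [hsum, sum_ginv_mul_sub_pd_mul_sub_pd hs, sum_nuV_mul, div_pow, Real.sq_sqrt h.le]
  congr 1
  field_simp
  ring

/-- The tangential symbol degenerates only in the direction of `df`, where `ξ k` does not vanish. -/
theorem tangentialSymbol_add_sq_pos (hs : symT g) (hp : posdef g) {k : Fin n}
    (hk : pd k f x ≠ 0) {ξ : Fin n → ℝ} (hξ : ξ ≠ 0) :
    0 < ∑ i, ∑ j, tangentialSymbol g f i j x * ξ i * ξ j + ξ k ^ 2 := by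
  have hR : 0 < gradSq g f x := hp.ginv_pos hs (ζ := fun i => pd i f x) fun h => hk (congrFun h k)
  obtain ⟨t, ht⟩ := sum_tangentialSymbol_mul_mul (hs x) hR ξ
  rw [ht]
  rcases eq_or_ne (fun i => ξ i - t * pd i f x) 0 with hη | hη
  · have hξt : ∀ i, ξ i = t * pd i f x := fun i => sub_eq_zero.1 (congrFun hη i)
    have ht0 : t ≠ 0 := by
      rintro rfl
      exact hξ (funext fun i => by rw [hξt, zero_mul, Pi.zero_apply])
    simp only [← hξt, sub_self, mul_zero, Finset.sum_const_zero, zero_div, zero_add]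
    rw [hξt]
    positivity
  · exact add_pos_of_pos_of_nonneg
      (div_pos (hp.ginv_pos hs hη) (Real.sqrt_pos.2 hR)) (sq_nonneg _)

end TangentialSymbol

section Pullback

variable {n : ℕ} {g : Pt n → Fin n → Fin n → ℝ} {ω X : Pt n → Fin n → ℝ} {f : Pt n → ℝ}
  {k : Fin n} {Φ : Pt n → Pt n} {s : Set (Pt n)} {y : Pt n}

/-- Component `a` of the pullback `Φ^* ω` of the covector field `ω`. -/
def pullbackCov (ω : Pt n → Fin n → ℝ) (Φ : Pt n → Pt n) (a : Fin n) (y : Pt n) : ℝ :=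
  ∑ i, ω (Φ y) i * pd a (fun z => Φ z i) y

/-- The ambient covariant derivative `∇_{∂_a} ∂_b Φ` of the coordinate field `∂_b Φ` along `Φ`,
in the component `l`. -/
def pullbackChr (g : Pt n → Fin n → Fin n → ℝ) (Φ : Pt n → Pt n) (l a b : Fin n) (y : Pt n) : ℝ :=
  pd a (pd b fun z => Φ z l) y
    + ∑ i, ∑ j, chr g (Φ y) l i j * pd b (fun z => Φ z i) y * pd a (fun z => Φ z j) y

theorem pd_pullbackCov (hω : ∀ i, DifferentiableAt ℝ (fun x => ω x i) (Φ y))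
    (hΦ : ∀ i, ContDiff ℝ 2 fun z => Φ z i) (a b : Fin n) :
    pd a (pullbackCov ω Φ b) y =
      ∑ i, ∑ j, cdCov g ω (Φ y) i j * pd b (fun z => Φ z i) y * pd a (fun z => Φ z j) y
        + ∑ l, ω (Φ y) l * pullbackChr g Φ l a b y := by
  have hΦ1 : DifferentiableAt ℝ Φ y :=
    differentiableAt_pi.2 fun i => (hΦ i).differentiable two_ne_zero y
  have hexp : pd a (pullbackCov ω Φ b) y =
      ∑ i, (∑ j, pd j (fun x => ω x i) (Φ y) * pd b (fun z => Φ z i) y * pd a (fun z => Φ z j) y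
        + ω (Φ y) i * pd a (pd b fun z => Φ z i) y) := by
    have hωΦ : ∀ i, DifferentiableAt ℝ (fun z => ω (Φ z) i) y := fun i => (hω i).comp y hΦ1
    change pd a (fun z => ∑ i, ω (Φ z) i * pd b (fun z => Φ z i) z) y = _
    rw [pd_sum fun i _ => (hωΦ i).fun_mul (differentiable_pd (hΦ i) y)]
    exact Finset.sum_congr rfl fun i _ => by
      rw [pd_mul (hωΦ i) (differentiable_pd (hΦ i) y), pd_comp (hω i) hΦ1, Finset.sum_mul]
      simp only [mul_right_comm]
  have hchr : ∑ l, ω (Φ y) l * ∑ i, ∑ j, chr g (Φ y) l i j * pd b (fun z => Φ z i) y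
        * pd a (fun z => Φ z j) y = ∑ i, ∑ j, (∑ l, chr g (Φ y) l i j * ω (Φ y) l)
        * pd b (fun z => Φ z i) y * pd a (fun z => Φ z j) y := by
    simp only [Finset.mul_sum, Finset.sum_mul]
    rw [Finset.sum_comm_cycle, Finset.sum_comm_cycle]
    exact Finset.sum_congr rfl fun i _ => Finset.sum_congr rfl fun j _ =>
      Finset.sum_congr rfl fun l _ => by ring
  simp only [hexp, pullbackChr, cdCov, mul_add, sub_mul, Finset.sum_add_distrib,
    Finset.sum_sub_distrib, hchr]
  ring

theorem pd_pullbackCov_add (hω : ∀ i, DifferentiableAt ℝ (fun x => ω x i) (Φ y))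
    (hΦ : ∀ i, ContDiff ℝ 2 fun z => Φ z i) (a b : Fin n) :
    pd a (pullbackCov ω Φ b) y + pd b (pullbackCov ω Φ a) y =
      ∑ i, ∑ j, (cdCov g ω (Φ y) i j + cdCov g ω (Φ y) j i) * pd b (fun z => Φ z i) y
        * pd a (fun z => Φ z j) y
      + ∑ l, ω (Φ y) l * (pullbackChr g Φ l a b y + pullbackChr g Φ l b a y) := by
  rw [pd_pullbackCov (g := g) hω hΦ a b, pd_pullbackCov (g := g) hω hΦ b a]
  rw [Finset.sum_comm (f := fun i j => cdCov g ω (Φ y) i j * pd a _ y * _)]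
  simp only [add_mul, mul_add, Finset.sum_add_distrib, mul_right_comm]
  ring

theorem pd_pd_eq_pd_add_pd {w : Fin n → Pt n → ℝ} (hw : ∀ a, ContDiff ℝ 2 (w a))
    (a b c : Fin n) :
    pd a (pd b (w c)) y = 1 / 2 * (pd a (fun z => pd b (w c) z + pd c (w b) z) y
      + pd b (fun z => pd a (w c) z + pd c (w a) z) y
      - pd c (fun z => pd a (w b) z + pd b (w a) z) y) := by
  have hd : ∀ i j, DifferentiableAt ℝ (pd i (w j)) y := fun i j => differentiable_pd (hw j) y
  rw [pd_add (hd _ _) (hd _ _), pd_add (hd _ _) (hd _ _), pd_add (hd _ _) (hd _ _),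
    pd_comm (i := b) (j := a) (hw c).contDiffAt, pd_comm (i := c) (j := a) (hw b).contDiffAt,
    pd_comm (i := c) (j := b) (hw a).contDiffAt]
  ring

theorem sum_gradV_mul_lowerV {x : Pt n} (hs : ∀ i j, g x i j = g x j i)
    (hd : (Matrix.of (g x)).det ≠ 0) :
    ∑ j, gradV g f x j * lowerV g X x j = dirDeriv X f x := by
  simp only [dirDeriv_eq_sum_pd, gradV, Finset.sum_mul]
  rw [Finset.sum_comm]
  refine Finset.sum_congr rfl fun i _ => ?_
  rw [← sum_ginv_mul_sum_mul hd (X x) i, Finset.sum_mul]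
  exact Finset.sum_congr rfl fun j _ => by rw [ginv_symm hs j i, lowerV]; ring

theorem sum_tangentialSymbol_mul_pullbackCov (hΦ : IsGraphChart f k Φ s)
    (hf : DifferentiableAt ℝ f (Φ y)) (hy : y ∈ s) (hR : 0 < gradSq g f (Φ y)) (i : Fin n) :
    ∑ b, tangentialSymbol g f i b (Φ y) * pullbackCov ω Φ b y =
      ∑ j, tangentialSymbol g f i j (Φ y) * ω (Φ y) j := by
  simp only [pullbackCov, Finset.mul_sum]
  rw [Finset.sum_comm]
  refine Finset.sum_congr rfl fun j _ => ?_
  have h := hΦ.sum_mul_pd_comp hf hy (V := fun x => x j) (by fun_prop)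
    (sum_tangentialSymbol_mul_pd_self hR i)
  simp only [pd_coord, mul_ite, mul_one, mul_zero, Finset.sum_ite_eq, Finset.mem_univ,
    if_true] at h
  rw [← h, Finset.sum_mul]
  exact Finset.sum_congr rfl fun b _ => by ring

theorem eq_normal_add_tangential (hs : symT g) (hp : posdef g) (hΦ : IsGraphChart f k Φ s)
    (hf : DifferentiableAt ℝ f (Φ y)) (hy : y ∈ s) (i : Fin n) :
    X (Φ y) i = gradV g f (Φ y) i / gradSq g f (Φ y) * dirDeriv X f (Φ y)
      + √(gradSq g f (Φ y)) *
        ∑ b, tangentialSymbol g f i b (Φ y) * pullbackCov (lowerV g X) Φ b y := by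
  have hR : 0 < gradSq g f (Φ y) := gradSq_pos hs hp (hΦ.fderiv_ne_zero y)
  have hd := hp.det_ne_zero hs (Φ y)
  rw [sum_tangentialSymbol_mul_pullbackCov hΦ hf hy hR, sum_tangentialSymbol_mul, sum_nuV_mul,
    sum_gradV_mul_lowerV (hs _) hd, mul_div_cancel₀ _ (Real.sqrt_pos.2 hR).ne']
  simp only [lowerV, sum_ginv_mul_sum_mul hd]
  change _ = _ + (_ - gradV g f (Φ y) i / √(gradSq g f (Φ y)) * _)
  have := Real.sq_sqrt hR.le
  field_simp
  rw [this]; ring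

end Pullback

section LowerOrder

variable {n : ℕ} {ι : Type*} [Fintype ι] {W : ι → Pt n → ℝ} {s : Set (Pt n)}
  {c e e₁ e₂ : Pt n → ℝ}

/-- The function `e` is a lower order term for the unknowns `W` on `s`: it is dominated by their
first jets. -/
def IsLowerOrder (W : ι → Pt n → ℝ) (s : Set (Pt n)) (e : Pt n → ℝ) : Prop :=
  ∃ K, 0 ≤ K ∧ ∀ y ∈ s, e y ^ 2 ≤ K * ∑ b, firstJetSq (W b) y

theorem sum_firstJetSq_nonneg (y : Pt n) : 0 ≤ ∑ b, firstJetSq (W b) y :=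
  Finset.sum_nonneg fun _ _ => firstJetSq_nonneg _ _

namespace IsLowerOrder

theorem congr (h : IsLowerOrder W s e₁) (heq : ∀ y ∈ s, e₂ y = e₁ y) : IsLowerOrder W s e₂ := by
  obtain ⟨K, hK, hb⟩ := h
  exact ⟨K, hK, fun y hy => heq y hy ▸ hb y hy⟩

theorem self (b : ι) : IsLowerOrder W s (W b) := by
  refine ⟨1, zero_le_one, fun y _ => ?_⟩
  rw [one_mul]
  refine le_trans ?_ (Finset.single_le_sum (fun _ _ => firstJetSq_nonneg _ _) (Finset.mem_univ b))
  exact le_add_of_nonneg_right (Finset.sum_nonneg fun _ _ => sq_nonneg _)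

theorem pd (b : ι) (a : Fin n) : IsLowerOrder W s (pd a (W b)) := by
  refine ⟨1, zero_le_one, fun y _ => ?_⟩
  rw [one_mul]
  refine le_trans ?_ (Finset.single_le_sum (fun _ _ => firstJetSq_nonneg _ _) (Finset.mem_univ b))
  exact le_add_of_nonneg_of_le (sq_nonneg _)
    (Finset.single_le_sum (f := fun a => _root_.pd a (W b) y ^ 2) (fun _ _ => sq_nonneg _)
      (Finset.mem_univ a))

theorem add (h₁ : IsLowerOrder W s e₁) (h₂ : IsLowerOrder W s e₂) :
    IsLowerOrder W s fun y => e₁ y + e₂ y := by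
  obtain ⟨K₁, hK₁, hb₁⟩ := h₁
  obtain ⟨K₂, hK₂, hb₂⟩ := h₂
  refine ⟨2 * (K₁ + K₂), by positivity, fun y hy => ?_⟩
  linarith [add_sq_le (a := e₁ y) (b := e₂ y), hb₁ y hy, hb₂ y hy]

theorem mul (hs : Bornology.IsBounded s) (hc : Continuous c) (h : IsLowerOrder W s e) :
    IsLowerOrder W s fun y => c y * e y := by
  obtain ⟨K, hK, hb⟩ := h
  obtain ⟨C, hC⟩ := hs.isCompact_closure.exists_bound_of_continuousOn hc.continuousOn
  refine ⟨C ^ 2 * K, by positivity, fun y hy => ?_⟩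
  rw [mul_pow, mul_assoc]
  exact mul_le_mul (sq_le_sq' (abs_le.1 (hC y (subset_closure hy))).1
    (abs_le.1 (hC y (subset_closure hy))).2) (hb y hy) (sq_nonneg _) (sq_nonneg _)

theorem sub (h₁ : IsLowerOrder W s e₁) (h₂ : IsLowerOrder W s e₂) :
    IsLowerOrder W s fun y => e₁ y - e₂ y := by
  obtain ⟨K, hK, hb⟩ := h₂
  exact (h₁.add ⟨K, hK, fun y hy => by rw [neg_sq]; exact hb y hy⟩).congr
    fun y _ => sub_eq_add_neg _ _

theorem sum {κ : Type*} {t : Finset κ} {E : κ → Pt n → ℝ} (h : ∀ i ∈ t, IsLowerOrder W s (E i)) :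
    IsLowerOrder W s fun y => ∑ i ∈ t, E i y := by
  classical
  induction t using Finset.induction_on with
  | empty => exact ⟨0, le_rfl, fun y _ => by simp⟩
  | insert i t hi ih =>
    simp only [Finset.sum_insert hi]
    exact (h i (Finset.mem_insert_self i t)).add
      (ih fun j hj => h j (Finset.mem_insert_of_mem hj))

theorem exists_uniform_bound {κ : Type*} [Finite κ] {E : κ → Pt n → ℝ}
    (h : ∀ i, IsLowerOrder W s (E i)) :
    ∃ K, 0 ≤ K ∧ ∀ y ∈ s, ∀ i, E i y ^ 2 ≤ K * ∑ b, firstJetSq (W b) y := by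
  cases nonempty_fintype κ
  choose K hK hb using h
  refine ⟨∑ i, K i, Finset.sum_nonneg fun i _ => hK i, fun y hy i => (hb i y hy).trans ?_⟩
  exact mul_le_mul_of_nonneg_right (Finset.single_le_sum (fun i _ => hK i) (Finset.mem_univ i))
    (sum_firstJetSq_nonneg y)

end IsLowerOrder

/-- On `s`, the function `e` is a linear combination of the unknowns `W` with smooth
coefficients. -/
def IsSmoothCombination (W : ι → Pt n → ℝ) (s : Set (Pt n)) (e : Pt n → ℝ) : Prop :=
  ∃ c : ι → Pt n → ℝ, (∀ b, ContDiff ℝ (⊤ : ℕ∞) (c b)) ∧ ∀ y ∈ s, e y = ∑ b, c b y * W b y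

namespace IsSmoothCombination

theorem congr (h : IsSmoothCombination W s e₁) (heq : ∀ y ∈ s, e₂ y = e₁ y) :
    IsSmoothCombination W s e₂ := by
  obtain ⟨c, hc, he⟩ := h
  exact ⟨c, hc, fun y hy => (heq y hy).trans (he y hy)⟩

theorem self (b : ι) : IsSmoothCombination W s (W b) := by
  classical
  exact ⟨fun i _ => if i = b then 1 else 0, fun _ => contDiff_const, fun y _ => by simp⟩

theorem add (h₁ : IsSmoothCombination W s e₁) (h₂ : IsSmoothCombination W s e₂) :
    IsSmoothCombination W s fun y => e₁ y + e₂ y := by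
  obtain ⟨c₁, hc₁, he₁⟩ := h₁
  obtain ⟨c₂, hc₂, he₂⟩ := h₂
  refine ⟨fun b y => c₁ b y + c₂ b y, fun b => (hc₁ b).add (hc₂ b), fun y hy => ?_⟩
  simp only [he₁ y hy, he₂ y hy, add_mul, Finset.sum_add_distrib]

theorem mul (hc : ContDiff ℝ (⊤ : ℕ∞) c) (h : IsSmoothCombination W s e) :
    IsSmoothCombination W s fun y => c y * e y := by
  obtain ⟨d, hd, he⟩ := h
  refine ⟨fun b y => c y * d b y, fun b => hc.mul (hd b), fun y hy => ?_⟩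
  simp only [he y hy, Finset.mul_sum, mul_assoc]

theorem sum {κ : Type*} {t : Finset κ} {E : κ → Pt n → ℝ}
    (h : ∀ i, IsSmoothCombination W s (E i)) :
    IsSmoothCombination W s fun y => ∑ i ∈ t, E i y := by
  choose d hd he using h
  refine ⟨fun b y => ∑ i ∈ t, d i b y, fun b => ContDiff.sum fun i _ => hd i b, fun y hy => ?_⟩
  simp only [he _ y hy, Finset.sum_mul]
  exact Finset.sum_comm

theorem isLowerOrder (hs : Bornology.IsBounded s) (h : IsSmoothCombination W s e) :
    IsLowerOrder W s e := by
  obtain ⟨c, hc, he⟩ := h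
  exact (IsLowerOrder.sum fun b _ => (IsLowerOrder.self b).mul hs (hc b).continuous).congr he

theorem isLowerOrder_pd (hs : Bornology.IsBounded s) (hso : IsOpen s)
    (hW : ∀ b, Differentiable ℝ (W b)) (h : IsSmoothCombination W s e) (a : Fin n) :
    IsLowerOrder W s (pd a e) := by
  obtain ⟨c, hc, he⟩ := h
  have hc1 (b) : Differentiable ℝ (c b) := (hc b).differentiable (by simp)
  refine (IsLowerOrder.sum (t := Finset.univ) fun b _ =>
    ((IsLowerOrder.self b).mul hs (contDiff_infty_pd (i := a) (hc b)).continuous).add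
      ((IsLowerOrder.pd b a).mul hs (hc b).continuous)).congr fun y hy => ?_
  rw [pd_congr (eventually_of_mem (hso.mem_nhds hy) he),
    pd_sum fun b _ => (hc1 b y).fun_mul (hW b y)]
  exact Finset.sum_congr rfl fun b _ => pd_mul (hc1 b y) (hW b y)

end IsSmoothCombination

end LowerOrder

section System

variable {n : ℕ} {g : Pt n → Fin n → Fin n → ℝ} {f : Pt n → ℝ} {X : Pt n → Fin n → ℝ}
  {k : Fin n} {Φ : Pt n → Pt n} {s : Set (Pt n)} {y : Pt n}

/-- The boundary conditions `(L_X g)^⊤ = 0` and `H'(L_X g) = 0` on the hypersurface `{f = 0}`. -/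
structure FixesBoundaryData (g : Pt n → Fin n → Fin n → ℝ) (f : Pt n → ℝ)
    (X : Pt n → Fin n → ℝ) : Prop where
  lieg_tangential : ∀ x, f x = 0 → ∀ v w : Fin n → ℝ, Tang f x v → Tang f x w →
    ∑ i, ∑ j, lieg g X x i j * v i * w j = 0
  hmeanLin_lieg : ∀ x, f x = 0 → hmeanLin g (lieg g X) f x = 0

/-- The unknowns of the elliptic system in a chart `Φ` of the hypersurface: the normal part of `X`,
in the form `X f = |∇f| η`, and the components of the tangential covector `Φ^* X♭`. -/
def unknowns (g : Pt n → Fin n → Fin n → ℝ) (f : Pt n → ℝ) (X : Pt n → Fin n → ℝ)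
    (Φ : Pt n → Pt n) : Option (Fin n) → Pt n → ℝ
  | none => fun y => dirDeriv X f (Φ y)
  | some a => pullbackCov (lowerV g X) Φ a

/-- The coefficients of the principal part of the system. The chart `Φ` does not depend on the
`k`-th variable, and the tangential symbol is completed in this direction to an elliptic one. -/
def principalCoeff (g : Pt n → Fin n → Fin n → ℝ) (f : Pt n → ℝ) (k : Fin n) (Φ : Pt n → Pt n)
    (a b : Fin n) (y : Pt n) : ℝ :=
  tangentialSymbol g f a b (Φ y) + if a = k ∧ b = k then 1 else 0

theorem principalCoeff_symm (hs : symT g) (a b : Fin n) (y : Pt n) :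
    principalCoeff g f k Φ a b y = principalCoeff g f k Φ b a y := by
  simp only [principalCoeff, tangentialSymbol_symm hs a b, and_comm]

theorem principalCoeff_pos (hs : symT g) (hp : posdef g) (hΦ : IsGraphChart f k Φ s) (y : Pt n)
    {ξ : Fin n → ℝ} (hξ : ξ ≠ 0) :
    0 < ∑ a, ∑ b, principalCoeff g f k Φ a b y * ξ a * ξ b := by
  convert tangentialSymbol_add_sq_pos hs hp (hΦ.pd_ne_zero y) hξ using 1
  simp [principalCoeff, add_mul, Finset.sum_add_distrib, ite_and, sq]

theorem IsGraphChart.contDiff_comp (hΦ : IsGraphChart f k Φ s) {F : Pt n → ℝ}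
    (hF : ∀ y, ContDiffAt ℝ (⊤ : ℕ∞) F (Φ y)) : ContDiff ℝ (⊤ : ℕ∞) fun y => F (Φ y) :=
  contDiff_iff_contDiffAt.2 fun y => (hF y).comp y hΦ.contDiff.contDiffAt

theorem contDiff_principalCoeff (hs : symT g) (hp : posdef g) (hg : smoothT g)
    (hf : ContDiff ℝ (⊤ : ℕ∞) f) (hΦ : IsGraphChart f k Φ s) (a b : Fin n) :
    ContDiff ℝ (⊤ : ℕ∞) (principalCoeff g f k Φ a b) :=
  (hΦ.contDiff_comp fun y =>
    contDiffAt_tangentialSymbol hs hp hg hf (hΦ.fderiv_ne_zero y) a b).add contDiff_const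

theorem contDiff_unknowns (hg : smoothT g) (hf : ContDiff ℝ (⊤ : ℕ∞) f)
    (hΦ : IsGraphChart f k Φ s) (hX : ∀ i, ContDiff ℝ 2 fun x => X x i) (b : Option (Fin n)) :
    ContDiff ℝ 2 (unknowns g f X Φ b) := by
  have hΦ2 : ContDiff ℝ 2 Φ := hΦ.contDiff.of_le (by norm_cast)
  cases b with
  | none => exact (contDiff_dirDeriv (k := 2) (l := 3) hX (hf.of_le (by norm_cast))
      (by norm_num)).comp hΦ2
  | some a =>
    have hlower (i) : ContDiff ℝ 2 fun x => lowerV g X x i :=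
      ContDiff.sum fun j _ => ((hg i j).of_le (by norm_cast)).mul (hX j)
    exact ContDiff.sum (s := Finset.univ) fun i _ => ((hlower i).comp hΦ2).mul
      ((contDiff_infty_pd (hΦ.contDiff_apply i)).of_le (by norm_cast))

theorem unknowns_eq_zero (h : ∀ i, X (Φ y) i = 0) (b : Option (Fin n)) :
    unknowns g f X Φ b y = 0 := by
  cases b <;> simp [unknowns, dirDeriv_eq_sum_pd, pullbackCov, lowerV, h]

theorem eq_zero_of_unknowns_eq_zero (hs : symT g) (hp : posdef g) (hΦ : IsGraphChart f k Φ s)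
    (hf : DifferentiableAt ℝ f (Φ y)) (hy : y ∈ s) (h : ∀ b, unknowns g f X Φ b y = 0)
    (i : Fin n) : X (Φ y) i = 0 := by
  have hnormal : dirDeriv X f (Φ y) = 0 := h none
  have htangential (b) : pullbackCov (lowerV g X) Φ b y = 0 := h (some b)
  rw [eq_normal_add_tangential (X := X) hs hp hΦ hf hy]
  simp only [hnormal, htangential, mul_zero, Finset.sum_const_zero, add_zero]

theorem isSmoothCombination_unknowns_apply (hs : symT g) (hp : posdef g) (hg : smoothT g)
    (hf : ContDiff ℝ (⊤ : ℕ∞) f) (hΦ : IsGraphChart f k Φ s) (i : Fin n) :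
    IsSmoothCombination (unknowns g f X Φ) s fun y => X (Φ y) i := by
  have hpos (y) : 0 < gradSq g f (Φ y) := gradSq_pos hs hp (hΦ.fderiv_ne_zero y)
  have hgradSq (y) : ContDiffAt ℝ (⊤ : ℕ∞) (gradSq g f) (Φ y) :=
    (contDiff_gradSq hs hp hg hf).contDiffAt
  have hnormal : ContDiff ℝ (⊤ : ℕ∞) fun y => gradV g f (Φ y) i / gradSq g f (Φ y) :=
    hΦ.contDiff_comp (F := fun x => gradV g f x i / gradSq g f x) fun y =>
      (contDiff_gradV hs hp hg hf i).contDiffAt.div (hgradSq y) (hpos y).ne'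
  have hsqrt : ContDiff ℝ (⊤ : ℕ∞) fun y => √(gradSq g f (Φ y)) :=
    hΦ.contDiff_comp fun y => (hgradSq y).sqrt (hpos y).ne'
  have htangential (a) : ContDiff ℝ (⊤ : ℕ∞) fun y => tangentialSymbol g f i a (Φ y) :=
    hΦ.contDiff_comp fun y => contDiffAt_tangentialSymbol hs hp hg hf (hΦ.fderiv_ne_zero y) i a
  exact (((IsSmoothCombination.self none).mul hnormal).add ((IsSmoothCombination.sum fun a =>
    (IsSmoothCombination.self (some a)).mul (htangential a)).mul hsqrt)).congr fun y hy =>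
      eq_normal_add_tangential hs hp hΦ (hf.differentiable (by simp) _) hy i

theorem contDiff_pullbackChr (hs : symT g) (hp : posdef g) (hg : smoothT g)
    (hΦ : ContDiff ℝ (⊤ : ℕ∞) Φ) (l a b : Fin n) :
    ContDiff ℝ (⊤ : ℕ∞) (pullbackChr g Φ l a b) := by
  have hpd (a i) : ContDiff ℝ (⊤ : ℕ∞) (pd a fun z => Φ z i) :=
    contDiff_infty_pd (contDiff_pi.1 hΦ i)
  have hchr (i j) : ContDiff ℝ (⊤ : ℕ∞) fun x => chr g x l i j :=
    contDiff_const.mul (ContDiff.sum fun m _ => (contDiff_ginv hs hp hg l m).mul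
      (((contDiff_infty_pd (hg j m)).add (contDiff_infty_pd (hg i m))).sub
        (contDiff_infty_pd (hg i j))))
  exact (contDiff_infty_pd (hpd b l)).add (ContDiff.sum fun i _ => ContDiff.sum fun j _ =>
    (((hchr i j).comp hΦ).mul (hpd b i)).mul (hpd a j))

theorem pd_unknowns_add (hg : smoothT g) (hf : Differentiable ℝ f)
    (hΦ : IsGraphChart f k Φ s) (hX : ∀ i, Differentiable ℝ fun x => X x i)
    (hB : FixesBoundaryData g f X) (a b : Fin n) (y : Pt n) :
    pd a (unknowns g f X Φ (some b)) y + pd b (unknowns g f X Φ (some a)) y =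
      ∑ l, lowerV g X (Φ y) l * (pullbackChr g Φ l a b y + pullbackChr g Φ l b a y) := by
  have htang (a) : Tang f (Φ y) fun i => pd a (fun z => Φ z i) y := by
    rw [Tang, fderiv_apply_eq_sum_pd, ← hΦ.sum_pd_mul_pd (hf _) a]
    exact Finset.sum_congr rfl fun i _ => mul_comm _ _
  have hlower (i) : DifferentiableAt ℝ (fun x => lowerV g X x i) (Φ y) :=
    DifferentiableAt.fun_sum fun j _ => ((hg i j).differentiable (by simp) _).fun_mul (hX j _)
  refine (pd_pullbackCov_add (g := g) hlower
    (fun i => (hΦ.contDiff_apply i).of_le (by norm_cast)) a b).trans ?_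
  exact add_eq_right.2 (hB.lieg_tangential _ (hΦ.apply_eq_zero y) _ _ (htang b) (htang a))

theorem isLowerOrder_pd_pd_unknowns_some (hs : symT g) (hp : posdef g) (hg : smoothT g)
    (hf : ContDiff ℝ (⊤ : ℕ∞) f) (hΦ : IsGraphChart f k Φ s) (hsb : Bornology.IsBounded s)
    (hX : ∀ i, ContDiff ℝ 2 fun x => X x i) (hB : FixesBoundaryData g f X) (a b c : Fin n) :
    IsLowerOrder (unknowns g f X Φ) s (pd a (pd b (unknowns g f X Φ (some c)))) := by
  have hW (b) := contDiff_unknowns hg hf hΦ hX b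
  have hlower (l) : IsSmoothCombination (unknowns g f X Φ) s fun y => lowerV g X (Φ y) l :=
    IsSmoothCombination.sum fun j => (isSmoothCombination_unknowns_apply hs hp hg hf hΦ j).mul
      ((hg l j).comp hΦ.contDiff)
  have hkilling (a b) : IsSmoothCombination (unknowns g f X Φ) s fun y =>
      pd a (unknowns g f X Φ (some b)) y + pd b (unknowns g f X Φ (some a)) y :=
    (IsSmoothCombination.sum fun l => (hlower l).mul
      ((contDiff_pullbackChr hs hp hg hΦ.contDiff l a b).add
        (contDiff_pullbackChr hs hp hg hΦ.contDiff l b a))).congr fun y _ => by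
      rw [pd_unknowns_add hg (hf.differentiable (by simp)) hΦ
        (fun i => (hX i).differentiable two_ne_zero) hB]
      exact Finset.sum_congr rfl fun l _ => mul_comm _ _
  have hpd (a b c) := (hkilling a b).isLowerOrder_pd hsb hΦ.isOpen
    (fun b => (hW b).differentiable two_ne_zero) c
  exact ((((hpd b c a).add (hpd a c b)).sub (hpd a b c)).mul hsb continuous_const).congr
    fun y _ => pd_pd_eq_pd_add_pd (fun d => hW (some d)) a b c

theorem matGrad_principalCoeff_comp (hΦ : IsGraphChart f k Φ s) (hs : symT g) (hp : posdef g)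
    (hf : DifferentiableAt ℝ f (Φ y)) (hy : y ∈ s) {V : Pt n → ℝ}
    (hV : DifferentiableAt ℝ V (Φ y)) (a : Fin n) :
    matGrad (principalCoeff g f k Φ) (fun z => V (Φ z)) a y =
      matGrad (tangentialSymbol g f) V a (Φ y) := by
  have hR := gradSq_pos hs hp (hΦ.fderiv_ne_zero y)
  rw [matGrad, matGrad, ← hΦ.sum_mul_pd_comp hf hy hV (sum_tangentialSymbol_mul_pd_self hR a)]
  refine Finset.sum_congr rfl fun b _ => ?_
  rcases eq_or_ne b k with rfl | hb
  · rw [hΦ.pd_comp_self hf hy hV, mul_zero, mul_zero]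
  · rw [principalCoeff, if_neg fun h => hb h.2, add_zero]

theorem sum_matGrad_tangentialSymbol_mul_pd (hs : symT g) {x : Pt n} (h : 0 < gradSq g f x)
    (V : Pt n → ℝ) : ∑ a, matGrad (tangentialSymbol g f) V a x * pd a f x = 0 := by
  simp only [matGrad, Finset.sum_mul]
  rw [Finset.sum_comm]
  refine Finset.sum_eq_zero fun b _ => ?_
  have hb := congrArg (· * pd b V x) (sum_tangentialSymbol_mul_pd_self h b)
  simp only [Finset.sum_mul, zero_mul] at hb
  rw [← hb]
  exact Finset.sum_congr rfl fun a _ => by rw [tangentialSymbol_symm hs]; ring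

/-- `H' = 0` says that the tangential gradient of `X f` has divergence `X H`; being tangential, this
field has the same divergence in the chart, up to terms without derivatives. -/
theorem divGrad_unknowns_none (hs : symT g) (hp : posdef g) (hg : smoothT g)
    (hf : ContDiff ℝ (⊤ : ℕ∞) f) (hΦ : IsGraphChart f k Φ s)
    (hX : ∀ i, ContDiff ℝ 3 fun x => X x i) (hB : FixesBoundaryData g f X) (hy : y ∈ s) :
    divGrad (principalCoeff g f k Φ) (unknowns g f X Φ none) y =
      dirDeriv X (divergence g (nuV g f)) (Φ y)
        + ∑ a, (pd k (pd a f) (Φ y) / pd k f (Φ y) - logDensityDeriv g a (Φ y))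
          * matGrad (principalCoeff g f k Φ) (unknowns g f X Φ none) a y := by
  have hXf : ContDiff ℝ (1 + 1) (dirDeriv X f) :=
    contDiff_dirDeriv (l := 3) (fun i => (hX i).of_le (by norm_num)) (hf.of_le (by norm_cast))
      (by norm_num)
  have hreg := hΦ.fderiv_ne_zero
  have hJ (a) : DifferentiableAt ℝ (matGrad (tangentialSymbol g f) (dirDeriv X f) a) (Φ y) :=
    ContDiffAt.differentiableAt
      (contDiffAt_matGrad_tangentialSymbol (k := 1) hs hp hg hf (hreg y) hXf.contDiffAt a)
      one_ne_zero
  have hJΦ (a) : ∀ z ∈ s, matGrad (principalCoeff g f k Φ) (unknowns g f X Φ none) a z =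
      matGrad (tangentialSymbol g f) (dirDeriv X f) a (Φ z) := fun z hz =>
    matGrad_principalCoeff_comp hΦ hs hp (hf.differentiable (by simp) _) hz
      (hXf.differentiable (by norm_num) _) a
  have htang : ∀ᶠ x in nhds (Φ y),
      ∑ a, matGrad (tangentialSymbol g f) (dirDeriv X f) a x * pd a f x = 0 := by
    filter_upwards [(contDiff_gradSq hs hp hg hf).continuous.continuousAt.eventually_const_lt
      (gradSq_pos hs hp (hreg y))] with x hx
    exact sum_matGrad_tangentialSymbol_mul_pd hs hx _
  have hdiv : divergence g (fun x a => matGrad (tangentialSymbol g f) (dirDeriv X f) a x) (Φ y) =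
      dirDeriv X (divergence g (nuV g f)) (Φ y) :=
    (sub_eq_zero.1 ((hmeanLin_lieg hs hp hg hX hf (hreg y)).symm.trans
      (hB.hmeanLin_lieg _ (hΦ.apply_eq_zero y)))).symm
  have hchart := hΦ.sum_pd_comp
    (J := fun x a => matGrad (tangentialSymbol g f) (dirDeriv X f) a x)
    (hf.of_le (by norm_cast)) hy hJ htang
  rw [divergence, Finset.sum_add_distrib] at hdiv
  rw [divGrad, Finset.sum_congr rfl fun a _ =>
    pd_congr (eventually_of_mem (hΦ.isOpen.mem_nhds hy) (hJΦ a)), hchart, ← hdiv]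
  simp only [hJΦ _ y hy, Finset.sum_div]
  rw [← Finset.sum_add_distrib, ← Finset.sum_add_distrib, ← Finset.sum_add_distrib]
  exact Finset.sum_congr rfl fun a _ => by ring

theorem contDiffAt_divergence_nuV (hs : symT g) (hp : posdef g) (hg : smoothT g)
    (hf : ContDiff ℝ (⊤ : ℕ∞) f) {x : Pt n} (hreg : fderiv ℝ f x ≠ 0) :
    ContDiffAt ℝ (⊤ : ℕ∞) (divergence g (nuV g f)) x :=
  ContDiffAt.sum fun i _ => (contDiffAt_infty_pd (contDiffAt_nuV hs hp hg hf hreg i)).add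
    ((contDiffAt_nuV hs hp hg hf hreg i).mul (contDiff_logDensityDeriv hs hp hg i).contDiffAt)

theorem isLowerOrder_divGrad_unknowns_none (hs : symT g) (hp : posdef g) (hg : smoothT g)
    (hf : ContDiff ℝ (⊤ : ℕ∞) f) (hΦ : IsGraphChart f k Φ s) (hsb : Bornology.IsBounded s)
    (hX : ∀ i, ContDiff ℝ 3 fun x => X x i) (hB : FixesBoundaryData g f X) :
    IsLowerOrder (unknowns g f X Φ) s
      (divGrad (principalCoeff g f k Φ) (unknowns g f X Φ none)) := by
  have hmean : IsLowerOrder (unknowns g f X Φ) s fun y =>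
      dirDeriv X (divergence g (nuV g f)) (Φ y) :=
    (IsSmoothCombination.isLowerOrder hsb (IsSmoothCombination.sum fun i =>
      (isSmoothCombination_unknowns_apply hs hp hg hf hΦ i).mul (hΦ.contDiff_comp fun y =>
        contDiffAt_infty_pd (contDiffAt_divergence_nuV hs hp hg hf (hΦ.fderiv_ne_zero y))))).congr
      fun y _ => dirDeriv_eq_sum_pd.trans (Finset.sum_congr rfl fun i _ => mul_comm _ _)
  have hcoeff (a) : Continuous fun y =>
      pd k (pd a f) (Φ y) / pd k f (Φ y) - logDensityDeriv g a (Φ y) :=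
    (((contDiff_infty_pd (contDiff_infty_pd hf)).continuous.comp hΦ.contDiff.continuous).div
      ((contDiff_infty_pd hf).continuous.comp hΦ.contDiff.continuous) hΦ.pd_ne_zero).sub
      ((contDiff_logDensityDeriv hs hp hg a).continuous.comp hΦ.contDiff.continuous)
  have hgrad (a) : IsLowerOrder (unknowns g f X Φ) s
      (matGrad (principalCoeff g f k Φ) (unknowns g f X Φ none) a) :=
    IsLowerOrder.sum fun b _ => (IsLowerOrder.pd none b).mul hsb
      (contDiff_principalCoeff hs hp hg hf hΦ a b).continuous
  exact (hmean.add (IsLowerOrder.sum fun a _ => (hgrad a).mul hsb (hcoeff a))).congr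
    fun y hy => divGrad_unknowns_none hs hp hg hf hΦ hX hB hy

theorem isLowerOrder_divGrad_unknowns (hs : symT g) (hp : posdef g) (hg : smoothT g)
    (hf : ContDiff ℝ (⊤ : ℕ∞) f) (hΦ : IsGraphChart f k Φ s) (hsb : Bornology.IsBounded s)
    (hX : ∀ i, ContDiff ℝ 3 fun x => X x i) (hB : FixesBoundaryData g f X) (b : Option (Fin n)) :
    IsLowerOrder (unknowns g f X Φ) s
      (divGrad (principalCoeff g f k Φ) (unknowns g f X Φ b)) := by
  have hγ (a b) := contDiff_principalCoeff hs hp hg hf hΦ a b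
  have hX2 (i) : ContDiff ℝ 2 fun x => X x i := (hX i).of_le (by norm_num)
  cases b with
  | none => exact isLowerOrder_divGrad_unknowns_none hs hp hg hf hΦ hsb hX hB
  | some d =>
    exact IsLowerOrder.congr (IsLowerOrder.sum fun a _ => IsLowerOrder.sum fun c _ =>
      ((IsLowerOrder.pd (some d) c).mul hsb (contDiff_infty_pd (i := a) (hγ a c)).continuous).add
        ((isLowerOrder_pd_pd_unknowns_some hs hp hg hf hΦ hsb hX2 hB a c d).mul hsb
          (hγ a c).continuous)) fun y _ => Finset.sum_congr rfl fun a _ =>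
      pd_matGrad (fun a b => (hγ a b).of_le (by norm_cast))
        (contDiff_unknowns hg hf hΦ hX2 (some d)) a a y

end System

/-! ### Unique continuation along the hypersurface -/

section Hypersurface

variable {n : ℕ} {g : Pt n → Fin n → Fin n → ℝ} {f : Pt n → ℝ} {X : Pt n → Fin n → ℝ}
  {k : Fin n} {Φ : Pt n → Pt n} {s : Set (Pt n)}

theorem FixesBoundaryData.eventually_chart_eq_zero (hB : FixesBoundaryData g f X) (hs : symT g)
    (hp : posdef g) (hg : smoothT g) (hf : ContDiff ℝ (⊤ : ℕ∞) f) (hΦ : IsGraphChart f k Φ s)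
    (hsb : Bornology.IsBounded s) (hX : ∀ i, ContDiff ℝ 3 fun x => X x i) {z x0 : Pt n}
    (hz : ∀ᶠ y in nhds z, ∀ i, X (Φ y) i = 0)
    (hzs : {x | ∑ i, (x i - z i) ^ 2 ≤ ∑ i, (x0 i - z i) ^ 2} ⊆ s) :
    ∀ᶠ y in nhds x0, ∀ i, X (Φ y) i = 0 := by
  obtain ⟨K, hK, hbound⟩ := IsLowerOrder.exists_uniform_bound
    (isLowerOrder_divGrad_unknowns hs hp hg hf hΦ hsb hX hB)
  have hvan := eventually_eq_zero_of_eventually_eq_zero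
    (fun a b y => principalCoeff_symm hs a b y)
    (fun a b => (contDiff_principalCoeff hs hp hg hf hΦ a b).of_le (by norm_cast)) hΦ.isOpen
    (fun y _ _ hξ => principalCoeff_pos hs hp hΦ y hξ)
    (contDiff_unknowns hg hf hΦ fun i => (hX i).of_le (by norm_num)) hK hbound
    (hz.mono fun y hy => unknowns_eq_zero hy) hzs
  filter_upwards [hvan, hΦ.isOpen.mem_nhds (hzs (Set.mem_ofPred.2 le_rfl))] with y hy hys
  exact eq_zero_of_unknowns_eq_zero hs hp hΦ (hf.differentiable (by simp) _) hys hy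

theorem eventually_setOf_sum_sub_sq_le_subset (hso : IsOpen s) (hs0 : (0 : Pt n) ∈ s) :
    ∀ᶠ z in nhds (0 : Pt n), {x | ∑ i, (x i - z i) ^ 2 ≤ ∑ i, ((0 : Pt n) i - z i) ^ 2} ⊆ s := by
  obtain ⟨δ, hδ, hball⟩ := Metric.isOpen_iff.1 hso 0 hs0
  have hcont : Continuous fun z : Pt n => ∑ i, ((0 : Pt n) i - z i) ^ 2 := by fun_prop
  have hsmall : ∀ᶠ z in nhds (0 : Pt n), ∑ i, ((0 : Pt n) i - z i) ^ 2 < (δ / 2) ^ 2 :=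
    hcont.continuousAt.eventually_lt_const <| by
      simpa only [sub_self, zero_pow two_ne_zero, Finset.sum_const_zero] using
        pow_pos (half_pos hδ) 2
  filter_upwards [hsmall] with z hz x hx
  have hnorm {w : Pt n} (hw : ∑ i, (w i - z i) ^ 2 < (δ / 2) ^ 2) : dist w z < δ / 2 := by
    rw [dist_eq_norm]
    exact lt_of_pow_lt_pow_left₀ 2 (by positivity) ((sq_norm_le_sum_sq (w - z)).trans_lt hw)
  refine hball ((dist_triangle_right x 0 z).trans_lt ?_)
  linarith [hnorm (hx.trans_lt hz), hnorm hz]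

theorem FixesBoundaryData.eventually_eq_zero_of_frequently (hB : FixesBoundaryData g f X)
    (hs : symT g) (hp : posdef g) (hg : smoothT g) (hf : ContDiff ℝ (⊤ : ℕ∞) f)
    (hX : ∀ i, ContDiff ℝ 3 fun x => X x i) {p : f ⁻¹' {0}} (hreg : fderiv ℝ f p ≠ 0)
    (hfr : ∃ᶠ q in nhds p, ∀ᶠ r : f ⁻¹' {0} in nhds q, ∀ i, X r i = 0) :
    ∀ᶠ r : f ⁻¹' {0} in nhds p, ∀ i, X r i = 0 := by
  obtain ⟨k, Φ, δ, hδ, hΦ, -, hinv⟩ := exists_isGraphChart hf p.2 hreg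
  have hinv_sub : ∀ᶠ q : f ⁻¹' {0} in nhds p, Φ (q - p) = q :=
    (continuous_subtype_val.continuousAt.eventually hinv).mono fun q hq => hq q.2
  have hsub : Tendsto (fun q : f ⁻¹' {0} => (q - p : Pt n)) (nhds p) (nhds 0) :=
    tendsto_sub_nhds_zero_iff.2 continuous_subtype_val.continuousAt
  obtain ⟨q, hvan, hΦq, hdisc⟩ := (hfr.and_eventually (hinv_sub.and (hsub.eventually
    (eventually_setOf_sum_sub_sq_le_subset hΦ.isOpen (Metric.mem_ball_self hδ))))).exists
  have hΦlim : Tendsto (fun y => (⟨Φ y, hΦ.apply_eq_zero y⟩ : f ⁻¹' {0})) (nhds (q - p))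
      (nhds q) := by
    refine tendsto_subtype_rng.2 ?_
    simpa only [hΦq] using hΦ.contDiff.continuous.tendsto (q - p : Pt n)
  have hchart : ∀ᶠ y in nhds 0, ∀ i, X (Φ y) i = 0 :=
    hB.eventually_chart_eq_zero hs hp hg hf hΦ Metric.isBounded_ball hX
      (hΦlim.eventually hvan) hdisc
  filter_upwards [hsub.eventually hchart, hinv_sub] with r hr hΦr
  rwa [hΦr] at hr

end Hypersurface

theorem forall_of_eventually_of_frequently {E : Type*} [TopologicalSpace E] [PreconnectedSpace E]
    {P : E → Prop} {p : E} (hp : ∀ᶠ x in nhds p, P x)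
    (h : ∀ q, (∃ᶠ x in nhds q, ∀ᶠ y in nhds x, P y) → ∀ᶠ x in nhds q, P x) (x : E) : P x := by
  have hclopen : IsClopen {q | ∀ᶠ y in nhds q, P y} :=
    ⟨isClosed_iff_frequently.2 h, isOpen_setOfPred_eventually_nhds⟩
  exact (hclopen.eq_univ ⟨p, hp⟩ ▸ Set.mem_univ x : x ∈ {q | ∀ᶠ y in nhds q, P y}).self_of_nhds

/-- if a `C³` vector field `X` near the connected hypersurface
`Σ = f⁻¹(0)` satisfies `(L_X ḡ)^⊤ = 0` and `H'(L_X ḡ) = 0` on `Σ` and vanishes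
on a nonempty (relatively) open subset of `Σ`, then `X ≡ 0` on all of `Σ`. -/
theorem statement9 {n : ℕ} (g : Pt n → Fin n → Fin n → ℝ) (f : Pt n → ℝ)
    (hgsym : symT g) (hgpos : posdef g) (hgsm : smoothT g)
    (hfsm : ContDiff ℝ (⊤ : ℕ∞) f)
    (hreg : ∀ x ∈ f ⁻¹' {(0:ℝ)}, fderiv ℝ f x ≠ 0)
    (hconn : IsConnected (f ⁻¹' {(0:ℝ)}))
    (X : Pt n → Fin n → ℝ) (hXreg : ∀ i, ContDiff ℝ 3 (fun x => X x i))
    -- `(L_X ḡ)^⊤ = 0` on `Σ`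
    (hLieT : ∀ x ∈ f ⁻¹' {(0:ℝ)}, ∀ v w : Fin n → ℝ, Tang f x v → Tang f x w →
      ∑ i, ∑ j, lieg g X x i j * v i * w j = 0)
    -- `H'(L_X ḡ) = 0` on `Σ`
    (hHp : ∀ x ∈ f ⁻¹' {(0:ℝ)},
      hmeanLin g (fun y a b => lieg g X y a b) f x = 0)
    -- `X` vanishes on a nonempty open subset of `Σ`
    (hvan : ∃ O : Set (Pt n), IsOpen O ∧ (O ∩ f ⁻¹' {(0:ℝ)}).Nonempty ∧
      ∀ x ∈ O ∩ f ⁻¹' {(0:ℝ)}, ∀ i, X x i = 0) :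
    ∀ x ∈ f ⁻¹' {(0:ℝ)}, ∀ i, X x i = 0 := by
  have hB : FixesBoundaryData g f X := ⟨hLieT, hHp⟩
  obtain ⟨O, hO, ⟨p, hpO, hp⟩, hOX⟩ := hvan
  have := isPreconnected_iff_preconnectedSpace.1 hconn.isPreconnected
  have hvan_near : ∀ᶠ q : f ⁻¹' {(0:ℝ)} in nhds ⟨p, hp⟩, ∀ i, X q i = 0 :=
    (continuous_subtype_val.continuousAt.eventually (hO.mem_nhds hpO)).mono
      fun q hq => hOX q ⟨hq, q.2⟩
  have hclosed (q : f ⁻¹' {(0:ℝ)})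
      (hq : ∃ᶠ x in nhds q, ∀ᶠ y : f ⁻¹' {(0:ℝ)} in nhds x, ∀ i, X y i = 0) :
      ∀ᶠ x : f ⁻¹' {(0:ℝ)} in nhds q, ∀ i, X x i = 0 :=
    hB.eventually_eq_zero_of_frequently hgsym hgpos hgsm hfsm hXreg (hreg q q.2) hq
  exact fun x hx => forall_of_eventually_of_frequently hvan_near hclosed ⟨x, hx⟩
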